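/- arXiv:0910.3603 — 3 statements merged into one kernel-verified Lean document; each statement's English description precedes it below -/
import Mathlib

section
/- The filter transition kernel Π admits a unique Π-invariant probability measure on P(E) if and only if the filter is stable, i.e. for all μ, ν ∈ P(E) with μ ≪ ν one has ‖π_n^μ(y) − π_n^ν(y)‖ → 0 as n → ∞ for Q_μ-almost every y ∈ F^ℕ. (Since μ ≪ ν implies Q_μ ≪ Q_ν, the filter π_n^ν is well-defined Q_μ-almost surely.) -/
open MeasureTheory Filter Topology ENNReal

/-- `P(E)`: probability vectors on a countable set `E`, with the topology of
pointwise (equivalently, weak) convergence inherited from `E → ℝ`. -/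
abbrev ProbVec (E : Type*) := {p : E → ℝ // (∀ i, 0 ≤ p i) ∧ HasSum p 1}

/-- Row-vector/matrix product `(p M(y))_j = ∑_i p_i M_{ij}(y)`. -/
noncomputable def rowMul {E F : Type*} (M : F → E → E → ℝ) (p : E → ℝ) (y : F) : E → ℝ :=
  fun j => ∑' i, p i * M y i j

/-- Iterated product `p M(y₁)⋯M(yₙ)` along a list of observations. -/
noncomputable def rowIter {E F : Type*} (M : F → E → E → ℝ) (p : E → ℝ) (ys : List F) : E → ℝ :=
  ys.foldl (rowMul M) p

/-- `p 1 = ∑_j p_j`. -/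
noncomputable def rowTot {E : Type*} (p : E → ℝ) : ℝ := ∑' j, p j

/-- One step of the filter: `μ ↦ μM(y)/(μM(y)1)` (junk value `μ` when undefined). -/
noncomputable def filterStep {E F : Type*} (M : F → E → E → ℝ) (μ : ProbVec E) (y : F) :
    ProbVec E := by
  classical
  exact if h : ∃ ν : ProbVec E, ∀ j,
      (ν : E → ℝ) j * rowTot (rowMul M (μ : E → ℝ) y) = rowMul M (μ : E → ℝ) y j
    then h.choose else μ

/-- The filter `μM(y₁)⋯M(yₙ)/(μM(y₁)⋯M(yₙ)1)` (junk value `μ` when undefined). -/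
noncomputable def filterList {E F : Type*} (M : F → E → E → ℝ) (μ : ProbVec E) (ys : List F) :
    ProbVec E := by
  classical
  exact if h : ∃ ν : ProbVec E, ∀ j,
      (ν : E → ℝ) j * rowTot (rowIter M (μ : E → ℝ) ys) = rowIter M (μ : E → ℝ) ys j
    then h.choose else μ

/-- The filter `π_n^μ(y)` as a function of the observation path `y : ℕ → F`
(the coordinate `y k` represents the observation `y_{k+1}`). -/
noncomputable def filterSeq {E F : Type*} (M : F → E → E → ℝ) (μ : ProbVec E) (y : ℕ → F)
    (n : ℕ) : ProbVec E :=
  filterList M μ (List.ofFn fun k : Fin n => y k)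

/-- The filter transition kernel `Π`, acting on functions:
`Πf(μ) = ∫ f(μM(y)/(μM(y)1)) ⬝ (μM(y)1) φ(dy)`. -/
noncomputable def filterKernel {E F : Type*} [MeasurableSpace F] (M : F → E → E → ℝ)
    (φ : Measure F) (f : ProbVec E → ℝ) (μ : ProbVec E) : ℝ :=
  ∫ y, f (filterStep M μ y) * rowTot (rowMul M (μ : E → ℝ) y) ∂φ

/-- Bounded continuous real functions on `P(E)`. -/
def IsBddCont {E : Type*} (f : ProbVec E → ℝ) : Prop :=
  Continuous f ∧ ∃ C : ℝ, ∀ μ, |f μ| ≤ C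

/-- A probability measure `𝕄` on `P(E)` is `Π`-invariant if `∫ Πf d𝕄 = ∫ f d𝕄`
for every bounded continuous `f`. -/
def IsPiInvariant {E F : Type*} [MeasurableSpace F] (M : F → E → E → ℝ) (φ : Measure F)
    (𝕄 : ProbabilityMeasure (ProbVec E)) : Prop :=
  ∀ f : ProbVec E → ℝ, IsBddCont f →
    ∫ μ, filterKernel M φ f μ ∂(𝕄 : Measure (ProbVec E)) =
      ∫ μ, f μ ∂(𝕄 : Measure (ProbVec E))

/-- The signal transition matrix `P_{ij} = ∫ M_{ij}(y) φ(dy)`. -/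
noncomputable def transMat {E F : Type*} [MeasurableSpace F] (M : F → E → E → ℝ)
    (φ : Measure F) : E → E → ℝ :=
  fun i j => ∫ y, M y i j ∂φ

/-- Powers of a transition matrix on a countable state space. -/
noncomputable def matPow {E : Type*} [DecidableEq E] (P : E → E → ℝ) : ℕ → E → E → ℝ
  | 0 => fun i j => if i = j then 1 else 0
  | n + 1 => fun i j => ∑' k, matPow P n i k * P k j

/-- Total variation (ℓ¹) distance on `P(E)`. -/
noncomputable def tvDist {E : Type*} (p q : ProbVec E) : ℝ :=
  ∑' i, |(p : E → ℝ) i - (q : E → ℝ) i|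

namespace FS
variable {E F : Type*}

noncomputable def e (μ : ProbVec E) : E → ℝ≥0∞ := fun i => ENNReal.ofReal (μ.1 i)

noncomputable def T (w : E → ℝ≥0∞) : ℝ≥0∞ := ∑' j, w j

noncomputable def eMul (M : F → E → E → ℝ) (w : E → ℝ≥0∞) (y : F) : E → ℝ≥0∞ :=
  fun j => ∑' i, w i * ENNReal.ofReal (M y i j)

noncomputable def eIter (M : F → E → E → ℝ) (w : E → ℝ≥0∞) :
    (n : ℕ) → (Fin n → F) → E → ℝ≥0∞
  | 0, _ => w
  | n + 1, v => eMul M (eIter M w n (Fin.init v)) (v (Fin.last n))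

def Good (M : F → E → E → ℝ) (y : F) : Prop :=
  ∃ C : ℝ, ∀ (i : E) (s : Finset E), ∑ j ∈ s, M y i j ≤ C

lemma T_e (μ : ProbVec E) : T (e μ) = 1 := by
  unfold T e
  rw [← ENNReal.ofReal_tsum_of_nonneg μ.2.1 μ.2.2.summable, μ.2.2.tsum_eq]; simp

lemma le_T (w : E → ℝ≥0∞) (j : E) : w j ≤ T w := ENNReal.le_tsum j

lemma e_toReal (μ : ProbVec E) (i : E) : (e μ i).toReal = μ.1 i :=
  ENNReal.toReal_ofReal (μ.2.1 i)

lemma e_ne_top (μ : ProbVec E) (i : E) : e μ i ≠ ⊤ := ENNReal.ofReal_ne_top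

lemma T_eMul (M : F → E → E → ℝ) (w : E → ℝ≥0∞) (y : F) :
    T (eMul M w y) = ∑' i, w i * ∑' j, ENNReal.ofReal (M y i j) := by
  unfold T eMul
  rw [ENNReal.tsum_comm]
  simp_rw [ENNReal.tsum_mul_left]

lemma T_smul (c : ℝ≥0∞) (w : E → ℝ≥0∞) : T (fun j => c * w j) = c * T w := by
  unfold T; rw [ENNReal.tsum_mul_left]

lemma eMul_smul (M : F → E → E → ℝ) (c : ℝ≥0∞) (w : E → ℝ≥0∞) (y : F) :
    eMul M (fun j => c * w j) y = fun j => c * eMul M w y j := by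
  funext j
  unfold eMul
  rw [← ENNReal.tsum_mul_left]; simp_rw [mul_assoc]

lemma eMul_tsum {ι : Type*} (M : F → E → E → ℝ) (w : ι → E → ℝ≥0∞) (y : F) :
    eMul M (fun j => ∑' k, w k j) y = fun j => ∑' k, eMul M (w k) y j := by
  funext j
  unfold eMul
  rw [ENNReal.tsum_comm]; simp_rw [ENNReal.tsum_mul_right]

lemma eIter_smul (M : F → E → E → ℝ) (c : ℝ≥0∞) (w : E → ℝ≥0∞) (n : ℕ) (v : Fin n → F) :
    eIter M (fun j => c * w j) n v = fun j => c * eIter M w n v j := by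
  induction n with
  | zero => rfl
  | succ n ih => simp only [eIter]; rw [ih, eMul_smul]

lemma eIter_tsum {ι : Type*} (M : F → E → E → ℝ) (w : ι → E → ℝ≥0∞) (n : ℕ) (v : Fin n → F) :
    eIter M (fun j => ∑' k, w k j) n v = fun j => ∑' k, eIter M (w k) n v j := by
  induction n with
  | zero => rfl
  | succ n ih => simp only [eIter]; rw [ih, eMul_tsum]

lemma eIter_snoc (M : F → E → E → ℝ) (w : E → ℝ≥0∞) (n : ℕ) (v : Fin n → F) (x : F) :
    eIter M w (n+1) (Fin.snoc v x) = eMul M (eIter M w n v) x := by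
  simp [eIter]

open Classical in
noncomputable def dir (i : E) : ProbVec E :=
  ⟨Pi.single i 1, fun j => by
    by_cases h : j = i
    · subst h; simp
    · simp [h], by simpa using hasSum_pi_single i (1:ℝ)⟩

lemma e_decomp (μ : ProbVec E) : e μ = fun j => ∑' i, (e μ i * e (dir i) j) := by
  classical
  funext j
  rw [tsum_eq_single j]
  · simp [e, dir]
  · intro i hi
    simp [e, dir, hi.symm]

lemma eIter_decomp (M : F → E → E → ℝ) (μ : ProbVec E) (n : ℕ) (v : Fin n → F) (j : E) :
    eIter M (e μ) n v j = ∑' i, e μ i * eIter M (e (dir i)) n v j := by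
  conv_lhs => rw [e_decomp μ]
  rw [eIter_tsum]
  simp_rw [eIter_smul]

lemma T_eIter_decomp (M : F → E → E → ℝ) (μ : ProbVec E) (n : ℕ) (v : Fin n → F) :
    T (eIter M (e μ) n v) = ∑' i, e μ i * T (eIter M (e (dir i)) n v) := by
  unfold T
  simp_rw [eIter_decomp M μ, ← ENNReal.tsum_mul_left]
  rw [ENNReal.tsum_comm]

lemma good_T {M : F → E → E → ℝ} (hnn : ∀ y i j, 0 ≤ M y i j) {y : F} (hy : Good M y)
    {w : E → ℝ≥0∞} (hw : T w ≠ ⊤) : T (eMul M w y) ≠ ⊤ := by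
  obtain ⟨C, hC⟩ := hy
  rw [T_eMul]
  refine ne_top_of_le_ne_top (ENNReal.mul_ne_top hw (ENNReal.ofReal_ne_top (r := C))) ?_
  unfold T
  rw [← ENNReal.tsum_mul_right]
  refine ENNReal.tsum_le_tsum fun i => ?_
  gcongr
  rw [ENNReal.tsum_eq_iSup_sum]
  refine iSup_le fun s => ?_
  rw [← ENNReal.ofReal_sum_of_nonneg (fun j _ => hnn y i j)]
  exact ENNReal.ofReal_le_ofReal (hC i s)

lemma good_iter {M : F → E → E → ℝ} (hnn : ∀ y i j, 0 ≤ M y i j) {w : E → ℝ≥0∞} (hw : T w ≠ ⊤)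
    {n : ℕ} {v : Fin n → F} (hv : ∀ k, Good M (v k)) : T (eIter M w n v) ≠ ⊤ := by
  induction n with
  | zero => exact hw
  | succ n ih => exact good_T hnn (hv _) (ih (fun k => hv _))

lemma T_toReal {w : E → ℝ≥0∞} (hw : T w ≠ ⊤) :
    rowTot (fun j => (w j).toReal) = (T w).toReal := by
  unfold rowTot T
  rw [ENNReal.tsum_toReal_eq]
  exact fun j => ne_top_of_le_ne_top hw (le_T w j)

lemma rowMul_eq {M : F → E → E → ℝ} (hnn : ∀ y i j, 0 ≤ M y i j) {w : E → ℝ≥0∞} (hw : T w ≠ ⊤)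
    (y : F) : rowMul M (fun j => (w j).toReal) y = fun j => (eMul M w y j).toReal := by
  funext j
  unfold rowMul eMul
  rw [ENNReal.tsum_toReal_eq]
  · simp [hnn]
  · exact fun i => ENNReal.mul_ne_top (ne_top_of_le_ne_top hw (le_T w i)) ENNReal.ofReal_ne_top

lemma rowIter_eq {M : F → E → E → ℝ} (hnn : ∀ y i j, 0 ≤ M y i j) {w : E → ℝ≥0∞} (hw : T w ≠ ⊤)
    {n : ℕ} {v : Fin n → F} (hv : ∀ k, Good M (v k)) :
    rowIter M (fun j => (w j).toReal) (List.ofFn v) = fun j => (eIter M w n v j).toReal := by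
  induction n with
  | zero => simp [rowIter, eIter]
  | succ n ih =>
    have h := @ih (Fin.init v) (fun k => hv _)
    unfold rowIter at h ⊢
    rw [List.ofFn_succ_last, List.foldl_append]
    simp only [List.foldl_cons, List.foldl_nil]
    have h2 : (fun i : Fin n => v i.castSucc) = Fin.init v := rfl
    rw [h2, h, rowMul_eq hnn (good_iter (v := Fin.init v) hnn hw (fun k => hv _))]
    rfl

lemma e_fun (μ : ProbVec E) : (fun j => (e μ j).toReal) = μ.1 := funext (e_toReal μ)

instance [Nonempty E] : Nonempty (ProbVec E) := ⟨dir (Classical.arbitrary E)⟩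

open Classical in
noncomputable def nrm [Nonempty E] (w : E → ℝ≥0∞) : ProbVec E :=
  if h : T w ≠ 0 ∧ T w ≠ ⊤ then
    ⟨fun j => (w j / T w).toReal, fun j => ENNReal.toReal_nonneg, by
      have h1 : ∑' j, w j / T w = 1 := by
        simp_rw [div_eq_mul_inv]
        rw [ENNReal.tsum_mul_right]
        exact ENNReal.mul_inv_cancel h.1 h.2
      have h2 := ENNReal.hasSum_toReal (f := fun j => w j / T w) (by rw [h1]; simp)
      rw [← ENNReal.tsum_toReal_eq, h1] at h2
      · simpa using h2
      · intro j
        exact ENNReal.div_ne_top (ne_top_of_le_ne_top h.2 (le_T w j)) h.1⟩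
  else Classical.arbitrary _

variable [Nonempty E]

lemma nrm_apply {w : E → ℝ≥0∞} (h0 : T w ≠ 0) (h1 : T w ≠ ⊤) (j : E) :
    (nrm w).1 j = (w j / T w).toReal := by
  unfold nrm; rw [dif_pos ⟨h0, h1⟩]

lemma nrm_apply' {w : E → ℝ≥0∞} (h0 : T w ≠ 0) (h1 : T w ≠ ⊤) (j : E) :
    (nrm w).1 j = (w j).toReal / (T w).toReal := by
  rw [nrm_apply h0 h1, ENNReal.toReal_div]

lemma e_nrm {w : E → ℝ≥0∞} (h0 : T w ≠ 0) (h1 : T w ≠ ⊤) :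
    e (nrm w) = fun j => (T w)⁻¹ * w j := by
  funext j
  unfold e
  rw [nrm_apply h0 h1, ENNReal.ofReal_toReal, ENNReal.div_eq_inv_mul]
  exact ENNReal.div_ne_top (ne_top_of_le_ne_top h1 (le_T w j)) h0

lemma nrm_smul {w : E → ℝ≥0∞} {c : ℝ≥0∞} (c0 : c ≠ 0) (c1 : c ≠ ⊤) (h0 : T w ≠ 0) (h1 : T w ≠ ⊤) :
    nrm (fun j => c * w j) = nrm w := by
  apply Subtype.ext
  funext j
  rw [nrm_apply h0 h1, nrm_apply, T_smul, ENNReal.mul_div_mul_left _ _ c0 c1]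
  · rw [T_smul]; exact mul_ne_zero c0 h0
  · rw [T_smul]; exact ENNReal.mul_ne_top c1 h1

lemma nrm_e (μ : ProbVec E) : nrm (e μ) = μ := by
  apply Subtype.ext
  funext j
  rw [nrm_apply (by simp [T_e]) (by simp [T_e]), T_e, div_one, e_toReal]

/-- uniqueness of the chosen normalisation -/
lemma choose_eq {w : E → ℝ≥0∞} (h0 : T w ≠ 0) (h1 : T w ≠ ⊤)
    {ν : ProbVec E} (hν : ∀ j, ν.1 j * (T w).toReal = (w j).toReal) : ν = nrm w := by
  apply Subtype.ext
  funext j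
  have : (T w).toReal ≠ 0 := (ENNReal.toReal_pos h0 h1).ne'
  rw [nrm_apply' h0 h1, eq_div_iff this]
  exact hν j

lemma nrm_spec {w : E → ℝ≥0∞} (h0 : T w ≠ 0) (h1 : T w ≠ ⊤) (j : E) :
    (nrm w).1 j * (T w).toReal = (w j).toReal := by
  have : (T w).toReal ≠ 0 := (ENNReal.toReal_pos h0 h1).ne'
  rw [nrm_apply' h0 h1, div_mul_cancel₀ _ this]

lemma filterStep_eq {M : F → E → E → ℝ} (hnn : ∀ y i j, 0 ≤ M y i j) (μ : ProbVec E) {x : F}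
    (hx : Good M x) (h0 : T (eMul M (e μ) x) ≠ 0) :
    filterStep M μ x = nrm (eMul M (e μ) x) := by
  have h1 : T (eMul M (e μ) x) ≠ ⊤ := good_T hnn hx (by simp [T_e])
  have hr : rowMul M μ.1 x = fun j => (eMul M (e μ) x j).toReal := by
    rw [← rowMul_eq hnn (by simp [T_e]), e_fun]
  have hex : ∃ ν : ProbVec E, ∀ j,
      (ν : E → ℝ) j * rowTot (rowMul M (μ : E → ℝ) x) = rowMul M (μ : E → ℝ) x j :=
    ⟨nrm (eMul M (e μ) x), fun j => by rw [hr, T_toReal h1]; exact nrm_spec h0 h1 j⟩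
  unfold filterStep
  rw [dif_pos hex]
  apply choose_eq h0 h1
  intro j
  have := hex.choose_spec j
  generalize hex.choose = ν at this ⊢
  rw [hr, T_toReal h1] at this
  exact this

lemma filterList_eq {M : F → E → E → ℝ} (hnn : ∀ y i j, 0 ≤ M y i j) (μ : ProbVec E) {n : ℕ}
    {v : Fin n → F} (hv : ∀ k, Good M (v k)) (h0 : T (eIter M (e μ) n v) ≠ 0) :
    filterList M μ (List.ofFn v) = nrm (eIter M (e μ) n v) := by
  have h1 : T (eIter M (e μ) n v) ≠ ⊤ := good_iter hnn (by simp [T_e]) hv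
  have hr : rowIter M μ.1 (List.ofFn v) = fun j => (eIter M (e μ) n v j).toReal := by
    rw [← rowIter_eq hnn (by simp [T_e]) hv, e_fun]
  have hex : ∃ ν : ProbVec E, ∀ j,
      (ν : E → ℝ) j * rowTot (rowIter M (μ : E → ℝ) (List.ofFn v)) =
        rowIter M (μ : E → ℝ) (List.ofFn v) j :=
    ⟨nrm (eIter M (e μ) n v), fun j => by rw [hr, T_toReal h1]; exact nrm_spec h0 h1 j⟩
  unfold filterList
  rw [dif_pos hex]
  apply choose_eq h0 h1
  intro j
  have := hex.choose_spec j
  generalize hex.choose = ν at this ⊢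
  rw [hr, T_toReal h1] at this
  exact this

end FS

set_option linter.unusedSectionVars false

namespace FS
variable {E F : Type*}

def res (n : ℕ) (y : ℕ → F) : Fin n → F := fun k => y k

structure HMM [MeasurableSpace F] (M : F → E → E → ℝ) (φ : Measure F)
    (Q : ProbVec E → Measure (ℕ → F)) : Prop where
  meas : ∀ i j, Measurable fun y => M y i j
  nn : ∀ y i j, 0 ≤ M y i j
  good : ∀ᵐ y ∂φ, Good M y
  one : ∀ i, ∫⁻ y, ∑' j, ENNReal.ofReal (M y i j) ∂φ = 1
  prob : ∀ μ, IsProbabilityMeasure (Q μ)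
  law : ∀ μ n, (Q μ).map (res n) =
    (Measure.pi fun _ : Fin n => φ).withDensity (fun v => T (eIter M (e μ) n v))

variable [Countable E] [MeasurableSpace F] {M : F → E → E → ℝ}
  {φ : Measure F} {Q : ProbVec E → Measure (ℕ → F)}

lemma measurable_res (n : ℕ) : Measurable (res n : (ℕ → F) → Fin n → F) := by
  unfold res; fun_prop

lemma measurable_T : Measurable (T : (E → ℝ≥0∞) → ℝ≥0∞) := by
  unfold T; fun_prop

lemma measurable_e : Measurable (e : ProbVec E → E → ℝ≥0∞) := by
  unfold e
  refine measurable_pi_lambda _ fun j => Measurable.ennreal_ofReal ?_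
  exact (measurable_pi_apply j).comp measurable_subtype_coe

lemma measurable_eMul (hm : ∀ i j, Measurable fun y => M y i j) {α : Type*} [MeasurableSpace α]
    {f : α → E → ℝ≥0∞} {g : α → F} (hf : Measurable f) (hg : Measurable g) :
    Measurable fun a => eMul M (f a) (g a) := by
  unfold eMul
  refine measurable_pi_lambda _ fun j => Measurable.tsum fun i => ?_
  exact ((measurable_pi_apply i).comp hf).mul ((hm i j).comp hg).ennreal_ofReal

lemma measurable_eIter (hm : ∀ i j, Measurable fun y => M y i j) (w : E → ℝ≥0∞) (n : ℕ) :
    Measurable fun v : Fin n → F => eIter M w n v := by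
  induction n with
  | zero => exact measurable_const
  | succ n ih =>
    simp only [eIter]
    exact measurable_eMul hm (ih.comp (by unfold Fin.init; fun_prop)) (by fun_prop)

lemma measurable_Titer (hm : ∀ i j, Measurable fun y => M y i j) (w : E → ℝ≥0∞) (n : ℕ) :
    Measurable fun v : Fin n → F => T (eIter M w n v) :=
  measurable_T.comp (measurable_eIter hm w n)

lemma measurable_nrm [Nonempty E] : Measurable (nrm : (E → ℝ≥0∞) → ProbVec E) := by
  classical
  refine Measurable.subtype_mk (f := fun w : E → ℝ≥0∞ => (nrm w).1) (h := fun w => (nrm w).2)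
    (measurable_pi_lambda _ fun j => ?_)
  have : (fun w : E → ℝ≥0∞ => (nrm w).1 j) = fun w => if T w ≠ 0 ∧ T w ≠ ⊤ then
      (w j / T w).toReal else (Classical.arbitrary (ProbVec E)).1 j := by
    funext w
    split_ifs with h
    · exact nrm_apply h.1 h.2 j
    · unfold nrm; rw [dif_neg h]
  rw [this]
  refine Measurable.ite ?_ ?_ measurable_const
  · exact (measurable_T (measurableSet_singleton (0 : ℝ≥0∞)).compl).inter
      (measurable_T (measurableSet_singleton (⊤ : ℝ≥0∞)).compl)
  · exact ((measurable_pi_apply j).div measurable_T).ennreal_toReal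

lemma lint_snoc [SigmaFinite φ] (n : ℕ) {g : (Fin (n+1) → F) → ℝ≥0∞} (hg : Measurable g) :
    ∫⁻ v, g v ∂(Measure.pi fun _ : Fin (n+1) => φ) =
      ∫⁻ v, ∫⁻ x, g (Fin.snoc v x) ∂φ ∂(Measure.pi fun _ : Fin n => φ) := by
  have h := (measurePreserving_piFinSuccAbove (fun _ : Fin (n+1) => φ) (Fin.last n)).symm
  rw [← h.lintegral_comp hg, lintegral_prod_symm _ (by exact (hg.comp h.measurable).aemeasurable)]
  refine lintegral_congr fun v => lintegral_congr fun x => ?_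
  congr 1
  simp [MeasurableEquiv.piFinSuccAbove, Fin.insertNthEquiv]

lemma measurable_snoc (n : ℕ) : Measurable fun p : (Fin n → F) × F =>
    (Fin.snoc p.1 p.2 : Fin (n+1) → F) := by
  refine measurable_pi_lambda _ fun k => ?_
  refine Fin.lastCases ?_ (fun k => ?_) k
  · simpa using measurable_snd
  · simp only [Fin.snoc_castSucc]
    exact (measurable_pi_apply k).comp measurable_fst

lemma lint_T (hm : ∀ i j, Measurable fun y => M y i j)
    (hone : ∀ i, ∫⁻ y, ∑' j, ENNReal.ofReal (M y i j) ∂φ = 1) (w : E → ℝ≥0∞) :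
    ∫⁻ x, T (eMul M w x) ∂φ = T w := by
  simp_rw [T_eMul]
  have hmm : ∀ i, Measurable fun y => ∑' j, ENNReal.ofReal (M y i j) := fun i =>
    Measurable.tsum fun j => (hm i j).ennreal_ofReal
  rw [lintegral_tsum fun i => ((hmm i).const_mul _).aemeasurable]
  simp_rw [lintegral_const_mul _ (hmm _), hone, mul_one]
  rfl

lemma ae_good [SigmaFinite φ] (hg : ∀ᵐ y ∂φ, Good M y) (n : ℕ) :
    ∀ᵐ v ∂(Measure.pi fun _ : Fin n => φ), ∀ k, Good M (v k) := by
  rw [eventually_all]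
  intro k
  exact (Measure.tendsto_eval_ae_ae (μ := fun _ : Fin n => φ) (i := k)).eventually hg

theorem mkHMM [SigmaFinite φ]
    (hMmeas : ∀ i j, Measurable fun y => M y i j)
    (hMnn : ∀ y i j, 0 ≤ M y i j)
    (hMbd : ∀ᵐ y ∂φ, ∃ C : ℝ, ∀ (i : E) (s : Finset E), ∑ j ∈ s, M y i j ≤ C)
    (hQprob : ∀ μ, IsProbabilityMeasure (Q μ))
    (hQ : ∀ (μ : ProbVec E) (n : ℕ) (A : Set (Fin n → F)), MeasurableSet A →
      Q μ {y : ℕ → F | (fun k : Fin n => y k) ∈ A} =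
        ∫⁻ v in A, ENNReal.ofReal (rowTot (rowIter M (μ : E → ℝ) (List.ofFn v)))
          ∂(Measure.pi fun _ => φ)) : HMM M φ Q := by
  have hlaw : ∀ μ n, (Q μ).map (res n) =
    (Measure.pi fun _ : Fin n => φ).withDensity (fun v => T (eIter M (e μ) n v)) := by
    intro μ n
    ext A hA
    rw [Measure.map_apply (measurable_res n) hA, withDensity_apply _ hA]
    refine (hQ μ n A hA).trans ?_
    refine lintegral_congr_ae (ae_restrict_of_ae ?_)
    filter_upwards [ae_good hMbd n] with v hv
    have h1 := good_iter hMnn (w := e μ) (by simp [T_e]) hv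
    rw [← e_fun μ, rowIter_eq hMnn (by simp [T_e]) hv, T_toReal h1, ENNReal.ofReal_toReal h1]
  refine ⟨hMmeas, hMnn, hMbd, fun i => ?_, hQprob, hlaw⟩
  have h := congrArg (fun m => m Set.univ) (hlaw (dir i) 1)
  rw [Measure.map_apply (measurable_res 1) MeasurableSet.univ,
    withDensity_apply _ MeasurableSet.univ] at h
  have := hQprob (dir i)
  simp only [Set.preimage_univ, measure_univ, Measure.restrict_univ] at h
  rw [lint_snoc 0 (measurable_Titer hMmeas _ 1), Measure.pi_of_empty,
    lintegral_dirac] at h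
  rw [h]
  refine lintegral_congr fun x => ?_
  rw [eIter_snoc, T_eMul, eIter]
  symm
  rw [tsum_eq_single i]
  · simp [e, dir]
  · intro j hj
    simp [e, dir, hj]

lemma HMM.int_T_iter [SigmaFinite φ] (H : HMM M φ Q) (w : E → ℝ≥0∞) (n : ℕ) :
    ∫⁻ v, T (eIter M w n v) ∂(Measure.pi fun _ : Fin n => φ) = T w := by
  induction n with
  | zero => rw [Measure.pi_of_empty, lintegral_dirac]; rfl
  | succ n ih =>
    rw [lint_snoc n (measurable_Titer H.meas _ _)]
    simp_rw [eIter_snoc, lint_T H.meas H.one]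
    exact ih

lemma HMM.lint (H : HMM M φ Q) (μ : ProbVec E) (n : ℕ) {g : (Fin n → F) → ℝ≥0∞}
    (hg : Measurable g) :
    ∫⁻ y, g (res n y) ∂(Q μ) =
      ∫⁻ v, T (eIter M (e μ) n v) * g v ∂(Measure.pi fun _ : Fin n => φ) := by
  rw [← lintegral_map hg (measurable_res n), H.law,
    lintegral_withDensity_eq_lintegral_mul _ (measurable_Titer H.meas _ _) hg]
  rfl

lemma HMM.ae_of (H : HMM M φ Q) (μ : ProbVec E) (n : ℕ) {p : (Fin n → F) → Prop}
    (hp : ∀ᵐ v ∂(Measure.pi fun _ : Fin n => φ), p v) : ∀ᵐ y ∂(Q μ), p (res n y) := by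
  have h1 : ∀ᵐ v ∂((Q μ).map (res n)), p v := by
    rw [H.law]; exact (withDensity_absolutelyContinuous _ _).ae_le hp
  exact ae_of_ae_map (measurable_res n).aemeasurable h1

lemma HMM.ae_good [SigmaFinite φ] (H : HMM M φ Q) (μ : ProbVec E) :
    ∀ᵐ y ∂(Q μ), ∀ n, ∀ k, Good M (res n y k) := by
  rw [ae_all_iff]
  exact fun n => H.ae_of μ n (FS.ae_good H.good n)

lemma HMM.ae_pos (H : HMM M φ Q) (μ : ProbVec E) :
    ∀ᵐ y ∂(Q μ), ∀ n, T (eIter M (e μ) n (res n y)) ≠ 0 := by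
  rw [ae_all_iff]
  intro n
  have hm : Measurable fun v : Fin n → F => T (eIter M (e μ) n v) :=
    measurable_T.comp (measurable_eIter H.meas _ _)
  have h1 : ∀ᵐ v ∂((Q μ).map (res n)), T (eIter M (e μ) n v) ≠ 0 := by
    rw [H.law, ae_withDensity_iff hm]
    exact Eventually.of_forall fun v h => h
  exact ae_of_ae_map (measurable_res n).aemeasurable h1

/-- `Q_μ = ∑ μ_i Q_i` on the cylinder functions and as measures -/
lemma HMM.Q_eq (H : HMM M φ Q) (μ : ProbVec E) :
    Q μ = Measure.sum (fun i => e μ i • Q (dir i)) := by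
  have := H.prob
  have hcyl : ∀ n, ∀ A : Set (Fin n → F), MeasurableSet A →
      Q μ (res n ⁻¹' A) = Measure.sum (fun i => e μ i • Q (dir i)) (res n ⁻¹' A) := by
    intro n A hA
    have h2 : ∀ ν, Q ν (res n ⁻¹' A) =
        ∫⁻ v in A, T (eIter M (e ν) n v) ∂(Measure.pi fun _ : Fin n => φ) := by
      intro ν
      rw [← Measure.map_apply (measurable_res n) hA, H.law, withDensity_apply _ hA]
    rw [Measure.sum_apply _ (measurable_res n hA)]
    simp only [Measure.smul_apply, smul_eq_mul, h2]
    have hm : ∀ ν, Measurable fun v : Fin n → F => T (eIter M (e ν) n v) := fun ν =>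
      measurable_T.comp (measurable_eIter H.meas _ _)
    simp_rw [T_eIter_decomp M μ]
    rw [lintegral_tsum fun i => ((hm _).const_mul _).aemeasurable]
    simp_rw [lintegral_const_mul _ (hm _)]
  have huniv : Q μ Set.univ = Measure.sum (fun i => e μ i • Q (dir i)) Set.univ :=
    hcyl 0 Set.univ MeasurableSet.univ
  refine ext_of_generate_finite {s | ∃ n, ∃ A : Set (Fin n → F), MeasurableSet A ∧ res n ⁻¹' A = s}
    ?_ ?_ ?_ huniv
  · apply le_antisymm
    · refine iSup_le fun k => ?_
      rintro _ ⟨B, hB, rfl⟩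
      apply MeasurableSpace.measurableSet_generateFrom
      exact ⟨k+1, (fun v => v (Fin.last k)) ⁻¹' B, (measurable_pi_apply _) hB, rfl⟩
    · apply MeasurableSpace.generateFrom_le
      rintro _ ⟨n, A, hA, rfl⟩
      exact measurable_res n hA
  · rintro _ ⟨n, A, hA, rfl⟩ _ ⟨m, B, hB, rfl⟩ -
    refine ⟨max n m, (fun v k => v (Fin.castLE (le_max_left n m) k)) ⁻¹' A ∩
      (fun v k => v (Fin.castLE (le_max_right n m) k)) ⁻¹' B, ?_, rfl⟩
    apply MeasurableSet.inter
    · exact (by fun_prop : Measurable (fun (v : Fin (max n m) → F) k => v (Fin.castLE (le_max_left n m) k))) hA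
    · exact (by fun_prop : Measurable (fun (v : Fin (max n m) → F) k => v (Fin.castLE (le_max_right n m) k))) hB
  · rintro _ ⟨n, A, hA, rfl⟩
    exact hcyl n A hA

lemma HMM.ac (H : HMM M φ Q) {μ ν : ProbVec E} (h : ∀ i, ν.1 i = 0 → μ.1 i = 0) :
    Q μ ≪ Q ν := by
  rw [H.Q_eq μ, H.Q_eq ν]
  refine Measure.AbsolutelyContinuous.mk fun s hs h0 => ?_
  rw [Measure.sum_apply _ hs, ENNReal.tsum_eq_zero] at h0 ⊢
  intro i
  have := h0 i
  simp only [Measure.smul_apply, smul_eq_mul, mul_eq_zero] at this ⊢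
  refine this.imp_left fun h1 => ?_
  have h2 : ν.1 i = 0 := le_antisymm (by simpa [e] using h1) (ν.2.1 i)
  simp [e, h i h2]

end FS

set_option linter.unusedSectionVars false

namespace FS
variable {E F : Type*}
variable [Countable E] [Nonempty E] [MeasurableSpace F] {M : F → E → E → ℝ}
  {φ : Measure F} {Q : ProbVec E → Measure (ℕ → F)}

noncomputable def Gf (M : F → E → E → ℝ) (μ : ProbVec E) (n : ℕ) (v : Fin n → F) : ProbVec E :=
  nrm (eIter M (e μ) n v)

lemma measurable_Gf (H : HMM M φ Q) (μ : ProbVec E) (n : ℕ) : Measurable (Gf M μ n) :=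
  measurable_nrm.comp (measurable_eIter H.meas _ _)

lemma measurable_Gf_res (H : HMM M φ Q) (μ : ProbVec E) (n : ℕ) :
    Measurable fun y => Gf M μ n (res n y) :=
  (measurable_Gf H μ n).comp (measurable_res n)

noncomputable def PiE (M : F → E → E → ℝ) (φ : Measure F) (f : ProbVec E → ℝ≥0∞)
    (μ : ProbVec E) : ℝ≥0∞ :=
  ∫⁻ x, T (eMul M (e μ) x) * f (nrm (eMul M (e μ) x)) ∂φ

variable [SigmaFinite φ]

lemma HMM.filterSeq_ae (H : HMM M φ Q) (μ : ProbVec E) :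
    ∀ᵐ y ∂(Q μ), ∀ n, filterSeq M μ y n = Gf M μ n (res n y) := by
  filter_upwards [H.ae_good μ, H.ae_pos μ] with y h1 h2 n
  exact filterList_eq H.nn μ (h1 n) (h2 n)

lemma measurable_PiE (H : HMM M φ Q) {f : ProbVec E → ℝ≥0∞} (hf : Measurable f) :
    Measurable (PiE M φ f) := by
  unfold PiE
  have h1 : Measurable fun p : ProbVec E × F => eMul M (e p.1) p.2 :=
    measurable_eMul H.meas (measurable_e.comp measurable_fst) measurable_snd
  exact Measurable.lintegral_prod_right'
    (f := fun p : ProbVec E × F => T (eMul M (e p.1) p.2) * f (nrm (eMul M (e p.1) p.2)))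
    ((measurable_T.comp h1).mul (hf.comp (measurable_nrm.comp h1)))

lemma T_eq_zero {w : E → ℝ≥0∞} (h : T w = 0) : w = fun _ => 0 := by
  funext j
  exact (ENNReal.tsum_eq_zero.1 h) j

lemma HMM.scale (H : HMM M φ Q) (f : ProbVec E → ℝ≥0∞) {w : E → ℝ≥0∞} (hw : T w ≠ ⊤) :
    T w * PiE M φ f (nrm w) = ∫⁻ x, T (eMul M w x) * f (nrm (eMul M w x)) ∂φ := by
  by_cases h0 : T w = 0
  · rw [h0, zero_mul]
    symm
    have : ∀ x, T (eMul M w x) = 0 := by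
      intro x
      rw [T_eMul, T_eq_zero h0]; simp
    simp [this]
  unfold PiE
  rw [← lintegral_const_mul' _ _ hw]
  refine lintegral_congr_ae ?_
  filter_upwards [H.good] with x hx
  rw [e_nrm h0 hw, eMul_smul, T_smul, ← mul_assoc, ← mul_assoc, ENNReal.mul_inv_cancel h0 hw,
    one_mul]
  by_cases h1 : T (eMul M w x) = 0
  · simp [h1]
  rw [nrm_smul (by simpa using hw) (by simpa using h0) h1 (good_T H.nn hx hw)]

lemma HMM.stepE (H : HMM M φ Q) {f : ProbVec E → ℝ≥0∞} (hf : Measurable f) (μ : ProbVec E)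
    (n : ℕ) :
    ∫⁻ y, f (Gf M μ (n+1) (res (n+1) y)) ∂(Q μ) =
      ∫⁻ y, PiE M φ f (Gf M μ n (res n y)) ∂(Q μ) := by
  rw [H.lint μ (n+1) (g := fun v => f (Gf M μ (n+1) v)) (hf.comp (measurable_Gf H μ _)),
    H.lint μ n (g := fun v => PiE M φ f (Gf M μ n v))
      ((measurable_PiE H hf).comp (measurable_Gf H μ n)),
    lint_snoc n (g := fun v => T (eIter M (e μ) (n+1) v) * f (Gf M μ (n+1) v))
      ((measurable_Titer H.meas _ _).mul (hf.comp (measurable_Gf H μ _)))]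
  refine lintegral_congr_ae ?_
  filter_upwards [FS.ae_good H.good n] with v hv
  unfold Gf
  rw [H.scale f (good_iter H.nn (by simp [T_e]) hv)]
  simp_rw [eIter_snoc]

lemma HMM.row_ae (H : HMM M φ Q) (μ : ProbVec E) : ∀ᵐ x ∂φ,
    T (eMul M (e μ) x) ≠ ⊤ ∧
    (∀ j, rowMul M μ.1 x j = (eMul M (e μ) x j).toReal) ∧
    rowTot (rowMul M μ.1 x) = (T (eMul M (e μ) x)).toReal := by
  filter_upwards [H.good] with x hx
  have h1 : T (eMul M (e μ) x) ≠ ⊤ := good_T H.nn hx (by simp [T_e])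
  have hr : rowMul M μ.1 x = fun j => (eMul M (e μ) x j).toReal := by
    rw [← rowMul_eq H.nn (by simp [T_e]), e_fun]
  exact ⟨h1, fun j => by rw [hr], by rw [hr, T_toReal h1]⟩

lemma HMM.fk_ae (H : HMM M φ Q) (f : ProbVec E → ℝ) (μ : ProbVec E) : ∀ᵐ x ∂φ,
    f (filterStep M μ x) * rowTot (rowMul M (μ : E → ℝ) x) =
      f (nrm (eMul M (e μ) x)) * (T (eMul M (e μ) x)).toReal := by
  filter_upwards [H.good, H.row_ae μ] with x hx h1
  rw [h1.2.2]
  by_cases h0 : T (eMul M (e μ) x) = 0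
  · simp [h0]
  · rw [filterStep_eq H.nn μ hx h0]

lemma HMM.fk (H : HMM M φ Q) (f : ProbVec E → ℝ) (μ : ProbVec E) :
    filterKernel M φ f μ =
      ∫ x, f (nrm (eMul M (e μ) x)) * (T (eMul M (e μ) x)).toReal ∂φ :=
  integral_congr_ae (H.fk_ae f μ)

lemma HMM.meas_mul (H : HMM M φ Q) (μ : ProbVec E) :
    Measurable fun x => eMul M (e μ) x :=
  measurable_eMul H.meas measurable_const measurable_id

lemma HMM.meas_tot (H : HMM M φ Q) (μ : ProbVec E) :
    Measurable fun x => T (eMul M (e μ) x) :=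
  measurable_T.comp (H.meas_mul μ)

lemma HMM.int_tot (H : HMM M φ Q) (μ : ProbVec E) :
    Integrable (fun x => (T (eMul M (e μ) x)).toReal) φ ∧
      ∫ x, (T (eMul M (e μ) x)).toReal ∂φ = 1 := by
  have h := lint_T H.meas H.one (e μ)
  rw [T_e] at h
  refine ⟨integrable_toReal_of_lintegral_ne_top (H.meas_tot μ).aemeasurable
    (by rw [h]; simp), ?_⟩
  rw [integral_toReal (H.meas_tot μ).aemeasurable, h]
  · simp
  · filter_upwards [H.row_ae μ] with x hx using hx.1.lt_top

lemma HMM.fk_int (H : HMM M φ Q) {f : ProbVec E → ℝ} (hf : Measurable f) {C : ℝ}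
    (hC : ∀ μ, |f μ| ≤ C) (μ : ProbVec E) :
    Integrable (fun x => f (nrm (eMul M (e μ) x)) * (T (eMul M (e μ) x)).toReal) φ := by
  refine (H.int_tot μ).1.bdd_mul (c := C) ?_ (Eventually.of_forall fun x => hC _)
  exact (hf.comp (measurable_nrm.comp (H.meas_mul μ))).aestronglyMeasurable

lemma HMM.fk_add (H : HMM M φ Q) {f : ProbVec E → ℝ} (hf : Measurable f) {C : ℝ}
    (hC : ∀ μ, |f μ| ≤ C) (c : ℝ) (μ : ProbVec E) :
    filterKernel M φ (fun μ => f μ + c) μ = filterKernel M φ f μ + c := by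
  rw [H.fk, H.fk]
  simp_rw [add_mul]
  rw [integral_add (H.fk_int hf hC μ) ((H.int_tot μ).1.const_mul c), integral_const_mul,
    (H.int_tot μ).2, mul_one]

lemma HMM.fk_le (H : HMM M φ Q) {f : ProbVec E → ℝ} {C : ℝ}
    (hC : ∀ μ, |f μ| ≤ C) (μ : ProbVec E) : |filterKernel M φ f μ| ≤ C := by
  rw [H.fk, ← Real.norm_eq_abs]
  refine (norm_integral_le_of_norm_le ((H.int_tot μ).1.const_mul C)
    (Eventually.of_forall fun x => ?_)).trans ?_
  · rw [norm_mul, Real.norm_eq_abs, Real.norm_eq_abs, abs_of_nonneg ENNReal.toReal_nonneg]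
    exact mul_le_mul_of_nonneg_right (hC _) ENNReal.toReal_nonneg
  · rw [integral_const_mul, (H.int_tot μ).2, mul_one]

lemma HMM.fk_nonneg (H : HMM M φ Q) {f : ProbVec E → ℝ} (hf : Measurable f)
    (h0 : ∀ μ, 0 ≤ f μ) (μ : ProbVec E) :
    filterKernel M φ f μ = (PiE M φ (fun μ => ENNReal.ofReal (f μ)) μ).toReal := by
  rw [H.fk, integral_eq_lintegral_of_nonneg_ae]
  · congr 1
    unfold PiE
    refine lintegral_congr_ae ?_
    filter_upwards [H.row_ae μ] with x hx
    rw [mul_comm, ENNReal.ofReal_mul ENNReal.toReal_nonneg, ENNReal.ofReal_toReal hx.1]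
  · exact Eventually.of_forall fun x => mul_nonneg (h0 _) ENNReal.toReal_nonneg
  · exact ((hf.comp (measurable_nrm.comp (H.meas_mul μ))).mul
      (H.meas_tot μ).ennreal_toReal).aestronglyMeasurable

lemma HMM.fk_meas (H : HMM M φ Q) {f : ProbVec E → ℝ} (hf : Measurable f) {C : ℝ}
    (hC : ∀ μ, |f μ| ≤ C) : Measurable (filterKernel M φ f) := by
  have h1 : filterKernel M φ f =
      fun μ => (PiE M φ (fun μ => ENNReal.ofReal (f μ + C)) μ).toReal - C := by
    funext μ
    rw [← H.fk_nonneg (f := fun μ => f μ + C) (hf.add_const C)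
      (fun μ => by linarith [neg_abs_le (f μ), hC μ]), H.fk_add hf hC]
    ring
  rw [h1]
  exact (measurable_PiE H (hf.add_const C).ennreal_ofReal).ennreal_toReal.sub_const C

lemma HMM.step0 (H : HMM M φ Q) {f : ProbVec E → ℝ} (hf : Measurable f) {C : ℝ}
    (hC : ∀ μ, |f μ| ≤ C) (h0 : ∀ μ, 0 ≤ f μ) (μ : ProbVec E) (n : ℕ) :
    ∫ y, f (Gf M μ (n+1) (res (n+1) y)) ∂(Q μ) =
      ∫ y, filterKernel M φ f (Gf M μ n (res n y)) ∂(Q μ) := by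
  have hp : ∀ μ, 0 ≤ filterKernel M φ f μ := fun μ => by
    rw [H.fk_nonneg hf h0]; exact ENNReal.toReal_nonneg
  rw [integral_eq_lintegral_of_nonneg_ae (Eventually.of_forall fun _ => h0 _)
    (hf.comp (measurable_Gf_res H μ _)).aestronglyMeasurable,
    integral_eq_lintegral_of_nonneg_ae (Eventually.of_forall fun _ => hp _)
    ((H.fk_meas hf hC).comp (measurable_Gf_res H μ _)).aestronglyMeasurable,
    H.stepE (f := fun μ => ENNReal.ofReal (f μ)) hf.ennreal_ofReal]
  congr 1
  refine lintegral_congr fun y => ?_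
  rw [H.fk_nonneg hf h0, ENNReal.ofReal_toReal]
  have : PiE M φ (fun μ => ENNReal.ofReal (f μ)) (Gf M μ n (res n y)) ≤ ENNReal.ofReal C := by
    unfold PiE
    calc _ ≤ ∫⁻ x, T (eMul M (e (Gf M μ n (res n y))) x) * ENNReal.ofReal C ∂φ := by
          refine lintegral_mono fun x => ?_
          gcongr
          exact ENNReal.ofReal_le_ofReal ((le_abs_self _).trans (hC _))
      _ = _ := by
          rw [lintegral_mul_const _ (H.meas_tot _), lint_T H.meas H.one, T_e,
            one_mul]
  exact ne_top_of_le_ne_top ENNReal.ofReal_ne_top this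

lemma HMM.step (H : HMM M φ Q) {f : ProbVec E → ℝ} (hf : Measurable f) {C : ℝ}
    (hC : ∀ μ, |f μ| ≤ C) (μ : ProbVec E) (n : ℕ) :
    ∫ y, f (Gf M μ (n+1) (res (n+1) y)) ∂(Q μ) =
      ∫ y, filterKernel M φ f (Gf M μ n (res n y)) ∂(Q μ) := by
  have := H.prob μ
  have h := H.step0 (f := fun μ => f μ + C) (hf.add_const C) (C := C + C)
    (fun μ => (abs_add_le _ _).trans (add_le_add (hC μ)
      (by rw [abs_of_nonneg ((abs_nonneg _).trans (hC μ))])))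
    (fun μ => by linarith [neg_abs_le (f μ), hC μ]) μ n
  simp_rw [H.fk_add hf hC] at h
  rw [integral_add, integral_add] at h
  · simpa using h
  · exact Integrable.of_bound ((H.fk_meas hf hC).comp (measurable_Gf_res H μ _)).aestronglyMeasurable
      C (Eventually.of_forall fun y => H.fk_le hC _)
  · exact integrable_const _
  · exact Integrable.of_bound (hf.comp (measurable_Gf_res H μ _)).aestronglyMeasurable
      C (Eventually.of_forall fun y => hC _)
  · exact integrable_const _

end FS

set_option linter.unusedSectionVars false

namespace FS
variable {E F : Type*}
variable [Countable E] [Nonempty E] [MeasurableSpace F] {M : F → E → E → ℝ}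
  {φ : Measure F} {Q : ProbVec E → Measure (ℕ → F)}

lemma summ_abs (p q : ProbVec E) : Summable fun i => |p.1 i - q.1 i| :=
  (p.2.2.summable.sub q.2.2.summable).abs

lemma tv_nonneg (p q : ProbVec E) : 0 ≤ tvDist p q := tsum_nonneg fun _ => abs_nonneg _

lemma tv_le (p q : ProbVec E) : tvDist p q ≤ 2 := by
  have h : HasSum (fun i => p.1 i + q.1 i) (1 + 1) := p.2.2.add q.2.2
  have := (summ_abs p q).tsum_le_tsum (fun i => by
    have := p.2.1 i; have := q.2.1 i
    rw [abs_le]; constructor <;> linarith : ∀ i, |p.1 i - q.1 i| ≤ p.1 i + q.1 i) h.summable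
  rw [h.tsum_eq] at this
  unfold tvDist; linarith

lemma tv_comm (p q : ProbVec E) : tvDist p q = tvDist q p := by
  unfold tvDist; simp_rw [abs_sub_comm]

lemma tv_tri (p q r : ProbVec E) : tvDist p r ≤ tvDist p q + tvDist q r := by
  unfold tvDist
  rw [← (summ_abs p q).tsum_add (summ_abs q r)]
  exact (summ_abs p r).tsum_le_tsum (fun i => abs_sub_le _ _ _) ((summ_abs p q).add (summ_abs q r))

lemma tv_apply (p q : ProbVec E) (i : E) : |p.1 i - q.1 i| ≤ tvDist p q :=
  (summ_abs p q).le_tsum i (fun _ _ => abs_nonneg _)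

lemma tv_eq_pos (p q : ProbVec E) : tvDist p q = 2 * ∑' i, max (q.1 i - p.1 i) 0 := by
  have h1 : HasSum (fun i => p.1 i - q.1 i) (1 - 1) := p.2.2.sub q.2.2
  have h2 : Summable fun i => max (q.1 i - p.1 i) 0 :=
    Summable.of_nonneg_of_le (fun i => le_max_right _ _)
      (fun i => max_le ((le_abs_self _).trans_eq (abs_sub_comm _ _)) (abs_nonneg _)) (summ_abs p q)
  have h3 := (h2.hasSum.mul_left 2).add h1
  have : (fun i => 2 * max (q.1 i - p.1 i) 0 + (p.1 i - q.1 i)) = fun i => |p.1 i - q.1 i| := by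
    funext i
    rcases le_total (q.1 i) (p.1 i) with h | h
    · rw [max_eq_right (by linarith), abs_of_nonneg (by linarith)]; ring
    · rw [max_eq_left (by linarith), abs_of_nonpos (by linarith)]; ring
  rw [this] at h3
  unfold tvDist
  rw [h3.tsum_eq]; ring

lemma tendsto_apply {ι : Type*} {l : Filter ι} {p : ι → ProbVec E} {q : ProbVec E}
    (h : Tendsto p l (𝓝 q)) (i : E) : Tendsto (fun k => (p k).1 i) l (𝓝 (q.1 i)) :=
  ((continuous_apply i).comp continuous_subtype_val).continuousAt.tendsto.comp h

lemma tendsto_of_apply {ι : Type*} {l : Filter ι} {p : ι → ProbVec E} {q : ProbVec E}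
    (h : ∀ i, Tendsto (fun k => (p k).1 i) l (𝓝 (q.1 i))) : Tendsto p l (𝓝 q) := by
  rw [tendsto_subtype_rng, tendsto_pi_nhds]; exact h

/-- Scheffe -/
lemma tv_tendsto {p : ℕ → ProbVec E} {q : ProbVec E}
    (h : Tendsto p atTop (𝓝 q)) : Tendsto (fun k => tvDist (p k) q) atTop (𝓝 0) := by
  simp_rw [tv_eq_pos]
  have : Tendsto (fun k => ∑' i, max (q.1 i - (p k).1 i) 0) atTop (𝓝 (∑' _ : E, (0:ℝ))) := by
    refine tendsto_tsum_of_dominated_convergence (bound := q.1) q.2.2.summable ?_ ?_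
    · intro i
      have := (tendsto_const_nhds (x := q.1 i)).sub (tendsto_apply h i)
      simpa using this.max (tendsto_const_nhds (x := (0:ℝ)))
    · refine Eventually.of_forall fun k i => ?_
      rw [Real.norm_eq_abs, abs_of_nonneg (le_max_right _ _)]
      exact max_le (by linarith [(p k).2.1 i]) (q.2.1 i)
  simpa using this.const_mul 2

noncomputable def dif (p q : ProbVec E) : E → ℝ≥0∞ := fun i => ENNReal.ofReal |p.1 i - q.1 i|

lemma T_dif (p q : ProbVec E) : T (dif p q) = ENNReal.ofReal (tvDist p q) := by
  unfold T dif tvDist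
  rw [ENNReal.ofReal_tsum_of_nonneg (fun _ => abs_nonneg _) (summ_abs p q)]

lemma dif_comm (p q : ProbVec E) : dif p q = dif q p := by
  unfold dif; simp_rw [abs_sub_comm]

lemma e_le_dif (p q : ProbVec E) (i : E) : e p i ≤ e q i + dif p q i := by
  unfold e dif
  rw [← ENNReal.ofReal_add (q.2.1 i) (abs_nonneg _)]
  exact ENNReal.ofReal_le_ofReal (by linarith [le_abs_self (p.1 i - q.1 i)])

lemma eMul_add_le (M : F → E → E → ℝ) {a b c : E → ℝ≥0∞} (h : ∀ i, a i ≤ b i + c i) (x : F) (j : E) :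
    eMul M a x j ≤ eMul M b x j + eMul M c x j := by
  unfold eMul
  rw [← ENNReal.tsum_add]
  refine ENNReal.tsum_le_tsum fun i => ?_
  rw [← add_mul]; gcongr; exact h i

lemma T_add_le {a b c : E → ℝ≥0∞} (h : ∀ i, a i ≤ b i + c i) : T a ≤ T b + T c := by
  unfold T
  rw [← ENNReal.tsum_add]
  exact ENNReal.tsum_le_tsum h

lemma abs_toReal_sub_le {a b c : ℝ≥0∞} (h1 : a ≤ b + c) (h2 : b ≤ a + c) (ha : a ≠ ⊤) (hb : b ≠ ⊤)
    (hc : c ≠ ⊤) : |a.toReal - b.toReal| ≤ c.toReal := by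
  have h3 := ENNReal.toReal_mono (by finiteness) h1
  have h4 := ENNReal.toReal_mono (by finiteness) h2
  rw [ENNReal.toReal_add hb hc] at h3
  rw [ENNReal.toReal_add ha hc] at h4
  rw [abs_le]; constructor <;> linarith

lemma good_T_le {y : F} (hy : Good M y) (hnn : ∀ y i j, 0 ≤ M y i j) :
    ∃ C : ℝ≥0∞, C ≠ ⊤ ∧ ∀ w : E → ℝ≥0∞, T (eMul M w y) ≤ T w * C := by
  obtain ⟨C, hC⟩ := hy
  refine ⟨ENNReal.ofReal C, ENNReal.ofReal_ne_top, fun w => ?_⟩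
  rw [T_eMul]
  unfold T
  rw [← ENNReal.tsum_mul_right]
  refine ENNReal.tsum_le_tsum fun i => ?_
  gcongr
  rw [ENNReal.tsum_eq_iSup_sum]
  refine iSup_le fun s => ?_
  rw [← ENNReal.ofReal_sum_of_nonneg (fun j _ => hnn _ _ _)]
  exact ENNReal.ofReal_le_ofReal (hC i s)

lemma T_dif_ne_top (p q : ProbVec E) : T (dif p q) ≠ ⊤ := by rw [T_dif]; exact ENNReal.ofReal_ne_top

lemma dif_bounds (hnn : ∀ y i j, 0 ≤ M y i j) {x : F} (hx : Good M x) (p q : ProbVec E) :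
    (|(T (eMul M (e p) x)).toReal - (T (eMul M (e q) x)).toReal| ≤ (T (eMul M (dif p q) x)).toReal)
    ∧ ∀ j, |(eMul M (e p) x j).toReal - (eMul M (e q) x j).toReal|
      ≤ (T (eMul M (dif p q) x)).toReal := by
  have h1 : ∀ p : ProbVec E, T (eMul M (e p) x) ≠ ⊤ := fun p => good_T hnn hx (by simp [T_e])
  have h2 : T (eMul M (dif p q) x) ≠ ⊤ := good_T hnn hx (T_dif_ne_top p q)
  have h3 := eMul_add_le M (e_le_dif p q) x
  have h4 := eMul_add_le M (e_le_dif q p) x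
  rw [dif_comm q p] at h4
  refine ⟨abs_toReal_sub_le (T_add_le h3) (T_add_le h4) (h1 p) (h1 q) h2, fun j => ?_⟩
  exact abs_toReal_sub_le ((h3 j).trans (by gcongr; exact le_T _ j))
    ((h4 j).trans (by gcongr; exact le_T _ j))
    (ne_top_of_le_ne_top (h1 p) (le_T _ j)) (ne_top_of_le_ne_top (h1 q) (le_T _ j)) h2

lemma dif_tendsto (hnn : ∀ y i j, 0 ≤ M y i j) {x : F} (hx : Good M x) {p : ℕ → ProbVec E}
    {q : ProbVec E} (h : Tendsto p atTop (𝓝 q)) :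
    Tendsto (fun k => (T (eMul M (dif (p k) q) x)).toReal) atTop (𝓝 0) := by
  obtain ⟨C, hC, hb⟩ := good_T_le hx hnn
  have h1 : Tendsto (fun k => tvDist (p k) q * C.toReal) atTop (𝓝 0) := by
    simpa using (tv_tendsto h).mul_const C.toReal
  refine squeeze_zero (fun _ => ENNReal.toReal_nonneg) (fun k => ?_) h1
  have h2 := hb (dif (p k) q)
  rw [T_dif] at h2
  have h3 := ENNReal.toReal_mono (by finiteness) h2
  rwa [ENNReal.toReal_mul, ENNReal.toReal_ofReal (tv_nonneg _ _)] at h3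

lemma tendsto_of_abs_le {a b : ℕ → ℝ} {x : ℝ} (h : ∀ k, |a k - x| ≤ b k)
    (hb : Tendsto b atTop (𝓝 0)) : Tendsto a atTop (𝓝 x) := by
  rw [tendsto_iff_norm_sub_tendsto_zero]
  exact squeeze_zero (fun _ => norm_nonneg _) h hb

variable [SigmaFinite φ]

lemma HMM.feller_seq (H : HMM M φ Q) {f : ProbVec E → ℝ} (hf : Continuous f) {C : ℝ}
    (hC : ∀ μ, |f μ| ≤ C) {p : ℕ → ProbVec E} {q : ProbVec E} (h : Tendsto p atTop (𝓝 q)) :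
    Tendsto (fun k => filterKernel M φ f (p k)) atTop (𝓝 (filterKernel M φ f q)) := by
  have hC0 : 0 ≤ C := (abs_nonneg _).trans (hC q)
  simp_rw [H.fk]
  set S : ProbVec E → F → ProbVec E := fun p x => nrm (eMul M (e p) x) with hS
  set t : ProbVec E → F → ℝ := fun p x => (T (eMul M (e p) x)).toReal with ht
  have hSm : ∀ p, Measurable (S p) := fun p => measurable_nrm.comp (H.meas_mul p)
  have hdm : ∀ k, Measurable fun x => T (eMul M (dif (p k) q) x) := fun k =>
    measurable_T.comp (measurable_eMul H.meas measurable_const measurable_id)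
  have h1 : Tendsto (fun k => ∫ x, f (S (p k) x) * t q x ∂φ) atTop
      (𝓝 (∫ x, f (S q x) * t q x ∂φ)) := by
    refine tendsto_integral_of_dominated_convergence (fun x => C * t q x) ?_
      ((H.int_tot q).1.const_mul C) ?_ ?_
    · intro k
      exact ((hf.measurable.comp (hSm _)).mul (H.meas_tot q).ennreal_toReal).aestronglyMeasurable
    · refine fun k => Eventually.of_forall fun x => ?_
      rw [norm_mul, Real.norm_eq_abs, Real.norm_eq_abs, abs_of_nonneg ENNReal.toReal_nonneg]
      exact mul_le_mul_of_nonneg_right (hC _) ENNReal.toReal_nonneg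
    · filter_upwards [H.good] with x hx
      by_cases h0 : T (eMul M (e q) x) = 0
      · simp [ht, h0]
      refine Tendsto.mul_const _ ((hf.tendsto _).comp ?_)
      have hfin : ∀ p : ProbVec E, T (eMul M (e p) x) ≠ ⊤ := fun p => good_T H.nn hx (by simp [T_e])
      have hT := tendsto_of_abs_le (fun k => (dif_bounds H.nn hx (p k) q).1) (dif_tendsto H.nn hx h)
      have hpos : 0 < (T (eMul M (e q) x)).toReal := ENNReal.toReal_pos h0 (hfin q)
      refine tendsto_of_apply fun j => ?_
      have hj := tendsto_of_abs_le (fun k => (dif_bounds H.nn hx (p k) q).2 j)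
        (dif_tendsto H.nn hx h)
      have := hj.div hT hpos.ne'
      rw [hS]
      simp only
      rw [nrm_apply' h0 (hfin q)]
      refine this.congr' ?_
      filter_upwards [hT.eventually (lt_mem_nhds hpos)] with k hk
      rw [nrm_apply' _ (hfin _)]
      · rfl
      · intro h; rw [h] at hk; simp at hk
  have h2 : Tendsto (fun k => ∫ x, f (S (p k) x) * (t (p k) x - t q x) ∂φ) atTop (𝓝 0) := by
    have h3 : Tendsto (fun k => C * tvDist (p k) q) atTop (𝓝 0) := by
      simpa using (tv_tendsto h).const_mul C
    refine squeeze_zero_norm (fun k => ?_) h3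
    have hl := lint_T H.meas H.one (dif (p k) q)
    rw [T_dif] at hl
    have hi : Integrable (fun x => (T (eMul M (dif (p k) q) x)).toReal) φ :=
      integrable_toReal_of_lintegral_ne_top (hdm k).aemeasurable
        (by rw [hl]; exact ENNReal.ofReal_ne_top)
    refine (norm_integral_le_of_norm_le (hi.const_mul C) ?_).trans ?_
    · filter_upwards [H.good] with x hx
      rw [norm_mul]
      exact mul_le_mul (hC _) (dif_bounds H.nn hx (p k) q).1 (norm_nonneg _) hC0
    · rw [integral_const_mul, integral_toReal (hdm k).aemeasurable, hl,
        ENNReal.toReal_ofReal (tv_nonneg _ _)]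
      filter_upwards [H.good] with x hx
      exact (good_T H.nn hx (T_dif_ne_top _ _)).lt_top
  have h3 := h1.add h2
  rw [add_zero] at h3
  refine h3.congr fun k => ?_
  have hb : ∀ r, Integrable (fun x => f (S (p k) x) * t r x) φ := fun r => by
    refine (H.int_tot r).1.bdd_mul (c := C) ?_ (Eventually.of_forall fun x => hC _)
    exact (hf.measurable.comp (hSm _)).aestronglyMeasurable
  simp_rw [mul_sub]
  rw [integral_sub (hb _) (hb _)]
  ring

lemma HMM.feller (H : HMM M φ Q) {f : ProbVec E → ℝ} (hf : IsBddCont f) :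
    IsBddCont (filterKernel M φ f) := by
  obtain ⟨h1, C, hC⟩ := hf
  refine ⟨?_, C, H.fk_le hC⟩
  rw [continuous_iff_seqContinuous]
  intro p q h
  exact H.feller_seq h1 hC h

end FS

set_option linter.unusedSectionVars false

namespace FS
variable {E F : Type*}
variable [Countable E] [Nonempty E] [MeasurableSpace F] {M : F → E → E → ℝ}
  {φ : Measure F} {Q : ProbVec E → Measure (ℕ → F)}

lemma compactK (J : ℕ → Finset E) :
    IsCompact {p : ProbVec E | ∀ m : ℕ, 1 - ∑ j ∈ J m, p.1 j ≤ 1 / ((m:ℝ) + 1)} := by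
  rw [Subtype.isCompact_iff]
  have h1 : (Subtype.val '' {p : ProbVec E | ∀ m : ℕ, 1 - ∑ j ∈ J m, p.1 j ≤ 1 / ((m:ℝ) + 1)}) =
      (Set.pi Set.univ fun _ : E => Set.Icc (0:ℝ) 1) ∩
        ({p | ∀ m : ℕ, 1 - ∑ j ∈ J m, p j ≤ 1 / ((m:ℝ) + 1)} ∩
          {p | ∀ s : Finset E, ∑ j ∈ s, p j ≤ 1}) := by
    ext p
    constructor
    · rintro ⟨p, hp, rfl⟩
      have hs : ∀ s : Finset E, ∑ j ∈ s, p.1 j ≤ 1 := fun s =>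
        sum_le_hasSum s (fun i _ => p.2.1 i) p.2.2
      exact ⟨fun i _ => ⟨p.2.1 i, by simpa using hs {i}⟩, hp, hs⟩
    · rintro ⟨h1, h2, h3⟩
      have h0 : ∀ i, 0 ≤ p i := fun i => (h1 i trivial).1
      have hs : Summable p := summable_of_sum_le h0 h3
      refine ⟨⟨p, h0, ?_⟩, h2, rfl⟩
      rw [hs.hasSum_iff]
      apply le_antisymm (hs.tsum_le_of_sum_le h3)
      have h4 : Tendsto (fun m : ℕ => 1 - 1 / ((m:ℝ) + 1)) atTop (𝓝 (1 - 0)) :=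
        tendsto_const_nhds.sub tendsto_one_div_add_atTop_nhds_zero_nat
      rw [sub_zero] at h4
      refine le_of_tendsto' h4 fun m => ?_
      have := hs.sum_le_tsum (J m) (fun i _ => h0 i)
      have h5 : 1 - ∑ j ∈ J m, p j ≤ 1 / ((m:ℝ) + 1) := h2 m
      linarith
  rw [h1]
  refine (isCompact_univ_pi fun _ => isCompact_Icc).inter_right (IsClosed.inter ?_ ?_)
  · simp only [Set.ofPred_forall]
    refine isClosed_iInter fun m => isClosed_le (by fun_prop) continuous_const
  · simp only [Set.ofPred_forall]
    refine isClosed_iInter fun m => isClosed_le (by fun_prop) continuous_const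

lemma tail_eq (p : ProbVec E) (J : Finset E) :
    ENNReal.ofReal (1 - ∑ j ∈ J, p.1 j) = ∑' j : {j // j ∉ J}, e p j := by
  unfold e
  have h := p.2.2.summable.sum_add_tsum_subtype_compl J
  rw [p.2.2.tsum_eq] at h
  rw [← ENNReal.ofReal_tsum_of_nonneg (fun i => p.2.1 _) (p.2.2.summable.subtype _)]
  congr 1
  linarith

lemma tight_aux {b : E → ℝ≥0∞} (hb : T b ≠ ⊤) {ε : ℝ≥0∞} (hε : ε ≠ 0) :
    ∃ K : Set (ProbVec E), IsCompact K ∧ ∀ m : Measure (ProbVec E),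
      (∀ j, ∫⁻ p, e p j ∂m ≤ b j) → m Kᶜ ≤ ε := by
  obtain ⟨δ, δ0, hδ⟩ := ENNReal.exists_pos_sum_of_countable hε ℕ
  have hJ : ∀ n : ℕ, ∃ J : Finset E,
      ∑' j : {j // j ∉ J}, b j < δ n * ENNReal.ofReal (1 / ((n:ℝ) + 1)) := by
    intro n
    have h := ENNReal.tendsto_tsum_compl_atTop_zero hb
    refine (h.eventually (gt_mem_nhds ?_)).exists
    refine ENNReal.mul_pos (by simpa using (δ0 n).ne') ?_
    simp only [ne_eq, ENNReal.ofReal_eq_zero, not_le]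
    positivity
  choose J hJ using hJ
  refine ⟨_, compactK J, fun m hm => ?_⟩
  have h1 : {p : ProbVec E | ∀ m : ℕ, 1 - ∑ j ∈ J m, p.1 j ≤ 1 / ((m:ℝ) + 1)}ᶜ ⊆
      ⋃ n : ℕ, {p : ProbVec E | ENNReal.ofReal (1 / ((n:ℝ) + 1)) ≤ ∑' j : {j // j ∉ J n}, e p j} := by
    intro p hp
    simp only [Set.mem_compl_iff, Set.mem_ofPred_eq, not_forall, not_le] at hp
    obtain ⟨n, hn⟩ := hp
    refine Set.mem_iUnion.2 ⟨n, ?_⟩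
    simp only [Set.mem_ofPred_eq]
    rw [← tail_eq]
    exact ENNReal.ofReal_le_ofReal hn.le
  refine (measure_mono h1).trans ((measure_iUnion_le _).trans (le_trans ?_ hδ.le))
  refine ENNReal.tsum_le_tsum fun n => ?_
  have hpos : ENNReal.ofReal (1 / ((n:ℝ) + 1)) ≠ 0 := by
    simp only [ne_eq, ENNReal.ofReal_eq_zero, not_le]
    positivity
  have hme : ∀ j, Measurable fun p : ProbVec E => e p j := fun j =>
    (measurable_pi_apply j).comp measurable_e
  refine (meas_ge_le_lintegral_div (Measurable.tsum fun j => hme _).aemeasurable hpos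
    ENNReal.ofReal_ne_top).trans ?_
  refine ENNReal.div_le_of_le_mul ?_
  rw [lintegral_tsum fun j => (hme _).aemeasurable]
  exact (ENNReal.tsum_le_tsum fun j => hm _).trans (hJ n).le

noncomputable def pE (M : F → E → E → ℝ) (φ : Measure F) (i j : E) : ℝ≥0∞ :=
  ∫⁻ x, ENNReal.ofReal (M x i j) ∂φ

lemma eMul_mono (M : F → E → E → ℝ) {a b : E → ℝ≥0∞} (h : ∀ i, a i ≤ b i) (x : F) (j : E) :
    eMul M a x j ≤ eMul M b x j :=
  ENNReal.tsum_le_tsum fun i => mul_le_mul_left (h i) _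

lemma eIter_mono (M : F → E → E → ℝ) {a b : E → ℝ≥0∞} (h : ∀ i, a i ≤ b i) (n : ℕ) (v : Fin n → F)
    (j : E) : eIter M a n v j ≤ eIter M b n v j := by
  induction n generalizing j with
  | zero => exact h j
  | succ n ih => exact eMul_mono M (fun i => ih _ i) _ j

variable [SigmaFinite φ]

lemma HMM.pE_sum (H : HMM M φ Q) (i : E) : ∑' j, pE M φ i j = 1 := by
  unfold pE
  rw [← lintegral_tsum fun j => (H.meas i j).ennreal_ofReal.aemeasurable]
  exact H.one i

lemma HMM.pE_le (H : HMM M φ Q) (i j : E) : pE M φ i j ≤ 1 := by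
  rw [← H.pE_sum i]; exact ENNReal.le_tsum j

lemma HMM.transMat_eq (H : HMM M φ Q) (i j : E) : transMat M φ i j = (pE M φ i j).toReal := by
  unfold transMat pE
  rw [integral_eq_lintegral_of_nonneg_ae (Eventually.of_forall fun y => H.nn y i j)
    (H.meas i j).aestronglyMeasurable]

def Inv (M : F → E → E → ℝ) (φ : Measure F) (ρ : ProbVec E) : Prop :=
  ∀ j, ∑' i, e ρ i * pE M φ i j = e ρ j

lemma HMM.inv_iff (H : HMM M φ Q) (ρ : ProbVec E) :
    (∀ j, ∑' i, ρ.1 i * transMat M φ i j = ρ.1 j) ↔ Inv M φ ρ := by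
  refine forall_congr' fun j => ?_
  have h1 : ∑' i, e ρ i * pE M φ i j ≤ 1 := by
    rw [← T_e ρ]
    exact ENNReal.tsum_le_tsum fun i => mul_le_of_le_one_right' (H.pE_le i j)
  have h2 : (∑' i, e ρ i * pE M φ i j).toReal = ∑' i, ρ.1 i * transMat M φ i j := by
    rw [ENNReal.tsum_toReal_eq fun i => ENNReal.mul_ne_top (e_ne_top _ _)
      (ne_top_of_le_ne_top ENNReal.one_ne_top (H.pE_le i j))]
    simp_rw [ENNReal.toReal_mul, e_toReal, H.transMat_eq]
  rw [← h2, ← e_toReal ρ j, ENNReal.toReal_eq_toReal_iff' (ne_top_of_le_ne_top ENNReal.one_ne_top h1)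
    (e_ne_top _ _)]

lemma HMM.lint_eMul (H : HMM M φ Q) (w : E → ℝ≥0∞) (j : E) :
    ∫⁻ x, eMul M w x j ∂φ = ∑' i, w i * pE M φ i j := by
  unfold eMul pE
  rw [lintegral_tsum fun i => ((H.meas i j).ennreal_ofReal.const_mul _).aemeasurable]
  simp_rw [lintegral_const_mul _ (H.meas _ j).ennreal_ofReal]

lemma HMM.lint_eIter (H : HMM M φ Q) {lam : ProbVec E} (hl : Inv M φ lam) (n : ℕ) (j : E) :
    ∫⁻ v, eIter M (e lam) n v j ∂(Measure.pi fun _ : Fin n => φ) = e lam j := by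
  have hm : ∀ n j, Measurable fun v : Fin n → F => eIter M (e lam) n v j := fun n j =>
    (measurable_pi_apply j).comp (measurable_eIter H.meas _ n)
  induction n generalizing j with
  | zero => rw [Measure.pi_of_empty, lintegral_dirac]; rfl
  | succ n ih =>
    rw [lint_snoc n (hm (n+1) j)]
    simp_rw [eIter_snoc, H.lint_eMul]
    rw [lintegral_tsum fun i => ((hm n i).mul_const _).aemeasurable]
    simp_rw [lintegral_mul_const _ (hm n _), ih]
    exact hl j

/-- `∫ e(π_n)_j g dQ = ∫ W_j g dφ^n`. -/
lemma HMM.lint_coord (H : HMM M φ Q) (μ : ProbVec E) (n : ℕ) (j : E) {g : (Fin n → F) → ℝ≥0∞}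
    (hg : Measurable g) :
    ∫⁻ y, e (Gf M μ n (res n y)) j * g (res n y) ∂(Q μ) =
      ∫⁻ v, eIter M (e μ) n v j * g v ∂(Measure.pi fun _ : Fin n => φ) := by
  rw [H.lint μ n (g := fun v => e (Gf M μ n v) j * g v)
    (((measurable_pi_apply j).comp (measurable_e.comp (measurable_Gf H μ n))).mul hg)]
  refine lintegral_congr_ae ?_
  filter_upwards [FS.ae_good H.good n] with v hv
  rw [← mul_assoc]
  congr 1
  have h1 : T (eIter M (e μ) n v) ≠ ⊤ := good_iter H.nn (by simp [T_e]) hv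
  by_cases h0 : T (eIter M (e μ) n v) = 0
  · rw [h0, T_eq_zero h0, zero_mul]
  · unfold Gf
    rw [e_nrm h0 h1, ← mul_assoc, ENNReal.mul_inv_cancel h0 h1, one_mul]

lemma HMM.mean_le (H : HMM M φ Q) {lam : ProbVec E} (hl : Inv M φ lam) {μ : ProbVec E} {C : ℝ≥0∞}
    (hC : ∀ j, e μ j ≤ C * e lam j) (n : ℕ) (j : E) :
    ∫⁻ y, e (Gf M μ n (res n y)) j ∂(Q μ) ≤ C * e lam j := by
  have h := H.lint_coord μ n j (g := fun _ => 1) measurable_const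
  simp only [mul_one] at h
  rw [h]
  calc _ ≤ ∫⁻ v, C * eIter M (e lam) n v j ∂(Measure.pi fun _ : Fin n => φ) := by
        refine lintegral_mono fun v => ?_
        have := eIter_mono M hC n v j
        rwa [eIter_smul] at this
    _ = _ := by
        have hm : Measurable fun v : Fin n → F => eIter M (e lam) n v j :=
          (measurable_pi_apply j).comp (measurable_eIter H.meas _ n)
        rw [lintegral_const_mul _ hm, H.lint_eIter hl]

noncomputable def Av (M : F → E → E → ℝ) (Q : ProbVec E → Measure (ℕ → F)) (μ : ProbVec E)
    (f : ProbVec E → ℝ) (n : ℕ) : ℝ := ∫ y, f (Gf M μ n (res n y)) ∂(Q μ)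

/-- Cesaro mean -/
noncomputable def ces (a : ℕ → ℝ) (N : ℕ) : ℝ := ((N:ℝ) + 1)⁻¹ * ∑ n ∈ Finset.range (N+1), a n

noncomputable def cesM (M : F → E → E → ℝ) (Q : ProbVec E → Measure (ℕ → F)) (μ : ProbVec E)
    (N : ℕ) : Measure (ProbVec E) :=
  ((N:ℝ≥0∞) + 1)⁻¹ • ∑ n ∈ Finset.range (N+1), (Q μ).map (fun y => Gf M μ n (res n y))

lemma cN (N : ℕ) : ((N:ℝ≥0∞) + 1)⁻¹ * ((N:ℝ≥0∞) + 1) = 1 :=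
  ENNReal.inv_mul_cancel (by simp) (by finiteness)

lemma HMM.cesM_prob (H : HMM M φ Q) (μ : ProbVec E) (N : ℕ) : IsProbabilityMeasure (cesM M Q μ N) := by
  have := H.prob μ
  constructor
  unfold cesM
  rw [Measure.smul_apply, Measure.finsetSum_apply]
  simp_rw [Measure.map_apply (measurable_Gf_res H μ _) MeasurableSet.univ]
  simp [cN]

lemma HMM.cesM_lint (H : HMM M φ Q) {lam : ProbVec E} (hl : Inv M φ lam) {μ : ProbVec E} {C : ℝ≥0∞}
    (hC : ∀ j, e μ j ≤ C * e lam j) (N : ℕ) (j : E) :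
    ∫⁻ p, e p j ∂(cesM M Q μ N) ≤ C * e lam j := by
  unfold cesM
  rw [lintegral_smul_measure, lintegral_finsetSum_measure]
  have hm : Measurable fun p : ProbVec E => e p j := (measurable_pi_apply j).comp measurable_e
  simp_rw [lintegral_map hm (measurable_Gf_res H μ _)]
  calc _ ≤ ((N:ℝ≥0∞) + 1)⁻¹ * ∑ n ∈ Finset.range (N+1), C * e lam j := by
        rw [smul_eq_mul]; gcongr with n; exact H.mean_le hl hC n j
    _ = _ := by simp [← mul_assoc, cN]

lemma HMM.cesM_int (H : HMM M φ Q) (μ : ProbVec E) (N : ℕ) {f : ProbVec E → ℝ} (hf : IsBddCont f) :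
    ∫ p, f p ∂(cesM M Q μ N) = ces (Av M Q μ f) N := by
  have := H.prob μ
  obtain ⟨hf, C, hC⟩ := hf
  unfold cesM ces Av
  rw [integral_smul_measure, integral_finsetSum_measure]
  · simp_rw [integral_map (measurable_Gf_res H μ _).aemeasurable hf.aestronglyMeasurable]
    rw [smul_eq_mul, ENNReal.toReal_inv, ENNReal.toReal_add (by simp) (by simp)]
    simp
  · intro n _
    have := (Measure.isProbabilityMeasure_map (measurable_Gf_res H μ n).aemeasurable : IsProbabilityMeasure ((Q μ).map _))
    exact Integrable.of_bound hf.aestronglyMeasurable C (Eventually.of_forall hC)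

lemma ces_shift {a : ℕ → ℝ} {C : ℝ} (h : ∀ n, |a n| ≤ C) :
    Tendsto (fun N => ces (fun n => a (n+1)) N - ces a N) atTop (𝓝 0) := by
  have h1 : Tendsto (fun N : ℕ => (1 / ((N:ℝ) + 1)) * (C + C)) atTop (𝓝 0) := by
    simpa using tendsto_one_div_add_atTop_nhds_zero_nat.mul_const (C + C)
  refine squeeze_zero_norm (fun N => ?_) h1
  unfold ces
  rw [← mul_sub, ← Finset.sum_sub_distrib, Finset.sum_range_sub, norm_mul, one_div,
    Real.norm_of_nonneg (by positivity)]
  gcongr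
  exact (norm_sub_le _ _).trans (add_le_add (h _) (h _))

lemma HMM.Av_le (H : HMM M φ Q) (μ : ProbVec E) {f : ProbVec E → ℝ} {C : ℝ} (h : ∀ p, |f p| ≤ C)
    (n : ℕ) : |Av M Q μ f n| ≤ C := by
  have := H.prob μ
  unfold Av
  have := norm_integral_le_of_norm_le_const (μ := Q μ) (C := C)
    (f := fun y => f (Gf M μ n (res n y))) (Eventually.of_forall fun y => h _)
  simpa using this

noncomputable abbrev UU : Ultrafilter ℕ := Filter.hyperfilter ℕ

lemma UU_le : (UU : Filter ℕ) ≤ atTop := Nat.hyperfilter_le_atTop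

theorem HMM.KB (H : HMM M φ Q) {lam : ProbVec E} (hl : Inv M φ lam) {μ : ProbVec E} {C : ℝ≥0∞}
    (hCt : C ≠ ⊤) (hC : ∀ j, e μ j ≤ C * e lam j) :
    ∃ 𝕄 : ProbabilityMeasure (ProbVec E), IsPiInvariant M φ 𝕄 ∧
      ∀ f, IsBddCont f → Tendsto (ces (Av M Q μ f)) UU (𝓝 (∫ p, f p ∂(𝕄 : Measure (ProbVec E)))) := by
  let m : ℕ → ProbabilityMeasure (ProbVec E) := fun N => ⟨cesM M Q μ N, H.cesM_prob μ N⟩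
  have ht : IsTightMeasureSet {((μ : ProbabilityMeasure (ProbVec E)) : Measure (ProbVec E)) |
      μ ∈ Set.range m} := by
    rw [isTightMeasureSet_iff_exists_isCompact_measure_compl_le]
    intro ε hε
    have hb : T (fun j => C * e lam j) ≠ ⊤ := by
      rw [T_smul, T_e]; simpa using hCt
    obtain ⟨K, hK, h⟩ := tight_aux hb hε.ne'
    refine ⟨K, hK, ?_⟩
    rintro _ ⟨_, ⟨N, rfl⟩, rfl⟩
    exact h _ (H.cesM_lint hl hC N)
  have hc := isCompact_closure_of_isTightMeasureSet ht
  obtain ⟨𝕄, -, h𝕄⟩ := hc.ultrafilter_le_nhds (UU.map m) (by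
    rw [le_principal_iff]
    exact mem_of_superset (range_mem_map) subset_closure)
  have h1 : Tendsto m UU (𝓝 𝕄) := h𝕄
  have h2 : ∀ f, IsBddCont f →
      Tendsto (ces (Av M Q μ f)) UU (𝓝 (∫ p, f p ∂(𝕄 : Measure (ProbVec E)))) := by
    intro f hf
    have hf' := hf
    obtain ⟨hc, C, hC⟩ := hf
    have := (ProbabilityMeasure.tendsto_iff_forall_integral_tendsto.1 h1)
      (BoundedContinuousFunction.ofNormedAddCommGroup f hc C hC)
    refine this.congr fun N => ?_
    exact H.cesM_int μ N hf'
  refine ⟨𝕄, fun f hf => ?_, h2⟩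
  have h3 := h2 f hf
  have h4 := h2 _ (H.feller hf)
  obtain ⟨hc, C, hC⟩ := hf
  have h5 : Av M Q μ (filterKernel M φ f) = fun n => Av M Q μ f (n+1) := by
    funext n
    exact (H.step hc.measurable hC μ n).symm
  rw [h5] at h4
  have h6 := (ces_shift (H.Av_le μ hC)).mono_left UU_le
  exact sub_eq_zero.1 (tendsto_nhds_unique (h4.sub h3) h6)

end FS

set_option linter.unusedSectionVars false

namespace FS
variable {E F : Type*}
variable [Countable E] [Nonempty E] [MeasurableSpace F] {M : F → E → E → ℝ}
  {φ : Measure F} {Q : ProbVec E → Measure (ℕ → F)}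

def LipF (f : ProbVec E → ℝ) : Prop :=
  IsBddCont f ∧ ∃ K : ℝ, ∀ p q, |f p - f q| ≤ K * tvDist p q

def lipAlg (E : Type*) [Countable E] : StarSubalgebra ℝ (BoundedContinuousFunction (E → ℝ) ℝ) where
  carrier := {g | ∃ K : ℝ, ∀ p q : ProbVec E, |g p.1 - g q.1| ≤ K * tvDist p q}
  mul_mem' := by
    rintro f g ⟨K, hK⟩ ⟨L, hL⟩
    refine ⟨‖f‖ * L + ‖g‖ * K, fun p q => ?_⟩
    have h1 : (f * g) p.1 - (f * g) q.1 = f p.1 * (g p.1 - g q.1) + g q.1 * (f p.1 - f q.1) := by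
      simp only [BoundedContinuousFunction.mul_apply]; ring
    rw [h1]
    refine (abs_add_le _ _).trans ?_
    rw [abs_mul, abs_mul, add_mul, mul_assoc, mul_assoc]
    refine add_le_add (mul_le_mul (f.norm_coe_le_norm _) (hL p q) (abs_nonneg _) (norm_nonneg _))
      (mul_le_mul (g.norm_coe_le_norm _) (hK p q) (abs_nonneg _) (norm_nonneg _))
  add_mem' := by
    rintro f g ⟨K, hK⟩ ⟨L, hL⟩
    refine ⟨K + L, fun p q => ?_⟩
    have h1 : (f + g) p.1 - (f + g) q.1 = (f p.1 - f q.1) + (g p.1 - g q.1) := by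
      simp only [BoundedContinuousFunction.add_apply]; ring
    rw [h1, add_mul]
    exact (abs_add_le _ _).trans (add_le_add (hK p q) (hL p q))
  algebraMap_mem' := by
    intro r
    refine ⟨0, fun p q => ?_⟩
    simp
  star_mem' := by
    rintro f ⟨K, hK⟩
    exact ⟨K, fun p q => by simpa using hK p q⟩

lemma measure_ext {m m' : ProbabilityMeasure (ProbVec E)}
    (h : ∀ f, LipF f → ∫ p, f p ∂(m : Measure (ProbVec E)) = ∫ p, f p ∂(m' : Measure (ProbVec E))) :
    m = m' := by
  have hmeas : MeasurableSet {p : E → ℝ | (∀ i, 0 ≤ p i) ∧ HasSum p 1} := by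
    have h1 : {p : E → ℝ | (∀ i, 0 ≤ p i) ∧ HasSum p 1} =
        (⋂ i, {p | 0 ≤ p i}) ∩ {p | ∑' i, ENNReal.ofReal (p i) = 1} := by
      ext p
      simp only [Set.mem_ofPred_eq, Set.mem_inter_iff, Set.mem_iInter]
      refine and_congr_right fun h0 => ?_
      constructor
      · intro h
        rw [← ENNReal.ofReal_tsum_of_nonneg h0 h.summable, h.tsum_eq]; simp
      · intro h
        have hs : Summable p := by
          have := ENNReal.summable_toReal (f := fun i => ENNReal.ofReal (p i)) (by rw [h]; simp)
          simpa [h0] using this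
        rw [hs.hasSum_iff]
        rw [← ENNReal.ofReal_tsum_of_nonneg h0 hs] at h
        simpa using h
    rw [h1]
    refine MeasurableSet.inter (MeasurableSet.iInter fun i =>
      measurableSet_le measurable_const (measurable_pi_apply i)) ?_
    exact measurableSet_eq_fun (Measurable.tsum fun i => (measurable_pi_apply i).ennreal_ofReal)
      measurable_const
  have hemb : MeasurableEmbedding (Subtype.val : ProbVec E → E → ℝ) :=
    MeasurableEmbedding.subtype_coe hmeas
  have key : (m : Measure (ProbVec E)).map Subtype.val = (m' : Measure (ProbVec E)).map Subtype.val := by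
    have i1 : IsProbabilityMeasure ((m : Measure (ProbVec E)).map Subtype.val) :=
      Measure.isProbabilityMeasure_map measurable_subtype_coe.aemeasurable
    have i2 : IsProbabilityMeasure ((m' : Measure (ProbVec E)).map Subtype.val) :=
      Measure.isProbabilityMeasure_map measurable_subtype_coe.aemeasurable
    refine ext_of_forall_mem_subalgebra_integral_eq_of_polish (𝕜 := ℝ) (A := lipAlg E) ?_ ?_
    · intro x y hxy
      obtain ⟨i, hi⟩ := Function.ne_iff.1 hxy
      set c : ℝ := max 1 (max |x i| |y i|) with hc
      have c1 : 1 ≤ c := le_max_left _ _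
      have cx : |x i| ≤ c := (le_max_left _ _).trans (le_max_right _ _)
      have cy : |y i| ≤ c := (le_max_right _ _).trans (le_max_right _ _)
      have clamp : ∀ t : ℝ, |t| ≤ c → max (-c) (min c t) = t := by
        intro t ht
        rw [abs_le] at ht
        rw [min_eq_right ht.2, max_eq_right ht.1]
      let g : BoundedContinuousFunction (E → ℝ) ℝ :=
        BoundedContinuousFunction.ofNormedAddCommGroup (fun z => max (-c) (min c (z i)))
          (by fun_prop) c (fun z => by
            rw [Real.norm_eq_abs, abs_le]
            exact ⟨le_max_left _ _, max_le (by linarith) (min_le_left _ _)⟩)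
      have hg : g ∈ lipAlg E := by
        refine ⟨1, fun p q => ?_⟩
        have hp : ∀ p : ProbVec E, g p.1 = p.1 i := fun p => by
          refine clamp _ (le_trans ?_ c1)
          rw [abs_of_nonneg (p.2.1 i)]
          exact le_hasSum p.2.2 i (fun j _ => p.2.1 j)
        rw [hp, hp, one_mul]
        exact tv_apply p q i
      refine ⟨g, ⟨_, ⟨g, hg, rfl⟩, rfl⟩, ?_⟩
      change max (-c) (min c (x i)) ≠ max (-c) (min c (y i))
      rwa [clamp _ cx, clamp _ cy]
    · rintro g ⟨K, hK⟩
      rw [hemb.integral_map, hemb.integral_map]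
      refine h _ ⟨⟨g.continuous.comp continuous_subtype_val, ‖g‖, fun p => g.norm_coe_le_norm _⟩,
        K, hK⟩
  apply Subtype.ext
  have := congrArg (Measure.comap (Subtype.val : ProbVec E → E → ℝ)) key
  rwa [hemb.comap_map, hemb.comap_map] at this

lemma measurable_tv {α : Type*} [MeasurableSpace α] {f g : α → ProbVec E} (hf : Measurable f)
    (hg : Measurable g) : Measurable fun a => tvDist (f a) (g a) := by
  have h1 : (fun a => tvDist (f a) (g a)) = fun a => (∑' i, dif (f a) (g a) i).toReal := by
    funext a
    have := T_dif (f a) (g a)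
    unfold T at this
    rw [this, ENNReal.toReal_ofReal (tv_nonneg _ _)]
  rw [h1]
  refine (Measurable.tsum fun i => ?_).ennreal_toReal
  have hc : ∀ {f : α → ProbVec E}, Measurable f → Measurable fun a => (f a).1 i := fun hf =>
    (measurable_pi_apply i).comp (measurable_subtype_coe.comp hf)
  exact (((hc hf).sub (hc hg)).abs).ennreal_ofReal

lemma coord_bc (j : E) : IsBddCont fun p : ProbVec E => p.1 j :=
  ⟨(continuous_apply j).comp continuous_subtype_val, 1, fun p => by
    rw [abs_of_nonneg (p.2.1 j)]; exact le_hasSum p.2.2 j (fun i _ => p.2.1 i)⟩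

variable [SigmaFinite φ]

lemma HMM.PiE_coord (H : HMM M φ Q) (j : E) (μ : ProbVec E) :
    PiE M φ (fun p => e p j) μ = ∑' i, e μ i * pE M φ i j := by
  rw [← H.lint_eMul]
  unfold PiE
  refine lintegral_congr_ae ?_
  filter_upwards [H.row_ae μ] with x hx
  by_cases h0 : T (eMul M (e μ) x) = 0
  · rw [h0, T_eq_zero h0, zero_mul]
  · rw [e_nrm h0 hx.1, ← mul_assoc, ENNReal.mul_inv_cancel h0 hx.1, one_mul]

lemma measurable_ej (j : E) : Measurable fun p : ProbVec E => e p j :=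
  (measurable_pi_apply j).comp measurable_e

lemma e_le_one (p : ProbVec E) (j : E) : e p j ≤ 1 := by rw [← T_e p]; exact le_T _ j

lemma HMM.bary (H : HMM M φ Q) {lam : ProbVec E}
    (hu : ∀ ρ : ProbVec E, Inv M φ ρ → ρ = lam) {m : ProbabilityMeasure (ProbVec E)}
    (hm : IsPiInvariant M φ m) (j : E) :
    ∫⁻ p, e p j ∂(m : Measure (ProbVec E)) = e lam j := by
  set b : E → ℝ≥0∞ := fun j => ∫⁻ p, e p j ∂(m : Measure (ProbVec E)) with hb
  have hT : T b = 1 := by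
    unfold T
    rw [hb]
    rw [← lintegral_tsum fun j => (measurable_ej j).aemeasurable]
    have : ∀ p : ProbVec E, ∑' j, e p j = 1 := T_e
    simp [this]
  have hbt : ∀ j, b j ≠ ⊤ := fun j => ne_top_of_le_ne_top (by rw [hT]; simp) (le_T b j)
  have hinv : ∀ j, ∑' i, b i * pE M φ i j = b j := by
    intro j
    have h1 := hm _ (coord_bc j)
    have h2 : ∫ p, filterKernel M φ (fun p : ProbVec E => p.1 j) p ∂(m : Measure (ProbVec E)) =
        (∑' i, b i * pE M φ i j).toReal := by
      have h3 : ∀ p, filterKernel M φ (fun p : ProbVec E => p.1 j) p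
          = (∑' i, e p i * pE M φ i j).toReal := by
        intro p
        rw [H.fk_nonneg (coord_bc j).1.measurable (fun p => p.2.1 j), ← H.PiE_coord]
        rfl
      simp_rw [h3]
      rw [integral_toReal (Measurable.tsum fun i => (measurable_ej i).mul_const _).aemeasurable]
      · rw [lintegral_tsum fun i => ((measurable_ej i).mul_const _).aemeasurable]
        simp_rw [lintegral_mul_const _ (measurable_ej _)]
        rfl
      · refine Eventually.of_forall fun p => lt_of_le_of_lt ?_ ENNReal.one_lt_top
        rw [← T_e p]
        exact ENNReal.tsum_le_tsum fun i => mul_le_of_le_one_right' (H.pE_le i j)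
    have h4 : ∫ p, p.1 j ∂(m : Measure (ProbVec E)) = (b j).toReal := by
      rw [integral_eq_lintegral_of_nonneg_ae (Eventually.of_forall fun p => p.2.1 j)
        (coord_bc j).1.aestronglyMeasurable]
      rfl
    rw [h2, h4] at h1
    refine (ENNReal.toReal_eq_toReal_iff' ?_ (hbt j)).1 h1
    refine ne_top_of_le_ne_top ENNReal.one_ne_top ?_
    rw [← hT]
    exact ENNReal.tsum_le_tsum fun i => mul_le_of_le_one_right' (H.pE_le i j)
  have he : e (nrm b) = b := by
    rw [e_nrm (by rw [hT]; simp) (by rw [hT]; simp), hT]; simp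
  have := hu (nrm b) (by intro j; rw [he]; exact hinv j)
  rw [← this, he]

lemma HMM.lint_mix (H : HMM M φ Q) {g : (ℕ → F) → ℝ≥0∞} (μ : ProbVec E) :
    ∫⁻ y, g y ∂(Q μ) = ∑' i, e μ i * ∫⁻ y, g y ∂(Q (dir i)) := by
  rw [H.Q_eq μ, lintegral_sum_measure]
  simp_rw [lintegral_smul_measure, smul_eq_mul]

lemma HMM.mix (H : HMM M φ Q) {lam : ProbVec E} {m : ProbabilityMeasure (ProbVec E)}
    (hm : ∀ j, ∫⁻ p, e p j ∂(m : Measure (ProbVec E)) = e lam j)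
    {g : (ℕ → F) → ℝ} (hg : Measurable g) {C : ℝ} (hC : ∀ y, |g y| ≤ C) :
    (Measurable fun μ => ∫ y, g y ∂(Q μ)) ∧
    ∫ μ, ∫ y, g y ∂(Q μ) ∂(m : Measure (ProbVec E)) = ∫ y, g y ∂(Q lam) := by
  have := H.prob
  set G : ProbVec E → ℝ≥0∞ := fun μ => ∫⁻ y, ENNReal.ofReal (g y + C) ∂(Q μ) with hG
  have hGe : ∀ μ, G μ = ∑' i, e μ i * G (dir i) := fun μ => H.lint_mix μ
  have hGm : Measurable G := by
    have : G = fun μ => ∑' i, e μ i * G (dir i) := funext hGe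
    rw [this]
    exact Measurable.tsum fun i => (measurable_ej i).mul_const _
  have hGt : ∀ μ, G μ < ⊤ := by
    intro μ
    refine lt_of_le_of_lt (lintegral_mono (g := fun _ => ENNReal.ofReal (C + C)) fun y => ?_) ?_
    · exact ENNReal.ofReal_le_ofReal (by linarith [le_abs_self (g y), hC y])
    · simp
  have h1 : ∀ μ, ∫ y, g y ∂(Q μ) = (G μ).toReal - C := by
    intro μ
    have hi : Integrable g (Q μ) := Integrable.of_bound hg.aestronglyMeasurable C
      (Eventually.of_forall hC)
    have h2 : ∫ y, (g y + C) ∂(Q μ) = (G μ).toReal := by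
      rw [integral_eq_lintegral_of_nonneg_ae _ (hg.add_const C).aestronglyMeasurable]
      exact Eventually.of_forall fun y => by
        simp only [Pi.zero_apply]; linarith [neg_abs_le (g y), hC y]
    rw [integral_add hi (integrable_const _)] at h2
    simp at h2
    linarith
  have h3 : ∫⁻ μ, G μ ∂(m : Measure (ProbVec E)) = G lam := by
    rw [lintegral_congr hGe, hGe lam, lintegral_tsum fun i => ((measurable_ej i).mul_const _).aemeasurable]
    simp_rw [lintegral_mul_const _ (measurable_ej _), hm]
  refine ⟨by simp_rw [h1]; exact hGm.ennreal_toReal.sub_const C, ?_⟩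
  simp_rw [h1]
  rw [integral_sub (integrable_toReal_of_lintegral_ne_top hGm.aemeasurable
    (by rw [h3]; exact (hGt _).ne)) (integrable_const _),
    integral_toReal hGm.aemeasurable (Eventually.of_forall hGt), h3]
  simp

lemma HMM.Av_inv (H : HMM M φ Q) {m : ProbabilityMeasure (ProbVec E)}
    (hm : IsPiInvariant M φ m) (n : ℕ) : ∀ f, IsBddCont f → IsBddCont (fun μ => Av M Q μ f n) ∧
      ∫ μ, Av M Q μ f n ∂(m : Measure (ProbVec E)) = ∫ μ, f μ ∂(m : Measure (ProbVec E)) := by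
  have := H.prob
  induction n with
  | zero =>
    intro f hf
    have : (fun μ => Av M Q μ f 0) = f := by
      funext μ
      unfold Av Gf
      simp [eIter, nrm_e]
    rw [this]
    exact ⟨hf, rfl⟩
  | succ n ih =>
    intro f hf
    have : (fun μ => Av M Q μ f (n+1)) = fun μ => Av M Q μ (filterKernel M φ f) n := by
      funext μ
      obtain ⟨h1, C, hC⟩ := hf
      exact H.step h1.measurable hC μ n
    rw [this]
    obtain ⟨h1, h2⟩ := ih _ (H.feller hf)
    exact ⟨h1, h2.trans (hm f hf)⟩

lemma HMM.lim_inv (H : HMM M φ Q) {lam : ProbVec E}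
    (hs : ∀ μ : ProbVec E, ∀ᵐ y ∂(Q μ),
      Tendsto (fun n => tvDist (Gf M μ n (res n y)) (Gf M lam n (res n y))) atTop (𝓝 0))
    {m : ProbabilityMeasure (ProbVec E)}
    (hm : IsPiInvariant M φ m)
    (hb : ∀ j, ∫⁻ p, e p j ∂(m : Measure (ProbVec E)) = e lam j)
    {f : ProbVec E → ℝ} (hf : LipF f) :
    Tendsto (fun n => Av M Q lam f n) atTop (𝓝 (∫ p, f p ∂(m : Measure (ProbVec E)))) := by
  have := H.prob
  obtain ⟨hbc, K, hK⟩ := hf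
  have hbc' := hbc
  obtain ⟨hc, C, hC⟩ := hbc
  set B : ℕ → ProbVec E → ℝ := fun n μ => ∫ y, f (Gf M lam n (res n y)) ∂(Q μ) with hB
  have hgm : ∀ μ n, Measurable fun y => f (Gf M μ n (res n y)) := fun μ n =>
    hc.measurable.comp (measurable_Gf_res H μ n)
  have hmix := fun n => H.mix hb (hgm lam n) (fun y => hC _)
  have hAv := fun n => H.Av_inv hm n f hbc'
  have hBb : ∀ n μ, |B n μ| ≤ C := fun n μ => by
    have := norm_integral_le_of_norm_le_const (μ := Q μ) (C := C)
      (f := fun y => f (Gf M lam n (res n y))) (Eventually.of_forall fun y => hC _)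
    simpa using this
  have hpt : ∀ μ, Tendsto (fun n => Av M Q μ f n - B n μ) atTop (𝓝 0) := by
    intro μ
    have h1 : Tendsto (fun n => ∫ y, K * tvDist (Gf M μ n (res n y)) (Gf M lam n (res n y)) ∂(Q μ))
        atTop (𝓝 (∫ _, 0 ∂(Q μ))) := by
      refine tendsto_integral_of_dominated_convergence (fun _ => |K| * 2) ?_ (integrable_const _) ?_ ?_
      · intro n
        exact ((measurable_tv (measurable_Gf_res H μ n)
          (measurable_Gf_res H lam n)).const_mul K).aestronglyMeasurable
      · intro n
        refine Eventually.of_forall fun y => ?_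
        rw [norm_mul, Real.norm_eq_abs, Real.norm_eq_abs, abs_of_nonneg (tv_nonneg _ _)]
        exact mul_le_mul_of_nonneg_left (tv_le _ _) (abs_nonneg _)
      · filter_upwards [hs μ] with y hy
        simpa using hy.const_mul K
    rw [integral_zero] at h1
    refine squeeze_zero_norm (fun n => ?_) h1
    have hi : ∀ ν, Integrable (fun y => f (Gf M ν n (res n y))) (Q μ) := fun ν =>
      Integrable.of_bound (hgm ν n).aestronglyMeasurable C (Eventually.of_forall fun y => hC _)
    unfold Av
    rw [hB]
    simp only
    rw [← integral_sub (hi μ) (hi lam)]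
    refine norm_integral_le_of_norm_le ?_ (Eventually.of_forall fun y => hK _ _)
    refine Integrable.of_bound ((measurable_tv (measurable_Gf_res H μ n)
      (measurable_Gf_res H lam n)).const_mul K).aestronglyMeasurable (|K| * 2)
      (Eventually.of_forall fun y => ?_)
    rw [norm_mul, Real.norm_eq_abs, Real.norm_eq_abs, abs_of_nonneg (tv_nonneg _ _)]
    exact mul_le_mul_of_nonneg_left (tv_le _ _) (abs_nonneg _)
  have h2 : Tendsto (fun n => ∫ μ, (Av M Q μ f n - B n μ) ∂(m : Measure (ProbVec E))) atTop
      (𝓝 (∫ _, 0 ∂(m : Measure (ProbVec E)))) := by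
    refine tendsto_integral_of_dominated_convergence (fun _ => C + C) ?_ (integrable_const _) ?_ ?_
    · intro n
      exact ((hAv n).1.1.measurable.sub (hmix n).1).aestronglyMeasurable
    · intro n
      exact Eventually.of_forall fun μ => (norm_sub_le _ _).trans
        (add_le_add (H.Av_le μ hC n) (hBb n μ))
    · exact Eventually.of_forall hpt
  have h3 : ∀ n, ∫ μ, (Av M Q μ f n - B n μ) ∂(m : Measure (ProbVec E)) =
      ∫ p, f p ∂(m : Measure (ProbVec E)) - Av M Q lam f n := by
    intro n
    rw [integral_sub, (hAv n).2, (hmix n).2]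
    · rfl
    · exact Integrable.of_bound (hAv n).1.1.aestronglyMeasurable C
        (Eventually.of_forall fun μ => H.Av_le μ hC n)
    · exact Integrable.of_bound (hmix n).1.aestronglyMeasurable C
        (Eventually.of_forall fun μ => hBb n μ)
  simp_rw [h3] at h2
  rw [integral_zero] at h2
  have h4 := (tendsto_const_nhds (x := ∫ p, f p ∂(m : Measure (ProbVec E)))).sub h2
  simpa using h4

lemma HMM.lam_pos [DecidableEq E] (H : HMM M φ Q) {lam : ProbVec E} (hl : Inv M φ lam)
    (hirr : ∀ i j : E, ∃ n : ℕ, 0 < matPow (transMat M φ) n i j) (j : E) : lam.1 j ≠ 0 := by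
  intro hj
  have h0 : ∃ i, lam.1 i ≠ 0 := by
    by_contra! h
    have := lam.2.2
    rw [funext h] at this
    exact one_ne_zero (this.unique hasSum_zero)
  obtain ⟨i, hi⟩ := h0
  have hP : ∀ k k', lam.1 k ≠ 0 → lam.1 k' = 0 → transMat M φ k k' = 0 := by
    intro k k' hk hk'
    have h1 := hl k'
    rw [show e lam k' = 0 by simp [e, hk'], ENNReal.tsum_eq_zero] at h1
    have h2 := h1 k
    rw [mul_eq_zero] at h2
    rcases h2 with h2 | h2
    · exact absurd (by rw [← e_toReal lam k, h2]; rfl) hk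
    · rw [H.transMat_eq, h2]; rfl
  have key : ∀ n k, lam.1 k = 0 → matPow (transMat M φ) n i k = 0 := by
    intro n
    induction n with
    | zero =>
      intro k hk
      have : i ≠ k := by rintro rfl; exact hi hk
      simp [matPow, this]
    | succ n ih =>
      intro k hk
      simp only [matPow]
      have : ∀ k', matPow (transMat M φ) n i k' * transMat M φ k' k = 0 := by
        intro k'
        by_cases h : lam.1 k' = 0
        · rw [ih k' h, zero_mul]
        · rw [hP k' k h hk, mul_zero]
      simp [this]
  obtain ⟨n, hn⟩ := hirr i j
  rw [key n j hj] at hn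
  exact lt_irrefl _ hn

theorem HMM.dir1 (H : HMM M φ Q) {lam : ProbVec E} (hl : Inv M φ lam)
    (hu : ∀ ρ : ProbVec E, Inv M φ ρ → ρ = lam)
    (hs : ∀ μ : ProbVec E, ∀ᵐ y ∂(Q μ),
      Tendsto (fun n => tvDist (Gf M μ n (res n y)) (Gf M lam n (res n y))) atTop (𝓝 0)) :
    ∃! 𝕄 : ProbabilityMeasure (ProbVec E), IsPiInvariant M φ 𝕄 := by
  obtain ⟨m, hm, -⟩ := H.KB hl (μ := lam) (C := 1) (by simp) (fun j => by simp)
  refine ⟨m, hm, fun m' hm' => measure_ext fun f hf => ?_⟩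
  exact tendsto_nhds_unique (H.lim_inv hs hm' (H.bary hu hm') hf)
    (H.lim_inv hs hm (H.bary hu hm) hf)

end FS

set_option linter.unusedSectionVars false

namespace FS
variable {E F : Type*}
variable [Countable E] [Nonempty E] [MeasurableSpace F] {M : F → E → E → ℝ}
  {φ : Measure F} {Q : ProbVec E → Measure (ℕ → F)} [SigmaFinite φ]

noncomputable def Dd (M : F → E → E → ℝ) (μ ν : ProbVec E) (c : ℝ≥0∞) (n : ℕ) (v : Fin n → F) : ℝ≥0∞ :=
  T (fun j => eIter M (e μ) n v j - c * eIter M (e ν) n v j)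

noncomputable def Sd (M : F → E → E → ℝ) (μ ν : ProbVec E) (c : ℝ≥0∞) (n : ℕ) (v : Fin n → F) : ℝ≥0∞ :=
  Dd M μ ν c n v / T (eIter M (e ν) n v)

lemma measurable_Dd (H : HMM M φ Q) (μ ν : ProbVec E) (c : ℝ≥0∞) (n : ℕ) : Measurable (Dd M μ ν c n) := by
  refine Measurable.tsum fun j => ?_
  have h1 := (measurable_pi_apply j).comp (measurable_eIter H.meas (e μ) n)
  have h2 := (measurable_pi_apply j).comp (measurable_eIter H.meas (e ν) n)
  exact h1.sub (h2.const_mul c)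

lemma measurable_Sd (H : HMM M φ Q) (μ ν : ProbVec E) (c : ℝ≥0∞) (n : ℕ) : Measurable (Sd M μ ν c n) :=
  (measurable_Dd H μ ν c n).div (measurable_Titer H.meas _ _)

lemma Dd_step (M : F → E → E → ℝ) (μ ν : ProbVec E) (c : ℝ≥0∞) (n : ℕ) (v : Fin n → F) (x : F) :
    Dd M μ ν c (n+1) (Fin.snoc v x) ≤
      T (eMul M (fun j => eIter M (e μ) n v j - c * eIter M (e ν) n v j) x) := by
  unfold Dd
  refine ENNReal.tsum_le_tsum fun j => ?_
  rw [eIter_snoc, eIter_snoc, tsub_le_iff_right]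
  have := eMul_add_le M (a := eIter M (e μ) n v)
    (b := fun j => eIter M (e μ) n v j - c * eIter M (e ν) n v j)
    (c := fun j => c * eIter M (e ν) n v j) (fun i => le_tsub_add) x j
  rwa [eMul_smul] at this

lemma HMM.Sd_step (H : HMM M φ Q) (μ ν : ProbVec E) (c : ℝ≥0∞) (n : ℕ) (v : Fin n → F)
    (hv : ∀ k, Good M (v k)) :
    ∫⁻ x, T (eIter M (e ν) (n+1) (Fin.snoc v x)) * Sd M μ ν c (n+1) (Fin.snoc v x) ∂φ ≤
      T (eIter M (e ν) n v) * Sd M μ ν c n v := by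
  have ht : T (eIter M (e ν) n v) ≠ ⊤ := good_iter H.nn (by rw [T_e]; simp) hv
  by_cases h0 : T (eIter M (e ν) n v) = 0
  · have : ∀ x, T (eIter M (e ν) (n+1) (Fin.snoc v x)) = 0 := by
      intro x
      rw [eIter_snoc, T_eq_zero h0]
      simp [T, eMul]
    simp [this]
  · calc _ ≤ ∫⁻ x, T (eMul M (fun j => eIter M (e μ) n v j - c * eIter M (e ν) n v j) x) ∂φ :=
          lintegral_mono fun x => (ENNReal.mul_div_le).trans (Dd_step M μ ν c n v x)
      _ = Dd M μ ν c n v := lint_T H.meas H.one _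
      _ = _ := (ENNReal.mul_div_cancel h0 ht).symm

lemma HMM.Sd_super (H : HMM M φ Q) (μ ν : ProbVec E) (c : ℝ≥0∞) (n : ℕ) {A : Set (Fin n → F)}
    (hA : MeasurableSet A) :
    ∫⁻ y in res n ⁻¹' A, Sd M μ ν c (n+1) (res (n+1) y) ∂Q ν ≤
      ∫⁻ y in res n ⁻¹' A, Sd M μ ν c n (res n y) ∂Q ν := by
  have hAm : Measurable (A.indicator (fun _ => (1:ℝ≥0∞))) := measurable_const.indicator hA
  have hini : Measurable (fun v : Fin (n+1) → F => (Fin.init v : Fin n → F)) :=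
    measurable_pi_lambda _ fun k => measurable_pi_apply _
  have key : ∀ g : (ℕ → F) → ℝ≥0∞, ∫⁻ y in res n ⁻¹' A, g y ∂Q ν =
      ∫⁻ y, A.indicator (fun _ => 1) (res n y) * g y ∂Q ν := by
    intro g
    rw [← lintegral_indicator (measurable_res n hA)]
    refine lintegral_congr fun y => ?_
    by_cases h : res n y ∈ A <;> simp [h]
  rw [key, key, H.lint ν n (g := fun v => A.indicator (fun _ => 1) v * Sd M μ ν c n v)
    (hAm.mul (measurable_Sd H μ ν c n))]
  have e1 := H.lint ν (n+1) (g := fun v => A.indicator (fun _ => 1) (Fin.init v : Fin n → F) * Sd M μ ν c (n+1) v)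
    ((hAm.comp hini).mul (measurable_Sd H μ ν c (n+1)))
  have e2 : ∀ y : ℕ → F, (Fin.init (res (n+1) y) : Fin n → F) = res n y := fun y => rfl
  simp_rw [e2] at e1
  have hmm : Measurable fun v : Fin (n+1) → F => T (eIter M (e ν) (n+1) v) *
      (A.indicator (fun _ => 1) (Fin.init v : Fin n → F) * Sd M μ ν c (n+1) v) :=
    (measurable_Titer H.meas _ _).mul ((hAm.comp hini).mul (measurable_Sd H μ ν c (n+1)))
  rw [e1, lint_snoc n hmm]
  refine lintegral_mono_ae ?_
  filter_upwards [FS.ae_good H.good n] with v hv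
  simp only [Fin.init_snoc]
  by_cases h : v ∈ A
  · simpa [h] using H.Sd_step μ ν c n v hv
  · simp [h]

lemma Sd_zero_le (M : F → E → E → ℝ) (μ ν : ProbVec E) (c : ℝ≥0∞) (v : Fin 0 → F) : Sd M μ ν c 0 v ≤ 1 := by
  have h1 : T (eIter M (e ν) 0 v) = 1 := T_e ν
  have h2 : Dd M μ ν c 0 v ≤ T (e μ) := ENNReal.tsum_le_tsum fun j => tsub_le_self
  unfold Sd
  rw [h1, div_one]; rwa [T_e] at h2

lemma HMM.Sd_int (H : HMM M φ Q) (μ ν : ProbVec E) (c : ℝ≥0∞) (n : ℕ) :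
    ∫⁻ y, Sd M μ ν c n (res n y) ∂Q ν ≤ 1 := by
  have := H.prob ν
  induction n with
  | zero =>
    calc _ ≤ ∫⁻ y, 1 ∂Q ν := lintegral_mono fun y => Sd_zero_le _ _ _ _ _
      _ = 1 := by simp
  | succ n ih =>
    have := H.Sd_super μ ν c n (A := Set.univ) MeasurableSet.univ
    simp only [Set.preimage_univ, Measure.restrict_univ] at this
    exact this.trans ih

noncomputable def filt : Filtration ℕ (inferInstance : MeasurableSpace (ℕ → F)) where
  seq n := MeasurableSpace.comap (res n) inferInstance
  mono' := by
    intro m n hmn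
    have h : (res m : (ℕ → F) → Fin m → F) = (fun v k => v (Fin.castLE hmn k)) ∘ res n := rfl
    simp only
    rw [h, ← MeasurableSpace.comap_comp]
    refine MeasurableSpace.comap_mono ?_
    rw [← measurable_iff_comap_le]
    exact measurable_pi_lambda _ fun k => measurable_pi_apply _
  le' n := (measurable_res n).comap_le

theorem HMM.Sd_conv (H : HMM M φ Q) (μ ν : ProbVec E) (c : ℝ≥0∞) :
    ∀ᵐ y ∂Q ν, ∃ l : ℝ, Tendsto (fun n => (Sd M μ ν c n (res n y)).toReal) atTop (𝓝 l) := by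
  have := H.prob ν
  let f : ℕ → (ℕ → F) → ℝ := fun n y => (Sd M μ ν c n (res n y)).toReal
  have hm : ∀ n, Measurable fun y : ℕ → F => Sd M μ ν c n (res n y) := fun n =>
    (measurable_Sd H μ ν c n).comp (measurable_res n)
  have hfin : ∀ n, ∫⁻ y, Sd M μ ν c n (res n y) ∂Q ν ≠ ⊤ := fun n =>
    ne_top_of_le_ne_top one_ne_top (H.Sd_int μ ν c n)
  have hint : ∀ n, Integrable (f n) (Q ν) := fun n =>
    integrable_toReal_of_lintegral_ne_top (hm n).aemeasurable (hfin n)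
  have hae : ∀ n, ∀ᵐ y ∂Q ν, Sd M μ ν c n (res n y) < ⊤ := fun n => ae_lt_top (hm n) (hfin n)
  have hset : ∀ n s, ∫ y in s, f n y ∂Q ν = (∫⁻ y in s, Sd M μ ν c n (res n y) ∂Q ν).toReal := by
    intro n s
    exact integral_toReal (hm n).aemeasurable (ae_restrict_of_ae (hae n))
  have hsup : Supermartingale f filt (Q ν) := by
    refine supermartingale_of_setIntegral_succ_le ?_ hint ?_
    · intro n
      refine Measurable.stronglyMeasurable ?_
      have h1 : Measurable fun v => (Sd M μ ν c n v).toReal := (measurable_Sd H μ ν c n).ennreal_toReal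
      exact h1.comp (comap_measurable (res n))
    · rintro n s ⟨A, hA, rfl⟩
      rw [hset, hset]
      refine ENNReal.toReal_mono ?_ (H.Sd_super μ ν c n hA)
      exact ne_top_of_le_ne_top (hfin n) (setLIntegral_le_lintegral _ _)
  have hb : ∀ n, eLpNorm ((-f) n) 1 (Q ν) ≤ (1 : NNReal) := by
    intro n
    have : (-f) n = -(f n) := rfl
    rw [this, eLpNorm_neg, eLpNorm_one_eq_lintegral_enorm]
    refine le_trans (lintegral_mono_ae ?_) (H.Sd_int μ ν c n)
    filter_upwards [hae n] with y hy
    simp only [f]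
    rw [Real.enorm_of_nonneg ENNReal.toReal_nonneg, ENNReal.ofReal_toReal hy.ne]
  filter_upwards [hsup.neg.exists_ae_tendsto_of_bdd hb] with y hy
  obtain ⟨l, hl⟩ := hy
  exact ⟨-l, by simpa [f] using hl.neg⟩

end FS

set_option linter.unusedSectionVars false

namespace FS
variable {E F : Type*}
variable [Countable E] [Nonempty E] [MeasurableSpace F] {M : F → E → E → ℝ}
  {φ : Measure F} {Q : ProbVec E → Measure (ℕ → F)} [SigmaFinite φ]

lemma lip_conv {h : ℕ → ℝ → ℝ} (hl : ∀ n c d, 0 ≤ c → 0 ≤ d → |h n c - h n d| ≤ |c - d|)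
    (hq : ∀ q : ℚ, 0 ≤ q → ∃ l, Tendsto (fun n => h n q) atTop (𝓝 l))
    {r : ℕ → ℝ} (hr0 : ∀ n, 0 ≤ r n) {s : ℝ} (hr : Tendsto r atTop (𝓝 s)) :
    ∃ l, Tendsto (fun n => h n (r n)) atTop (𝓝 l) := by
  have hs : 0 ≤ s := ge_of_tendsto' hr hr0
  refine cauchySeq_tendsto_of_complete (Metric.cauchySeq_iff'.2 fun ε hε => ?_)
  obtain ⟨q, hq1, hq2⟩ := exists_rat_btwn (show s < s + ε / 8 by linarith)
  have hq0 : (0:ℝ) ≤ q := hs.trans hq1.le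
  obtain ⟨l, hl1⟩ := hq q (by exact_mod_cast hq0)
  obtain ⟨N1, h1⟩ := Metric.tendsto_atTop.1 hl1 (ε/8) (by linarith)
  obtain ⟨N2, h2⟩ := Metric.tendsto_atTop.1 hr (ε/8) (by linarith)
  have key : ∀ n ≥ max N1 N2, |h n (r n) - l| < 3 * ε / 8 := by
    intro n hn
    have a1 := h1 n (le_trans (le_max_left _ _) hn)
    have a2 := h2 n (le_trans (le_max_right _ _) hn)
    have a3 := hl n (r n) q (hr0 n) hq0
    rw [Real.dist_eq] at a1 a2
    have a4 : |r n - q| ≤ ε/8 + ε / 8 := by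
      rw [abs_le]; rw [abs_lt] at a2; constructor <;> linarith
    have : h n (r n) - l = (h n (r n) - h n q) + (h n q - l) := by ring
    rw [this]
    refine (abs_add_le _ _).trans_lt ?_
    linarith
  refine ⟨max N1 N2, fun n hn => ?_⟩
  have b1 := key n hn
  have b2 := key _ le_rfl
  rw [Real.dist_eq]
  rw [abs_lt] at *
  constructor <;> linarith

lemma wt {w : E → ℝ≥0∞} (h1 : T w ≠ ⊤) (j : E) : w j = T w * e (nrm w) j := by
  by_cases h0 : T w = 0
  · rw [h0, zero_mul, T_eq_zero h0]
  · rw [e_nrm h0 h1, ← mul_assoc, ENNReal.mul_inv_cancel h0 h1, one_mul]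

lemma T_sub (p q : ProbVec E) : T (fun j => e p j - e q j) = ENNReal.ofReal (tvDist p q / 2) := by
  have h1 : ∀ j, e p j - e q j = ENNReal.ofReal (max (p.1 j - q.1 j) 0) := by
    intro j
    unfold e
    rw [← ENNReal.ofReal_sub _ (q.2.1 j)]
    rcases le_total (p.1 j - q.1 j) 0 with h | h
    · rw [max_eq_right h, ENNReal.ofReal_of_nonpos h]; simp
    · rw [max_eq_left h]
  have hs : Summable fun j => max (p.1 j - q.1 j) 0 := by
    refine Summable.of_nonneg_of_le (fun _ => le_max_right _ _) (fun j => ?_) (summ_abs p q)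
    exact max_le (le_abs_self _) (abs_nonneg _)
  unfold T
  simp_rw [h1]
  rw [← ENNReal.ofReal_tsum_of_nonneg (fun _ => le_max_right _ _) hs, tv_comm, tv_eq_pos]
  congr 1; ring

lemma T_sub_w {w : E → ℝ≥0∞} (h1 : T w ≠ ⊤) (q : ProbVec E) :
    T (fun j => w j - T w * e q j) = T w * ENNReal.ofReal (tvDist (nrm w) q / 2) := by
  rw [← T_sub, ← T_smul]
  congr 1; funext j
  rw [ENNReal.mul_sub (fun _ _ => h1), ← wt h1 j]

lemma Sd_self (H : HMM M φ Q) (μ ν : ProbVec E) (n : ℕ) (v : Fin n → F) (hv : ∀ k, Good M (v k))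
    (h0 : T (eIter M (e ν) n v) ≠ 0) :
    Sd M μ ν (T (eIter M (e μ) n v) / T (eIter M (e ν) n v)) n v =
      T (eIter M (e μ) n v) / T (eIter M (e ν) n v) *
        ENNReal.ofReal (tvDist (Gf M μ n v) (Gf M ν n v) / 2) := by
  have ht1 : T (eIter M (e μ) n v) ≠ ⊤ := good_iter H.nn (by rw [T_e]; simp) hv
  have ht2 : T (eIter M (e ν) n v) ≠ ⊤ := good_iter H.nn (by rw [T_e]; simp) hv
  unfold Sd Dd
  have : ∀ j, T (eIter M (e μ) n v) / T (eIter M (e ν) n v) * eIter M (e ν) n v j =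
      T (eIter M (e μ) n v) * e (Gf M ν n v) j := by
    intro j
    unfold Gf
    rw [e_nrm h0 ht2, div_eq_mul_inv, mul_assoc]
  simp_rw [this]
  rw [T_sub_w ht1]
  unfold Gf
  simp only [div_eq_mul_inv]
  ring

lemma Sd_ne_top (H : HMM M φ Q) (μ ν : ProbVec E) (c : ℝ≥0∞) (n : ℕ) (v : Fin n → F)
    (hv : ∀ k, Good M (v k)) (h0 : T (eIter M (e ν) n v) ≠ 0) : Sd M μ ν c n v ≠ ⊤ := by
  have ht1 : T (eIter M (e μ) n v) ≠ ⊤ := good_iter H.nn (by rw [T_e]; simp) hv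
  refine ENNReal.div_ne_top (ne_top_of_le_ne_top ht1 ?_) h0
  exact ENNReal.tsum_le_tsum fun j => tsub_le_self

lemma Sd_le (μ ν : ProbVec E) {c d : ℝ} (n : ℕ) (v : Fin n → F) (hc : 0 ≤ c) :
    Sd M μ ν (ENNReal.ofReal c) n v ≤ Sd M μ ν (ENNReal.ofReal d) n v + ENNReal.ofReal |c - d| := by
  have h1 : ENNReal.ofReal d ≤ ENNReal.ofReal |c - d| + ENNReal.ofReal c := by
    rw [← ENNReal.ofReal_add (abs_nonneg _) hc]
    exact ENNReal.ofReal_le_ofReal (by have := neg_abs_le (c - d); linarith)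
  have h2 : Dd M μ ν (ENNReal.ofReal c) n v ≤ Dd M μ ν (ENNReal.ofReal d) n v +
      ENNReal.ofReal |c - d| * T (eIter M (e ν) n v) := by
    unfold Dd
    rw [← T_smul]
    refine T_add_le fun j => ?_
    rw [tsub_le_iff_right, add_assoc, ← add_mul]
    refine le_trans (le_tsub_add (a := ENNReal.ofReal d * eIter M (e ν) n v j)) ?_
    gcongr
  unfold Sd
  calc _ ≤ _ := ENNReal.div_le_div_right h2 _
    _ ≤ _ := by
      rw [ENNReal.add_div]
      gcongr
      rw [mul_div_assoc]
      exact mul_le_of_le_one_right' ENNReal.div_self_le_one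

lemma Sd_lip (H : HMM M φ Q) (μ ν : ProbVec E) {c d : ℝ} (n : ℕ) (v : Fin n → F)
    (hv : ∀ k, Good M (v k)) (h0 : T (eIter M (e ν) n v) ≠ 0) (hc : 0 ≤ c) (hd : 0 ≤ d) :
    |(Sd M μ ν (ENNReal.ofReal c) n v).toReal - (Sd M μ ν (ENNReal.ofReal d) n v).toReal| ≤ |c - d| := by
  have h2 := Sd_le (M := M) μ ν (c := d) (d := c) n v hd
  rw [abs_sub_comm] at h2
  have := abs_toReal_sub_le (Sd_le (M := M) μ ν (c := c) (d := d) n v hc) h2 (Sd_ne_top H μ ν _ n v hv h0)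
    (Sd_ne_top H μ ν _ n v hv h0) ENNReal.ofReal_ne_top
  rwa [ENNReal.toReal_ofReal (abs_nonneg _)] at this

lemma Sd_c0 (μ ν : ProbVec E) (n : ℕ) (v : Fin n → F) :
    Sd M μ ν 0 n v = T (eIter M (e μ) n v) / T (eIter M (e ν) n v) := by
  simp [Sd, Dd]

theorem HMM.rtv_conv (H : HMM M φ Q) (μ ν : ProbVec E) : ∀ᵐ y ∂Q ν, ∃ l : ℝ,
    Tendsto (fun n => (T (eIter M (e μ) n (res n y)) / T (eIter M (e ν) n (res n y))).toReal *
      tvDist (Gf M μ n (res n y)) (Gf M ν n (res n y))) atTop (𝓝 l) := by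
  have hall : ∀ᵐ y ∂Q ν, ∀ q : ℚ, ∃ l : ℝ,
      Tendsto (fun n => (Sd M μ ν (ENNReal.ofReal q) n (res n y)).toReal) atTop (𝓝 l) := by
    rw [ae_all_iff]; exact fun q => H.Sd_conv μ ν _
  filter_upwards [hall, H.Sd_conv μ ν 0, H.ae_good ν, H.ae_pos ν] with y h1 h2 h3 h4
  obtain ⟨s, hs⟩ := h2
  obtain ⟨l, hl⟩ := lip_conv (h := fun n c => (Sd M μ ν (ENNReal.ofReal c) n (res n y)).toReal)
    (fun n c d hc hd => Sd_lip H μ ν n _ (h3 n) (h4 n) hc hd) (fun q _ => h1 q)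
    (fun n => ENNReal.toReal_nonneg) hs
  refine ⟨2 * l, ?_⟩
  refine (hl.const_mul 2).congr fun n => ?_
  have ht : Sd M μ ν 0 n (res n y) ≠ ⊤ := Sd_ne_top H μ ν _ n _ (h3 n) (h4 n)
  rw [ENNReal.ofReal_toReal ht, Sd_c0, Sd_self H μ ν n _ (h3 n) (h4 n), ENNReal.toReal_mul,
    ENNReal.toReal_ofReal (by have := tv_nonneg (Gf M μ n (res n y)) (Gf M ν n (res n y)); linarith)]
  ring

end FS

set_option linter.unusedSectionVars false

namespace FS
variable {E F : Type*}
variable [Countable E] [Nonempty E] [MeasurableSpace F] {M : F → E → E → ℝ}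
  {φ : Measure F} {Q : ProbVec E → Measure (ℕ → F)} [SigmaFinite φ]

lemma ces_mono {a b : ℕ → ℝ} (h : ∀ n, a n ≤ b n) (N : ℕ) : ces a N ≤ ces b N := by
  unfold ces
  exact mul_le_mul_of_nonneg_left (Finset.sum_le_sum fun n _ => h n) (by positivity)

lemma ces_const (c : ℝ) (N : ℕ) : ces (fun _ => c) N = c := by
  unfold ces
  rw [Finset.sum_const, Finset.card_range, nsmul_eq_mul]
  push_cast
  field_simp

lemma ces_add (a b : ℕ → ℝ) (N : ℕ) : ces (fun n => a n + b n) N = ces a N + ces b N := by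
  unfold ces
  rw [Finset.sum_add_distrib, mul_add]

lemma ces_sub (a b : ℕ → ℝ) (N : ℕ) : ces (fun n => a n - b n) N = ces a N - ces b N := by
  unfold ces
  rw [Finset.sum_sub_distrib, mul_sub]

lemma ces_mul (c : ℝ) (a : ℕ → ℝ) (N : ℕ) : ces (fun n => c * a n) N = c * ces a N := by
  unfold ces
  rw [← Finset.mul_sum]; ring

lemma ces_sum {ι : Type*} (J : Finset ι) (a : ι → ℕ → ℝ) (N : ℕ) :
    ces (fun n => ∑ j ∈ J, a j n) N = ∑ j ∈ J, ces (a j) N := by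
  unfold ces
  rw [Finset.sum_comm, Finset.mul_sum]

lemma ces_nonneg {a : ℕ → ℝ} (h : ∀ n, 0 ≤ a n) (N : ℕ) : 0 ≤ ces a N := by
  rw [← ces_const 0 N]; exact ces_mono h N

lemma ces_abs {a : ℕ → ℝ} {C : ℝ} (h : ∀ n, |a n| ≤ C) (N : ℕ) : |ces a N| ≤ C := by
  rw [abs_le]
  constructor
  · rw [← ces_const (-C) N]; exact ces_mono (fun n => (abs_le.1 (h n)).1) N
  · rw [← ces_const C N]; exact ces_mono (fun n => (abs_le.1 (h n)).2) N

lemma ces_tsum_tendsto (p : ProbVec E) {a : E → ℕ → ℝ} {C : ℝ} (h : ∀ k n, |a k n| ≤ C)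
    {L : E → ℝ} (hL : ∀ k, Tendsto (ces (a k)) UU (𝓝 (L k))) :
    Tendsto (ces fun n => ∑' k, p.1 k * a k n) UU (𝓝 (∑' k, p.1 k * L k)) := by
  have hs : ∀ n, Summable fun k => p.1 k * a k n := fun n => by
    refine Summable.of_norm_bounded (g := fun k => p.1 k * C) (p.2.2.summable.mul_right C) fun k => ?_
    rw [norm_mul, Real.norm_of_nonneg (p.2.1 k)]
    exact mul_le_mul_of_nonneg_left (h k n) (p.2.1 k)
  have h1 : ∀ N, (∑' k, p.1 k * ces (a k) N) = ces (fun n => ∑' k, p.1 k * a k n) N := by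
    intro N
    unfold ces
    rw [← Summable.tsum_finsetSum fun n _ => hs n, ← tsum_mul_left]
    refine tsum_congr fun k => ?_
    rw [← Finset.mul_sum]; ring
  refine Tendsto.congr h1 ?_
  refine tendsto_tsum_of_dominated_convergence (bound := fun k => p.1 k * C)
    (p.2.2.summable.mul_right C) (fun k => (hL k).const_mul _) (Eventually.of_forall fun N k => ?_)
  rw [norm_mul, Real.norm_of_nonneg (p.2.1 k)]
  exact mul_le_mul_of_nonneg_left (ces_abs (h k) N) (p.2.1 k)

lemma ces_freq {a : ℕ → ℝ} (h : Tendsto (ces a) UU (𝓝 0)) {ε : ℝ} (hε : 0 < ε) :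
    ∃ᶠ n in atTop, a n ≤ ε := by
  intro hc
  simp only [not_le] at hc
  have h1 : Tendsto (fun n => min (a n) ε) atTop (𝓝 ε) := by
    refine tendsto_const_nhds.congr' ?_
    filter_upwards [hc] with n hn
    rw [min_eq_right hn.le]
  have h2 := (h1.cesaro).comp (tendsto_add_atTop_nat 1)
  have h3 : Tendsto (ces fun n => min (a n) ε) UU (𝓝 ε) := by
    refine (h2.mono_left UU_le).congr fun N => ?_
    simp [ces]
  have h4 : ε ≤ 0 := le_of_tendsto_of_tendsto' h3 h fun N => ces_mono (fun n => min_le_left _ _) N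
  linarith

noncomputable def D2 (M : F → E → E → ℝ) (Q : ProbVec E → Measure (ℕ → F)) (lam : ProbVec E) (k j : E)
    (n : ℕ) : ℝ≥0∞ :=
  ∫⁻ y, dif (Gf M (dir k) n (res n y)) (Gf M lam n (res n y)) j ^ 2 ∂Q (dir k)

lemma sq_id (p q : ProbVec E) (j : E) :
    dif p q j ^ 2 + 2 * (e p j * e q j) = e p j ^ 2 + e q j ^ 2 := by
  unfold dif e
  have hp := p.2.1 j
  have hq := q.2.1 j
  rw [← ENNReal.ofReal_pow (abs_nonneg _), ← ENNReal.ofReal_pow hp, ← ENNReal.ofReal_pow hq,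
    ← ENNReal.ofReal_mul hp, ← ENNReal.ofReal_add (by positivity) (by positivity),
    show (2:ℝ≥0∞) = ENNReal.ofReal 2 by simp, ← ENNReal.ofReal_mul (by norm_num),
    ← ENNReal.ofReal_add (by positivity) (by positivity), sq_abs]
  congr 1; ring

lemma measurable_dif {α : Type*} [MeasurableSpace α] {f g : α → ProbVec E} (hf : Measurable f)
    (hg : Measurable g) (j : E) : Measurable fun a => dif (f a) (g a) j := by
  have h : ∀ {f : α → ProbVec E}, Measurable f → Measurable fun a => (f a).1 j := fun hf =>
    (measurable_pi_apply j).comp (measurable_subtype_coe.comp hf)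
  exact ((h hf).sub (h hg)).abs.ennreal_ofReal

lemma measurable_eG (H : HMM M φ Q) (μ : ProbVec E) (n : ℕ) (j : E) :
    Measurable fun v => e (Gf M μ n v) j := (measurable_ej j).comp (measurable_Gf H μ n)

lemma measurable_eGr (H : HMM M φ Q) (μ : ProbVec E) (n : ℕ) (j : E) :
    Measurable fun y : ℕ → F => e (Gf M μ n (res n y)) j :=
  (measurable_eG H μ n j).comp (measurable_res n)

lemma HMM.cross (H : HMM M φ Q) (lam : ProbVec E) (n : ℕ) (j : E) :
    ∑' k, e lam k * ∫⁻ y, e (Gf M (dir k) n (res n y)) j * e (Gf M lam n (res n y)) j ∂Q (dir k) =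
      ∫⁻ y, e (Gf M lam n (res n y)) j ^ 2 ∂Q lam := by
  have hm := measurable_eG H lam n j
  simp_rw [sq]
  rw [H.lint_coord lam n j (g := fun v => e (Gf M lam n v) j) hm]
  simp_rw [H.lint_coord (dir _) n j (g := fun v => e (Gf M lam n v) j) hm]
  have hm2 : ∀ k, Measurable fun v => eIter M (e (dir k)) n v j * e (Gf M lam n v) j := fun k =>
    ((measurable_pi_apply j).comp (measurable_eIter H.meas _ n)).mul hm
  simp_rw [← lintegral_const_mul _ (hm2 _)]
  rw [← lintegral_tsum fun k => ((hm2 k).const_mul _).aemeasurable]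
  refine lintegral_congr fun v => ?_
  rw [eIter_decomp M lam n v j, ← ENNReal.tsum_mul_right]
  simp_rw [mul_assoc]

lemma HMM.sq_le_one (H : HMM M φ Q) (μ lam : ProbVec E) (n : ℕ) (j : E) :
    ∫⁻ y, e (Gf M lam n (res n y)) j ^ 2 ∂Q μ ≤ 1 := by
  have := H.prob μ
  calc _ ≤ ∫⁻ y, 1 ∂Q μ := lintegral_mono fun y => pow_le_one' (e_le_one _ _) 2
    _ = 1 := by simp

lemma HMM.var_id (H : HMM M φ Q) (lam : ProbVec E) (n : ℕ) (j : E) :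
    ∑' k, e lam k * D2 M Q lam k j n + ∫⁻ y, e (Gf M lam n (res n y)) j ^ 2 ∂Q lam =
      ∑' k, e lam k * ∫⁻ y, e (Gf M (dir k) n (res n y)) j ^ 2 ∂Q (dir k) := by
  have hB : ∫⁻ y, e (Gf M lam n (res n y)) j ^ 2 ∂Q lam ≠ ⊤ :=
    ne_top_of_le_ne_top one_ne_top (H.sq_le_one lam lam n j)
  have hd : ∀ k, Measurable fun y : ℕ → F =>
      dif (Gf M (dir k) n (res n y)) (Gf M lam n (res n y)) j ^ 2 := fun k =>
    (measurable_dif (measurable_Gf_res H _ n) (measurable_Gf_res H _ n) j).pow_const 2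
  have hk : ∀ k, D2 M Q lam k j n +
      2 * ∫⁻ y, e (Gf M (dir k) n (res n y)) j * e (Gf M lam n (res n y)) j ∂Q (dir k) =
      ∫⁻ y, e (Gf M (dir k) n (res n y)) j ^ 2 ∂Q (dir k) +
        ∫⁻ y, e (Gf M lam n (res n y)) j ^ 2 ∂Q (dir k) := by
    intro k
    unfold D2
    have hab : Measurable fun y : ℕ → F => e (Gf M (dir k) n (res n y)) j * e (Gf M lam n (res n y)) j :=
      (measurable_eGr H (dir k) n j).mul (measurable_eGr H lam n j)
    have hsq : Measurable fun y : ℕ → F => e (Gf M (dir k) n (res n y)) j ^ 2 :=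
      (measurable_eGr H (dir k) n j).pow_const 2
    rw [← lintegral_const_mul _ hab, ← lintegral_add_left (hd k),
      ← lintegral_add_left hsq]
    exact lintegral_congr fun y => sq_id _ _ j
  have hsum : ∑' k, e lam k * (D2 M Q lam k j n +
      2 * ∫⁻ y, e (Gf M (dir k) n (res n y)) j * e (Gf M lam n (res n y)) j ∂Q (dir k)) =
      ∑' k, e lam k * (∫⁻ y, e (Gf M (dir k) n (res n y)) j ^ 2 ∂Q (dir k) +
        ∫⁻ y, e (Gf M lam n (res n y)) j ^ 2 ∂Q (dir k)) := by simp_rw [hk]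
  simp_rw [mul_add, ENNReal.tsum_add, mul_left_comm _ (2:ℝ≥0∞), ENNReal.tsum_mul_left] at hsum
  rw [H.cross lam n j, ← H.lint_mix (g := fun y => e (Gf M lam n (res n y)) j ^ 2) lam, two_mul,
    ← add_assoc] at hsum
  exact (ENNReal.add_left_inj hB).1 hsum

end FS

set_option linter.unusedSectionVars false

namespace FS
variable {E F : Type*}
variable [Countable E] [Nonempty E] [MeasurableSpace F] {M : F → E → E → ℝ}
  {φ : Measure F} {Q : ProbVec E → Measure (ℕ → F)} [SigmaFinite φ]

lemma e_ne_zero {lam : ProbVec E} {k : E} (h : lam.1 k ≠ 0) : e lam k ≠ 0 := by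
  unfold e
  rw [Ne, ENNReal.ofReal_eq_zero, not_le]
  exact lt_of_le_of_ne (lam.2.1 k) h.symm

lemma dir_le {lam : ProbVec E} {k : E} (h : lam.1 k ≠ 0) (j : E) :
    e (dir k) j ≤ (e lam k)⁻¹ * e lam j := by
  by_cases hj : j = k
  · subst hj
    rw [ENNReal.inv_mul_cancel (e_ne_zero h) (e_ne_top _ _)]
    exact e_le_one _ _
  · simp [e, dir, hj]

lemma coord_mem (p : ProbVec E) (j : E) : 0 ≤ p.1 j ∧ p.1 j ≤ 1 := by
  refine ⟨p.2.1 j, ?_⟩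
  have := e_le_one p j
  unfold e at this
  simpa using this

lemma sq_abs_le (j : E) (p : ProbVec E) : |p.1 j ^ 2| ≤ 1 := by
  rw [abs_of_nonneg (sq_nonneg _)]
  exact pow_le_one₀ (coord_mem p j).1 (coord_mem p j).2

lemma sq_bc (j : E) : IsBddCont fun p : ProbVec E => p.1 j ^ 2 :=
  ⟨((continuous_apply j).comp continuous_subtype_val).pow 2, 1, sq_abs_le j⟩

lemma HMM.Av_sq (H : HMM M φ Q) (μ : ProbVec E) (n : ℕ) (j : E) :
    Av M Q μ (fun p => p.1 j ^ 2) n = (∫⁻ y, e (Gf M μ n (res n y)) j ^ 2 ∂Q μ).toReal := by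
  unfold Av
  rw [integral_eq_lintegral_of_nonneg_ae (Eventually.of_forall fun y => sq_nonneg _)]
  · congr 1
    refine lintegral_congr fun y => ?_
    unfold e
    rw [ENNReal.ofReal_pow (coord_mem _ j).1]
  · exact ((((continuous_apply j).measurable.comp measurable_subtype_coe).comp
      (measurable_Gf_res H μ n)).pow_const 2).aestronglyMeasurable

lemma dif_le_one (p q : ProbVec E) (j : E) : dif p q j ≤ 1 := by
  unfold dif
  rw [ENNReal.ofReal_le_one, abs_le]
  have h1 := coord_mem p j
  have h2 := coord_mem q j
  constructor <;> linarith

lemma HMM.D2_le (H : HMM M φ Q) (lam : ProbVec E) (k j : E) (n : ℕ) : D2 M Q lam k j n ≤ 1 := by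
  have := H.prob (dir k)
  calc _ ≤ ∫⁻ y, 1 ∂Q (dir k) := lintegral_mono fun y => pow_le_one' (dif_le_one _ _ _) 2
    _ = 1 := by simp

theorem HMM.D2_ces (H : HMM M φ Q) {lam : ProbVec E} (hl : Inv M φ lam) (hp : ∀ j, lam.1 j ≠ 0)
    (hu : ∃! 𝕄 : ProbabilityMeasure (ProbVec E), IsPiInvariant M φ 𝕄) (i j : E) :
    Tendsto (ces fun n => (D2 M Q lam i j n).toReal) UU (𝓝 0) := by
  obtain ⟨𝕄, h𝕄, hun⟩ := hu
  let f : ProbVec E → ℝ := fun p => p.1 j ^ 2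
  have hk : ∀ k, Tendsto (ces (Av M Q (dir k) f)) UU (𝓝 (∫ p, f p ∂(𝕄 : Measure (ProbVec E)))) := by
    intro k
    obtain ⟨m, hm, hm2⟩ := H.KB hl (C := (e lam k)⁻¹) (ENNReal.inv_ne_top.2 (e_ne_zero (hp k)))
      (dir_le (hp k))
    have : m = 𝕄 := hun m hm
    subst this
    exact hm2 f (sq_bc j)
  have hlam : Tendsto (ces (Av M Q lam f)) UU (𝓝 (∫ p, f p ∂(𝕄 : Measure (ProbVec E)))) := by
    obtain ⟨m, hm, hm2⟩ := H.KB hl (μ := lam) (C := 1) one_ne_top (fun j => by rw [one_mul])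
    have : m = 𝕄 := hun m hm
    subst this
    exact hm2 f (sq_bc j)
  have hA := ces_tsum_tendsto lam (a := fun k => Av M Q (dir k) f)
    (fun k n => H.Av_le (dir k) (sq_abs_le j) n) hk
  rw [tsum_mul_right, lam.2.2.tsum_eq, one_mul] at hA
  have hpt : ∀ n, lam.1 i * (D2 M Q lam i j n).toReal ≤
      (∑' k, lam.1 k * Av M Q (dir k) f n) - Av M Q lam f n := by
    intro n
    have h1 := H.var_id lam n j
    have hne : ∀ k, e lam k * ∫⁻ y, e (Gf M (dir k) n (res n y)) j ^ 2 ∂Q (dir k) ≠ ⊤ := fun k =>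
      ENNReal.mul_ne_top (e_ne_top _ _) (ne_top_of_le_ne_top one_ne_top (H.sq_le_one _ _ n j))
    have hA1 : (∑' k, lam.1 k * Av M Q (dir k) f n) =
        (∑' k, e lam k * ∫⁻ y, e (Gf M (dir k) n (res n y)) j ^ 2 ∂Q (dir k)).toReal := by
      rw [ENNReal.tsum_toReal_eq hne]
      refine tsum_congr fun k => ?_
      rw [ENNReal.toReal_mul, e_toReal, H.Av_sq]
    have hAf : ∑' k, e lam k * ∫⁻ y, e (Gf M (dir k) n (res n y)) j ^ 2 ∂Q (dir k) ≠ ⊤ := by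
      refine ne_top_of_le_ne_top (b := T (e lam)) (by rw [T_e]; exact one_ne_top) ?_
      exact ENNReal.tsum_le_tsum fun k => mul_le_of_le_one_right' (H.sq_le_one _ _ n j)
    have h2 : e lam i * D2 M Q lam i j n + ∫⁻ y, e (Gf M lam n (res n y)) j ^ 2 ∂Q lam ≤
        ∑' k, e lam k * ∫⁻ y, e (Gf M (dir k) n (res n y)) j ^ 2 ∂Q (dir k) := by
      rw [← h1]
      gcongr
      exact ENNReal.le_tsum (f := fun k => e lam k * D2 M Q lam k j n) i
    have h3 := ENNReal.toReal_mono hAf h2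
    rw [ENNReal.toReal_add (ENNReal.mul_ne_top (e_ne_top _ _) (ne_top_of_le_ne_top one_ne_top (H.D2_le _ _ _ _)))
      (ne_top_of_le_ne_top one_ne_top (H.sq_le_one _ _ n j)), ENNReal.toReal_mul, e_toReal,
      ← H.Av_sq, ← hA1] at h3
    change _ + Av M Q lam f n ≤ _ at h3
    linarith
  have h5 : Tendsto (fun N => lam.1 i * ces (fun n => (D2 M Q lam i j n).toReal) N) UU (𝓝 0) := by
    have hd := hA.sub hlam
    rw [sub_self] at hd
    refine squeeze_zero (fun N => mul_nonneg (lam.2.1 i) (ces_nonneg (fun n => toReal_nonneg) N))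
      (fun N => ?_) hd
    rw [← ces_mul, ← ces_sub]
    exact ces_mono hpt N
  have h6 := h5.const_mul (lam.1 i)⁻¹
  simpa [← mul_assoc, inv_mul_cancel₀ (hp i)] using h6

noncomputable def tvi (M : F → E → E → ℝ) (Q : ProbVec E → Measure (ℕ → F)) (lam μ : ProbVec E)
    (n : ℕ) : ℝ≥0∞ :=
  ∫⁻ y, ENNReal.ofReal (tvDist (Gf M μ n (res n y)) (Gf M lam n (res n y)) / 2) ∂Q μ

lemma HMM.tvi_le (H : HMM M φ Q) (lam μ : ProbVec E) (n : ℕ) : tvi M Q lam μ n ≤ 1 := by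
  have := H.prob μ
  calc _ ≤ ∫⁻ y, 1 ∂Q μ := lintegral_mono fun y => by
        rw [ENNReal.ofReal_le_one]
        have := tv_le (Gf M μ n (res n y)) (Gf M lam n (res n y))
        linarith
    _ = 1 := by simp

lemma measurable_tvG (H : HMM M φ Q) (lam μ : ProbVec E) (n : ℕ) :
    Measurable fun v => ENNReal.ofReal (tvDist (Gf M μ n v) (Gf M lam n v) / 2) :=
  ((measurable_tv (measurable_Gf H μ n) (measurable_Gf H lam n)).div_const 2).ennreal_ofReal

lemma tsum_sub_le {ι : Type*} (a b : ι → ℝ≥0∞) : (∑' i, a i) - ∑' i, b i ≤ ∑' i, (a i - b i) := by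
  rw [tsub_le_iff_right, ← ENNReal.tsum_add]
  exact ENNReal.tsum_le_tsum fun i => le_tsub_add

lemma HMM.tvi_convex (H : HMM M φ Q) (lam μ : ProbVec E) (n : ℕ) :
    tvi M Q lam μ n ≤ ∑' i, e μ i * tvi M Q lam (dir i) n := by
  unfold tvi
  rw [H.lint μ n (g := fun v => ENNReal.ofReal (tvDist (Gf M μ n v) (Gf M lam n v) / 2))
    (measurable_tvG H lam μ n)]
  simp_rw [fun i => H.lint (dir i) n
    (g := fun v => ENNReal.ofReal (tvDist (Gf M (dir i) n v) (Gf M lam n v) / 2))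
    (measurable_tvG H lam (dir i) n)]
  have hm : ∀ i, Measurable fun v => T (eIter M (e (dir i)) n v) *
      ENNReal.ofReal (tvDist (Gf M (dir i) n v) (Gf M lam n v) / 2) := fun i =>
    (measurable_Titer H.meas _ _).mul (measurable_tvG H lam (dir i) n)
  simp_rw [← lintegral_const_mul _ (hm _)]
  rw [← lintegral_tsum fun i => ((hm i).const_mul _).aemeasurable]
  refine lintegral_mono_ae ?_
  filter_upwards [FS.ae_good H.good n] with v hv
  have ht : ∀ ν : ProbVec E, T (eIter M (e ν) n v) ≠ ⊤ := fun ν => good_iter H.nn (by rw [T_e]; simp) hv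
  unfold Gf
  simp_rw [fun i => (T_sub_w (ht (dir i)) (nrm (eIter M (e lam) n v))).symm]
  rw [← T_sub_w (ht μ)]
  simp_rw [← T_smul]
  unfold T
  rw [ENNReal.tsum_comm]
  refine ENNReal.tsum_le_tsum fun j => ?_
  rw [eIter_decomp M μ n v j]
  have h1 := T_eIter_decomp M μ n v
  unfold T at h1
  rw [h1, ← ENNReal.tsum_mul_right]
  refine (tsum_sub_le _ _).trans (ENNReal.tsum_le_tsum fun i => ?_)
  rw [ENNReal.mul_sub (fun _ _ => e_ne_top _ _), mul_assoc]

lemma split_J (f : E → ℝ≥0∞) (J : Finset E) :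
    ∑ j ∈ J, f j + ∑' j : {j // j ∉ J}, f j = ∑' j, f j := by
  rw [← Finset.tsum_subtype' J f]
  exact Summable.tsum_add_tsum_compl (s := (J : Set E)) ENNReal.summable ENNReal.summable

lemma HMM.tvi_bound (H : HMM M φ Q) {lam : ProbVec E} (hl : Inv M φ lam) {i : E} (hp : lam.1 i ≠ 0)
    (J : Finset E) {η : ℝ} (hη : 0 < η) (n : ℕ) :
    tvi M Q lam (dir i) n ≤ ∑ j ∈ J, (ENNReal.ofReal η + ENNReal.ofReal η⁻¹ * D2 M Q lam i j n) +
      (e lam i)⁻¹ * ∑' j : {j // j ∉ J}, e lam j := by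
  have := H.prob (dir i)
  have hpt : ∀ p q : ProbVec E, ENNReal.ofReal (tvDist p q / 2) ≤
      ∑ j ∈ J, (ENNReal.ofReal η + ENNReal.ofReal η⁻¹ * dif p q j ^ 2) + ∑' j : {j // j ∉ J}, e p j := by
    intro p q
    rw [← T_sub]
    unfold T
    rw [← split_J _ J]
    refine add_le_add (Finset.sum_le_sum fun j _ => ?_) (ENNReal.tsum_le_tsum fun j => tsub_le_self)
    have h1 : e p j - e q j ≤ dif p q j := by
      rw [tsub_le_iff_left]; exact e_le_dif p q j
    refine h1.trans ?_
    unfold dif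
    rw [← ENNReal.ofReal_pow (abs_nonneg _), ← ENNReal.ofReal_mul (by positivity),
      ← ENNReal.ofReal_add hη.le (by positivity)]
    refine ENNReal.ofReal_le_ofReal ?_
    set d := |p.1 j - q.1 j|
    have : η + η⁻¹ * d ^ 2 - d = η⁻¹ * ((d - η/2)^2 + 3/4 * η^2) := by field_simp; ring
    have h3 : 0 ≤ η⁻¹ * ((d - η/2)^2 + 3/4 * η^2) := by positivity
    linarith
  have hd : ∀ j, Measurable fun y : ℕ → F =>
      dif (Gf M (dir i) n (res n y)) (Gf M lam n (res n y)) j ^ 2 := fun j =>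
    (measurable_dif (measurable_Gf_res H _ n) (measurable_Gf_res H _ n) j).pow_const 2
  calc _ ≤ ∫⁻ y, (∑ j ∈ J, (ENNReal.ofReal η + ENNReal.ofReal η⁻¹ *
          dif (Gf M (dir i) n (res n y)) (Gf M lam n (res n y)) j ^ 2) +
          ∑' j : {j // j ∉ J}, e (Gf M (dir i) n (res n y)) j) ∂Q (dir i) :=
        lintegral_mono fun y => hpt _ _
    _ = ∑ j ∈ J, (ENNReal.ofReal η + ENNReal.ofReal η⁻¹ * D2 M Q lam i j n) +
          ∑' j : {j // j ∉ J}, ∫⁻ y, e (Gf M (dir i) n (res n y)) j ∂Q (dir i) := by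
        have hj : ∀ j : {j // j ∉ J}, Measurable fun y : ℕ → F =>
            e (Gf M (dir i) n (res n y)) (j : E) := fun j => measurable_eGr H (dir i) n j
        have hts : Measurable fun y : ℕ → F =>
            ∑' j : {j // j ∉ J}, e (Gf M (dir i) n (res n y)) (j : E) := Measurable.tsum hj
        have hs : ∀ j, Measurable fun y : ℕ → F => ENNReal.ofReal η + ENNReal.ofReal η⁻¹ *
            dif (Gf M (dir i) n (res n y)) (Gf M lam n (res n y)) j ^ 2 := fun j =>
          measurable_const.add ((hd j).const_mul _)
        rw [lintegral_add_right _ hts, lintegral_tsum fun j => (hj j).aemeasurable,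
          lintegral_finsetSum _ fun j _ => hs j]
        congr 1
        refine Finset.sum_congr rfl fun j _ => ?_
        rw [lintegral_add_left measurable_const, lintegral_const_mul _ (hd j)]
        simp [D2]
    _ ≤ _ := by
        gcongr
        rw [← ENNReal.tsum_mul_left]
        exact ENNReal.tsum_le_tsum fun j => H.mean_le hl (dir_le hp) n j

theorem HMM.tvi_ces_dir (H : HMM M φ Q) {lam : ProbVec E} (hl : Inv M φ lam) (hp : ∀ j, lam.1 j ≠ 0)
    (hu : ∃! 𝕄 : ProbabilityMeasure (ProbVec E), IsPiInvariant M φ 𝕄) (i : E) :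
    Tendsto (ces fun n => (tvi M Q lam (dir i) n).toReal) UU (𝓝 0) := by
  have h0 : ∀ N, 0 ≤ ces (fun n => (tvi M Q lam (dir i) n).toReal) N :=
    ces_nonneg fun n => toReal_nonneg
  rw [Metric.tendsto_nhds]
  intro ε hε
  have htail : Tendsto (fun J : Finset E => (e lam i)⁻¹ * ∑' j : {j // j ∉ J}, e lam j) atTop (𝓝 0) := by
    have h := ENNReal.tendsto_tsum_compl_atTop_zero (f := e lam) (by
      have := T_e lam; unfold T at this; rw [this]; exact one_ne_top)
    have h2 := ENNReal.Tendsto.const_mul (a := (e lam i)⁻¹) h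
      (Or.inr (ENNReal.inv_ne_top.2 (e_ne_zero (hp i))))
    simpa using h2
  obtain ⟨J, hJ⟩ := (htail.eventually (gt_mem_nhds
    (show (0:ℝ≥0∞) < ENNReal.ofReal (ε/3) by simpa using hε))).exists
  set η : ℝ := ε / (3 * (J.card + 1)) with hη
  have hη0 : 0 < η := by positivity
  have hb : ∀ n, (tvi M Q lam (dir i) n).toReal ≤
      (J.card * η + ε/3) + η⁻¹ * ∑ j ∈ J, (D2 M Q lam i j n).toReal := by
    intro n
    have hD : ∀ j, D2 M Q lam i j n ≠ ⊤ := fun j => ne_top_of_le_ne_top one_ne_top (H.D2_le _ _ _ _)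
    have h1 : tvi M Q lam (dir i) n ≤
        ENNReal.ofReal ((J.card * η + ε/3) + η⁻¹ * ∑ j ∈ J, (D2 M Q lam i j n).toReal) := by
      refine ((H.tvi_bound hl (hp i) J hη0 n).trans (add_le_add le_rfl hJ.le)).trans (le_of_eq ?_)
      have : ∀ j, ENNReal.ofReal η + ENNReal.ofReal η⁻¹ * D2 M Q lam i j n =
          ENNReal.ofReal (η + η⁻¹ * (D2 M Q lam i j n).toReal) := by
        intro j
        rw [ENNReal.ofReal_add hη0.le (by positivity), ENNReal.ofReal_mul (by positivity),
          ENNReal.ofReal_toReal (hD j)]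
      simp_rw [this]
      rw [← ENNReal.ofReal_sum_of_nonneg fun j _ => by positivity,
        ← ENNReal.ofReal_add (Finset.sum_nonneg fun j _ => by positivity) (by positivity)]
      congr 1
      rw [Finset.sum_add_distrib, Finset.sum_const, nsmul_eq_mul, ← Finset.mul_sum]
      ring
    have h2 := ENNReal.toReal_mono ENNReal.ofReal_ne_top h1
    rwa [ENNReal.toReal_ofReal (add_nonneg (by positivity) (by positivity))] at h2
  have hlim : Tendsto (fun N => η⁻¹ * ∑ j ∈ J, ces (fun n => (D2 M Q lam i j n).toReal) N) UU (𝓝 0) := by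
    have := (tendsto_finsetSum J fun j _ => H.D2_ces hl hp hu i j).const_mul η⁻¹
    simpa using this
  filter_upwards [hlim.eventually (gt_mem_nhds (show (0:ℝ) < ε/3 by linarith))] with N hN
  rw [Real.dist_eq, sub_zero, abs_of_nonneg (h0 N)]
  have h3 := ces_mono hb N
  rw [ces_add, ces_const, ces_mul, ces_sum] at h3
  have h4 : J.card * η ≤ ε / 3 := by
    rw [hη, mul_div_assoc', div_le_div_iff₀ (by positivity) (by norm_num)]
    nlinarith
  linarith

theorem HMM.tvi_ces (H : HMM M φ Q) {lam : ProbVec E} (hl : Inv M φ lam) (hp : ∀ j, lam.1 j ≠ 0)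
    (hu : ∃! 𝕄 : ProbabilityMeasure (ProbVec E), IsPiInvariant M φ 𝕄) (μ : ProbVec E) :
    Tendsto (ces fun n => (tvi M Q lam μ n).toReal) UU (𝓝 0) := by
  have hne : ∀ μ n, tvi M Q lam μ n ≠ ⊤ := fun μ n => ne_top_of_le_ne_top one_ne_top (H.tvi_le _ _ _)
  have h := ces_tsum_tendsto μ (a := fun i n => (tvi M Q lam (dir i) n).toReal) (C := 1)
    (fun k n => by
      rw [abs_of_nonneg toReal_nonneg]
      simpa using ENNReal.toReal_mono one_ne_top (H.tvi_le lam (dir k) n))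
    (L := fun _ => 0) (fun i => H.tvi_ces_dir hl hp hu i)
  simp only [mul_zero, tsum_zero] at h
  refine squeeze_zero (ces_nonneg fun n => toReal_nonneg) (fun N => ces_mono (fun n => ?_) N) h
  have h1 := H.tvi_convex lam μ n
  have hf : ∑' i, e μ i * tvi M Q lam (dir i) n ≠ ⊤ := by
    refine ne_top_of_le_ne_top (b := T (e μ)) (by rw [T_e]; exact one_ne_top) ?_
    exact ENNReal.tsum_le_tsum fun k => mul_le_of_le_one_right' (H.tvi_le _ _ _)
  have h2 := ENNReal.toReal_mono hf h1
  rw [ENNReal.tsum_toReal_eq fun i => ENNReal.mul_ne_top (e_ne_top _ _) (hne _ _)] at h2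
  simpa only [ENNReal.toReal_mul, e_toReal] using h2

end FS

set_option linter.unusedSectionVars false

namespace FS
variable {E F : Type*}
variable [Countable E] [Nonempty E] [MeasurableSpace F] {M : F → E → E → ℝ}
  {φ : Measure F} {Q : ProbVec E → Measure (ℕ → F)} [SigmaFinite φ]

noncomputable def Gn (M : F → E → E → ℝ) (lam μ : ProbVec E) (n : ℕ) (v : Fin n → F) : ℝ≥0∞ :=
  T (eIter M (e μ) n v) / T (eIter M (e lam) n v) *
    ENNReal.ofReal (tvDist (Gf M μ n v) (Gf M lam n v) / 2)

lemma measurable_Gn (H : HMM M φ Q) (lam μ : ProbVec E) (n : ℕ) : Measurable (Gn M lam μ n) :=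
  ((measurable_Titer H.meas _ _).div (measurable_Titer H.meas _ _)).mul (measurable_tvG H lam μ n)

lemma HMM.Gn_int (H : HMM M φ Q) (lam μ : ProbVec E) (n : ℕ) :
    ∫⁻ y, Gn M lam μ n (res n y) ∂Q lam ≤ tvi M Q lam μ n := by
  unfold tvi
  rw [H.lint lam n (g := Gn M lam μ n) (measurable_Gn H lam μ n),
    H.lint μ n (g := fun v => ENNReal.ofReal (tvDist (Gf M μ n v) (Gf M lam n v) / 2))
    (measurable_tvG H lam μ n)]
  refine lintegral_mono fun v => ?_
  unfold Gn
  rw [← mul_assoc]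
  gcongr
  exact ENNReal.mul_div_le

theorem HMM.dir2 (H : HMM M φ Q) {lam : ProbVec E} (hl : Inv M φ lam) (hp : ∀ j, lam.1 j ≠ 0)
    (hu : ∃! 𝕄 : ProbabilityMeasure (ProbVec E), IsPiInvariant M φ 𝕄) (μ : ProbVec E) :
    ∀ᵐ y ∂Q μ, Tendsto (fun n => tvDist (Gf M μ n (res n y)) (Gf M lam n (res n y))) atTop (𝓝 0) := by
  have hac : Q μ ≪ Q lam := H.ac fun i hi => absurd hi (hp i)
  have hmG : ∀ n, Measurable fun y : ℕ → F => Gn M lam μ n (res n y) := fun n =>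
    (measurable_Gn H lam μ n).comp (measurable_res n)
  have hlim0 : liminf (fun n => ∫⁻ y, Gn M lam μ n (res n y) ∂Q lam) atTop ≤ 0 := by
    refine le_of_forall_gt fun b hb => ?_
    obtain ⟨ε, hε0, hε⟩ := ENNReal.lt_iff_exists_real_btwn.1 hb
    have hε1 : 0 < ε := by simpa using hε.1
    refine lt_of_le_of_lt ?_ hε.2
    refine liminf_le_of_frequently_le ?_
    refine (ces_freq (H.tvi_ces hl hp hu μ) hε1).mono fun n hn => ?_
    refine (H.Gn_int lam μ n).trans ?_
    rw [← ENNReal.ofReal_toReal (ne_top_of_le_ne_top one_ne_top (H.tvi_le lam μ n))]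
    exact ENNReal.ofReal_le_ofReal hn
  have hF := (lintegral_liminf_le (μ := Q lam) hmG).trans hlim0
  have hz : ∀ᵐ y ∂Q lam, liminf (fun n => Gn M lam μ n (res n y)) atTop = 0 := by
    have h1 := (lintegral_eq_zero_iff (Measurable.liminf hmG)).1 (le_antisymm hF zero_le)
    exact h1
  have hr0 : ∀ᵐ y ∂Q lam, Tendsto (fun n =>
      (T (eIter M (e μ) n (res n y)) / T (eIter M (e lam) n (res n y))).toReal *
      tvDist (Gf M μ n (res n y)) (Gf M lam n (res n y))) atTop (𝓝 0) := by
    filter_upwards [hz, H.rtv_conv μ lam, H.ae_good lam, H.ae_pos lam] with y h1 h2 h3 h4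
    obtain ⟨l, hl⟩ := h2
    have h5 : Tendsto (fun n => Gn M lam μ n (res n y)) atTop (𝓝 (ENNReal.ofReal (l / 2))) := by
      refine (ENNReal.tendsto_ofReal (hl.div_const 2)).congr fun n => ?_
      have ht : T (eIter M (e μ) n (res n y)) ≠ ⊤ := good_iter H.nn (by rw [T_e]; simp) (h3 n)
      unfold Gn
      rw [mul_div_assoc, ENNReal.ofReal_mul toReal_nonneg,
        ENNReal.ofReal_toReal (ENNReal.div_ne_top ht (h4 n))]
    rw [h5.liminf_eq, ENNReal.ofReal_eq_zero] at h1
    have h6 : 0 ≤ l := ge_of_tendsto' hl fun n => mul_nonneg toReal_nonneg (tv_nonneg _ _)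
    have h7 : l = 0 := by linarith
    rwa [h7] at hl
  filter_upwards [hac.ae_le hr0, H.Sd_conv lam μ 0, H.ae_good μ, H.ae_pos μ, hac.ae_le (H.ae_pos lam)]
    with y h1 h2 h3 h4 h5
  obtain ⟨s, hs⟩ := h2
  have h6 := h1.mul hs
  rw [zero_mul] at h6
  refine h6.congr fun n => ?_
  have ht1 : T (eIter M (e μ) n (res n y)) ≠ ⊤ := good_iter H.nn (by rw [T_e]; simp) (h3 n)
  have ht2 : T (eIter M (e lam) n (res n y)) ≠ ⊤ := good_iter H.nn (by rw [T_e]; simp) (h3 n)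
  rw [Sd_c0, ENNReal.toReal_div, ENNReal.toReal_div]
  have a1 := ENNReal.toReal_ne_zero.2 ⟨h4 n, ht1⟩
  have a2 := ENNReal.toReal_ne_zero.2 ⟨h5 n, ht2⟩
  field_simp

end FS

/-- The filter transition kernel `Π` has a unique invariant probability measure if and
only if the filter is stable: for all `μ ≪ ν` in `P(E)`, the total variation distance
`‖π_n^μ − π_n^ν‖` tends to `0` for `Q_μ`-a.e. observation path. -/
theorem unique_invariant_measure_iff_filter_stability
    {E : Type*} [Countable E] [Nonempty E] [DecidableEq E]
    {F : Type*} [TopologicalSpace F] [PolishSpace F] [MeasurableSpace F] [BorelSpace F]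
    (φ : Measure F) [SigmaFinite φ]
    (M : F → E → E → ℝ)
    (hMmeas : ∀ i j, Measurable fun y => M y i j)
    (hMnn : ∀ y i j, 0 ≤ M y i j)
    (hMbd : ∀ᵐ y ∂φ, ∃ C : ℝ, ∀ (i : E) (s : Finset E), ∑ j ∈ s, M y i j ≤ C)
    (hPtrans : ∀ i, HasSum (fun j => transMat M φ i j) 1)
    (hPirr : ∀ i j : E, ∃ n : ℕ, 0 < matPow (transMat M φ) n i j)
    (lam : ProbVec E)
    (hlamInv : ∀ j, ∑' i, (lam : E → ℝ) i * transMat M φ i j = (lam : E → ℝ) j)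
    (hlamUniq : ∀ ρ : ProbVec E,
      (∀ j, ∑' i, (ρ : E → ℝ) i * transMat M φ i j = (ρ : E → ℝ) j) → ρ = lam)
    (Q : ProbVec E → Measure (ℕ → F))
    (hQprob : ∀ μ, IsProbabilityMeasure (Q μ))
    (hQ : ∀ (μ : ProbVec E) (n : ℕ) (A : Set (Fin n → F)), MeasurableSet A →
      Q μ {y : ℕ → F | (fun k : Fin n => y k) ∈ A} =
        ∫⁻ v in A, ENNReal.ofReal (rowTot (rowIter M (μ : E → ℝ) (List.ofFn v)))
          ∂(Measure.pi fun _ => φ))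
    :
    (∃! 𝕄 : ProbabilityMeasure (ProbVec E), IsPiInvariant M φ 𝕄) ↔
      ∀ μ ν : ProbVec E, (∀ i : E, (ν : E → ℝ) i = 0 → (μ : E → ℝ) i = 0) →
        ∀ᵐ y ∂(Q μ),
          Tendsto (fun n : ℕ => tvDist (filterSeq M μ y n) (filterSeq M ν y n))
            atTop (nhds 0) := by
  have H : FS.HMM M φ Q := FS.mkHMM hMmeas hMnn hMbd hQprob hQ
  have hl : FS.Inv M φ lam := (H.inv_iff lam).1 hlamInv
  have hp : ∀ j, lam.1 j ≠ 0 := fun j => H.lam_pos hl hPirr j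
  constructor
  · intro hu μ ν hμν
    have hac : Q μ ≪ Q ν := H.ac hμν
    filter_upwards [H.filterSeq_ae μ, hac.ae_le (H.filterSeq_ae ν), H.dir2 hl hp hu μ,
      hac.ae_le (H.dir2 hl hp hu ν)] with y h1 h2 h3 h4
    have h5 := h3.add h4
    rw [add_zero] at h5
    refine squeeze_zero (fun n => FS.tv_nonneg _ _) (fun n => ?_) h5
    rw [h1 n, h2 n, FS.tv_comm (FS.Gf M ν n (FS.res n y))]
    exact FS.tv_tri _ _ _
  · intro hs
    refine H.dir1 hl (fun ρ hρ => hlamUniq ρ ((H.inv_iff ρ).2 hρ)) fun μ => ?_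
    have h0 : ∀ i : E, (lam : E → ℝ) i = 0 → (μ : E → ℝ) i = 0 := fun i hi => absurd hi (hp i)
    have hac : Q μ ≪ Q lam := H.ac h0
    filter_upwards [H.filterSeq_ae μ, hac.ae_le (H.filterSeq_ae lam), hs μ lam h0] with y h1 h2 h3
    refine h3.congr fun n => ?_
    rw [h1 n, h2 n]
end

section
/- For all μ, ν ∈ P(E) with μ ≪ ν, the limit lim_{n→∞} ‖π_n^μ(y) − π_n^ν(y)‖ exists for Q_μ-almost every y ∈ F^ℕ. (Since μ ≪ ν implies Q_μ ≪ Q_ν, the filter π_n^ν is well-defined Q_μ-almost surely.) -/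
open MeasureTheory Filter Topology ENNReal

namespace HMMaux

noncomputable def en {E : Type*} (p : E → ℝ) : ℝ≥0∞ := ∑' j, ‖p j‖ₑ

def GoodPt {E F : Type*} (M : F → E → E → ℝ) (y : F) : Prop :=
  ∃ C : ℝ, ∀ (i : E) (s : Finset E), ∑ j ∈ s, M y i j ≤ C

lemma en_ne_top {E : Type*} {p : E → ℝ} : en p ≠ ∞ ↔ Summable p := by
  unfold en
  rw [tsum_enorm_ne_top_iff_summable_norm, summable_norm_iff]

lemma en_eq_ofReal {E : Type*} {p : E → ℝ} (hp : Summable p) :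
    en p = ENNReal.ofReal (∑' j, |p j|) := by
  unfold en
  rw [ENNReal.ofReal_tsum_of_nonneg (fun _ => abs_nonneg _) hp.abs]
  simp [Real.enorm_eq_ofReal_abs]

lemma en_toReal {E : Type*} {p : E → ℝ} (hp : Summable p) :
    (en p).toReal = ∑' j, |p j| := by
  rw [en_eq_ofReal hp, ENNReal.toReal_ofReal (tsum_nonneg fun _ => abs_nonneg _)]

lemma en_nonneg_eq {E : Type*} {p : E → ℝ} (hp : Summable p) (h0 : ∀ i, 0 ≤ p i) :
    en p = ENNReal.ofReal (rowTot p) := by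
  rw [en_eq_ofReal hp]; unfold rowTot; simp [abs_of_nonneg, h0]

section
variable {E F : Type*} {M : F → E → E → ℝ}

lemma en_rowMul_le (p : E → ℝ) (y : F) :
    en (rowMul M p y) ≤ ∑' i, ‖p i‖ₑ * ∑' j, ‖M y i j‖ₑ := by
  unfold en rowMul
  calc ∑' j, ‖∑' i, p i * M y i j‖ₑ ≤ ∑' j, ∑' i, ‖p i * M y i j‖ₑ :=
        ENNReal.tsum_le_tsum fun j => enorm_tsum_le_tsum_enorm
    _ = ∑' i, ∑' j, ‖p i * M y i j‖ₑ := ENNReal.tsum_comm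
    _ = _ := by simp_rw [enorm_mul, ENNReal.tsum_mul_left]

lemma good_bound (hMnn : ∀ y i j, 0 ≤ M y i j) {y : F} (hy : GoodPt M y) :
    ∃ C : ℝ, ∀ i, ∑' j, ‖M y i j‖ₑ ≤ ENNReal.ofReal C := by
  obtain ⟨C, hC⟩ := hy
  refine ⟨C, fun i => ?_⟩
  rw [ENNReal.tsum_eq_iSup_sum]
  refine iSup_le fun s => ?_
  have : ∀ j, ‖M y i j‖ₑ = ENNReal.ofReal (M y i j) := fun j =>
    Real.enorm_of_nonneg (hMnn _ _ _)
  simp_rw [this]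
  rw [← ENNReal.ofReal_sum_of_nonneg fun j _ => hMnn _ _ _]
  exact ENNReal.ofReal_le_ofReal (hC i s)

lemma summable_rowMul (hMnn : ∀ y i j, 0 ≤ M y i j) {y : F} (hy : GoodPt M y)
    {p : E → ℝ} (hp : Summable p) : Summable (rowMul M p y) := by
  obtain ⟨C, hC⟩ := good_bound hMnn hy
  rw [← en_ne_top] at hp ⊢
  refine ne_top_of_le_ne_top ?_ ((en_rowMul_le p y).trans
    (ENNReal.tsum_le_tsum fun i => mul_le_mul_right (hC i) _))
  rw [ENNReal.tsum_mul_right]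
  exact ENNReal.mul_ne_top hp ENNReal.ofReal_ne_top

lemma summable_term (hMnn : ∀ y i j, 0 ≤ M y i j) {y : F} (hy : GoodPt M y)
    {p : E → ℝ} (hp : Summable p) (j : E) : Summable fun i => p i * M y i j := by
  obtain ⟨C, hC⟩ := hy
  refine Summable.of_norm_bounded (g := fun i => |p i| * C) (hp.abs.mul_right C) fun i => ?_
  rw [norm_mul, Real.norm_eq_abs, Real.norm_of_nonneg (hMnn _ _ _)]
  have := hC i {j}
  simp only [Finset.sum_singleton] at this
  gcongr

lemma rowMul_lin (hMnn : ∀ y i j, 0 ≤ M y i j) {y : F} (hy : GoodPt M y)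
    {p q : E → ℝ} (hp : Summable p) (hq : Summable q) (c : ℝ) :
    rowMul M (fun i => c * p i - q i) y = fun j => c * rowMul M p y j - rowMul M q y j := by
  funext j
  unfold rowMul
  rw [← tsum_mul_left, ← Summable.tsum_sub ((summable_term hMnn hy hp j).mul_left c)
    (summable_term hMnn hy hq j)]
  congr 1; funext i; ring

lemma rowMul_nonneg (hMnn : ∀ y i j, 0 ≤ M y i j) {y : F} {p : E → ℝ} (hp : ∀ i, 0 ≤ p i) (j : E) :
    0 ≤ rowMul M p y j := tsum_nonneg fun i => mul_nonneg (hp i) (hMnn _ _ _)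

noncomputable def it (M : F → E → E → ℝ) (n : ℕ) (p : E → ℝ) (v : Fin n → F) : E → ℝ :=
  rowIter M p (List.ofFn v)

lemma it_zero (p : E → ℝ) (v : Fin 0 → F) : it M 0 p v = p := by simp [it, rowIter]

lemma it_succ (n : ℕ) (p : E → ℝ) (v : Fin (n+1) → F) :
    it M (n+1) p v = rowMul M (it M n p (fun k => v k.castSucc)) (v (Fin.last n)) := by
  unfold it rowIter
  rw [List.ofFn_succ', List.concat_eq_append, List.foldl_append]
  simp

lemma summable_it (hMnn : ∀ y i j, 0 ≤ M y i j) {p : E → ℝ} (hp : Summable p) (n : ℕ) :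
    ∀ (v : Fin n → F), (∀ k, GoodPt M (v k)) → Summable (it M n p v) := by
  induction n with
  | zero => intro v _; rwa [it_zero]
  | succ n ih =>
    intro v hv; rw [it_succ]
    exact summable_rowMul hMnn (hv _) (ih _ fun k => hv _)

lemma it_lin (hMnn : ∀ y i j, 0 ≤ M y i j) {p q : E → ℝ} (hp : Summable p) (hq : Summable q)
    (c : ℝ) (n : ℕ) : ∀ (v : Fin n → F), (∀ k, GoodPt M (v k)) →
      it M n (fun i => c * p i - q i) v = fun j => c * it M n p v j - it M n q v j := by
  induction n with
  | zero => intro v _; simp [it_zero]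
  | succ n ih =>
    intro v hv; rw [it_succ, it_succ, it_succ, ih _ fun k => hv _]
    exact rowMul_lin hMnn (hv _) (summable_it hMnn hp _ _ fun k => hv _)
      (summable_it hMnn hq _ _ fun k => hv _) c

lemma it_nonneg (hMnn : ∀ y i j, 0 ≤ M y i j) {p : E → ℝ} (hp : ∀ i, 0 ≤ p i) (n : ℕ) :
    ∀ (v : Fin n → F) (j : E), 0 ≤ it M n p v j := by
  induction n with
  | zero => intro v; rwa [it_zero]
  | succ n ih => intro v; rw [it_succ]; exact rowMul_nonneg hMnn (ih _)

variable [Countable E] [MeasurableSpace F]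

lemma measurable_it (hMmeas : ∀ i j, Measurable fun y => M y i j) (p : E → ℝ) (n : ℕ) :
    ∀ j, Measurable fun v : Fin n → F => it M n p v j := by
  induction n with
  | zero => intro j; simp_rw [it_zero]; exact measurable_const
  | succ n ih =>
    intro j; simp_rw [it_succ]; unfold rowMul
    refine Measurable.tsum fun i => ?_
    refine Measurable.mul ?_ ?_
    · exact (ih i).comp (measurable_pi_lambda _ fun k => measurable_pi_apply _)
    · exact (hMmeas i j).comp (measurable_pi_apply _)

lemma measurable_en_it (hMmeas : ∀ i j, Measurable fun y => M y i j) (p : E → ℝ) (n : ℕ) :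
    Measurable fun v : Fin n → F => en (it M n p v) := by
  unfold en
  exact Measurable.tsum fun j => (measurable_it hMmeas p n j).enorm

lemma measurable_en_rowMul (hMmeas : ∀ i j, Measurable fun y => M y i j) (p : E → ℝ) :
    Measurable fun y : F => en (rowMul M p y) := by
  unfold en rowMul
  exact Measurable.tsum fun j => (Measurable.tsum fun i => (hMmeas i j).const_mul _).enorm

lemma lintegral_en_rowMul_le (φ : Measure F) (hMmeas : ∀ i j, Measurable fun y => M y i j)
    (hcol : ∀ i, ∫⁻ y, ∑' j, ‖M y i j‖ₑ ∂φ ≤ 1) (p : E → ℝ) :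
    ∫⁻ y, en (rowMul M p y) ∂φ ≤ en p := by
  have hm : ∀ i, Measurable fun y => ∑' j, ‖M y i j‖ₑ :=
    fun i => Measurable.tsum fun j => (hMmeas i j).enorm
  calc ∫⁻ y, en (rowMul M p y) ∂φ ≤ ∫⁻ y, ∑' i, ‖p i‖ₑ * ∑' j, ‖M y i j‖ₑ ∂φ :=
        lintegral_mono fun y => en_rowMul_le p y
    _ = ∑' i, ‖p i‖ₑ * ∫⁻ y, ∑' j, ‖M y i j‖ₑ ∂φ := by
        rw [lintegral_tsum fun i => ((hm i).const_mul _).aemeasurable]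
        congr 1; funext i; rw [lintegral_const_mul _ (hm i)]
    _ ≤ ∑' i, ‖p i‖ₑ * 1 := ENNReal.tsum_le_tsum fun i => mul_le_mul_right (hcol i) _
    _ = en p := by simp [en]

lemma lintegral_pi_succ (φ : Measure F) [SigmaFinite φ] (n : ℕ) {f : (Fin n → F) → F → ℝ≥0∞}
    (hf : Measurable (Function.uncurry f)) :
    ∫⁻ v : Fin (n+1) → F, f (fun k => v k.castSucc) (v (Fin.last n)) ∂(Measure.pi fun _ => φ)
      = ∫⁻ u : Fin n → F, ∫⁻ y, f u y ∂φ ∂(Measure.pi fun _ => φ) := by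
  have h := measurePreserving_piFinSuccAbove (fun _ : Fin (n+1) => φ) (Fin.last n)
  have h2 := h.lintegral_comp (f := fun z : F × (Fin n → F) => f z.2 z.1)
    (hf.comp measurable_swap)
  have h3 := lintegral_prod_symm' (μ := φ) (ν := Measure.pi fun _ : Fin n => φ)
    (fun z : F × (Fin n → F) => f z.2 z.1) (hf.comp measurable_swap)
  refine Eq.trans ?_ (h2.trans h3)
  congr 1; funext v
  simp [MeasurableEquiv.piFinSuccAbove, Fin.insertNthEquiv, Fin.removeNth]
  rfl

end

section
variable {E F : Type*} {M : F → E → E → ℝ} [Countable E] [MeasurableSpace F]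

def res (F : Type*) (n : ℕ) (y : ℕ → F) : Fin n → F := fun k => y k

lemma measurable_res (n : ℕ) : Measurable (res F n) :=
  measurable_pi_lambda _ fun _ => measurable_pi_apply _

def filt (F : Type*) [MeasurableSpace F] : Filtration ℕ (inferInstance : MeasurableSpace (ℕ → F)) where
  seq n := MeasurableSpace.comap (res F n) inferInstance
  mono' := by
    intro m n hmn
    have : res F m = (fun (v : Fin n → F) (k : Fin m) => v (Fin.castLE hmn k)) ∘ res F n := by
      funext y k; simp [res]
    simp only
    rw [this, ← MeasurableSpace.comap_comp]
    apply MeasurableSpace.comap_mono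
    exact Measurable.comap_le (measurable_pi_lambda _ fun _ => measurable_pi_apply _)
  le' n := (measurable_res n).comap_le

noncomputable def gg (M : F → E → E → ℝ) (a w : E → ℝ) (n : ℕ) (v : Fin n → F) : ℝ :=
  (en (it M n w v) / en (it M n a v)).toReal

open Classical in
noncomputable def KK (M : F → E → E → ℝ) (a w : E → ℝ) (n : ℕ) (v : Fin n → F) : ℝ≥0∞ :=
  if en (it M n a v) = 0 then 0 else en (it M n w v)

lemma measurable_gg (hMmeas : ∀ i j, Measurable fun y => M y i j) (a w : E → ℝ) (n : ℕ) :
    Measurable (gg M a w n) :=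
  ((measurable_en_it hMmeas w n).div (measurable_en_it hMmeas a n)).ennreal_toReal

lemma measurable_KK (hMmeas : ∀ i j, Measurable fun y => M y i j) (a w : E → ℝ) (n : ℕ) :
    Measurable (KK M a w n) :=
  Measurable.ite (measurable_en_it hMmeas a n (measurableSet_singleton 0)) measurable_const
    (measurable_en_it hMmeas w n)

lemma ae_good_pi (φ : Measure F) [SigmaFinite φ] (hMbd : ∀ᵐ y ∂φ, GoodPt M y) (n : ℕ) :
    ∀ᵐ v ∂(Measure.pi fun _ : Fin n => φ), ∀ k, GoodPt M (v k) := by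
  rw [ae_all_iff]
  intro k
  exact (Measure.quasiMeasurePreserving_eval (fun _ : Fin n => φ) k).ae hMbd

lemma en_zero_step (p : E → ℝ) (y : F) (h : en p = 0) : en (rowMul M p y) = 0 := by
  have h0 := en_rowMul_le (M := M) p y
  have : ∀ i, ‖p i‖ₑ = 0 := by simpa [en, ENNReal.tsum_eq_zero] using h
  simpa [this] using h0

lemma KK_step (φ : Measure F) [SigmaFinite φ] (hMmeas : ∀ i j, Measurable fun y => M y i j)
    (hcol : ∀ i, ∫⁻ y, ∑' j, ‖M y i j‖ₑ ∂φ ≤ 1) (a w : E → ℝ) (n : ℕ)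
    (A : Set (Fin n → F)) (hA : MeasurableSet A) :
    ∫⁻ v in {v : Fin (n+1) → F | (fun k => v k.castSucc) ∈ A}, KK M a w (n+1) v
        ∂(Measure.pi fun _ => φ)
      ≤ ∫⁻ v in A, KK M a w n v ∂(Measure.pi fun _ => φ) := by
  classical
  have hr : Measurable fun (v : Fin (n+1) → F) (k : Fin n) => v k.castSucc :=
    measurable_pi_lambda _ fun _ => measurable_pi_apply _
  have hA' : MeasurableSet {v : Fin (n+1) → F | (fun k => v k.castSucc) ∈ A} := hr hA
  set f : (Fin n → F) → F → ℝ≥0∞ := fun u y =>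
    if u ∈ A ∧ en (it M n a u) ≠ 0 then en (rowMul M (it M n w u) y) else 0 with hf
  have hset : MeasurableSet {u : Fin n → F | u ∈ A ∧ en (it M n a u) ≠ 0} :=
    hA.inter (measurable_en_it hMmeas a n (measurableSet_singleton 0)).compl
  have hfm : Measurable (Function.uncurry f) := by
    refine Measurable.ite (measurable_fst hset) ?_ measurable_const
    unfold en rowMul
    refine Measurable.tsum fun j => (Measurable.tsum fun i => ?_).enorm
    exact ((measurable_it hMmeas w n i).comp measurable_fst).mul
      ((hMmeas i j).comp measurable_snd)
  rw [← lintegral_indicator hA', ← lintegral_indicator hA]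
  calc _ ≤ ∫⁻ v : Fin (n+1) → F, f (fun k => v k.castSucc) (v (Fin.last n))
          ∂(Measure.pi fun _ => φ) := by
        refine lintegral_mono fun v => ?_
        by_cases hv : (fun k : Fin n => v k.castSucc) ∈ A
        · rw [Set.indicator_of_mem (by exact hv)]
          simp only [hf, KK, it_succ, hv, true_and]
          by_cases h0 : en (it M n a fun k => v k.castSucc) = 0
          · simp [en_zero_step _ _ h0]
          · simp only [h0, ne_eq, not_false_eq_true, if_true]
            split_ifs <;> simp
        · rw [Set.indicator_of_notMem (by exact hv)]; exact zero_le
    _ = ∫⁻ u : Fin n → F, ∫⁻ y, f u y ∂φ ∂(Measure.pi fun _ => φ) := lintegral_pi_succ φ n hfm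
    _ ≤ _ := by
        refine lintegral_mono fun u => ?_
        by_cases hu : u ∈ A
        · rw [Set.indicator_of_mem hu]
          simp only [hf, KK, hu, true_and]
          by_cases h0 : en (it M n a u) = 0
          · simp [h0]
          · simp only [h0, ne_eq, not_false_eq_true, if_true, if_false]
            exact lintegral_en_rowMul_le φ hMmeas hcol _
        · simp [hf, hu]

lemma KK_total (φ : Measure F) [SigmaFinite φ] (hMmeas : ∀ i j, Measurable fun y => M y i j)
    (hcol : ∀ i, ∫⁻ y, ∑' j, ‖M y i j‖ₑ ∂φ ≤ 1) (a w : E → ℝ) (n : ℕ) :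
    ∫⁻ v, KK M a w n v ∂(Measure.pi fun _ => φ) ≤ en w := by
  induction n with
  | zero =>
    calc _ ≤ ∫⁻ v : Fin 0 → F, en w ∂(Measure.pi fun _ => φ) := by
          refine lintegral_mono fun v => ?_
          unfold KK; rw [it_zero]; split_ifs <;> simp [it_zero]
      _ = en w := by simp
  | succ n ih =>
    have := KK_step φ hMmeas hcol a w n Set.univ MeasurableSet.univ
    simp only [Set.mem_univ, Set.ofPred_true, Measure.restrict_univ] at this
    exact this.trans ih

variable (φ : Measure F) [SigmaFinite φ] (Q : Measure (ℕ → F)) [IsProbabilityMeasure Q]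

lemma lint_gg (hMmeas : ∀ i j, Measurable fun y => M y i j) (hMnn : ∀ y i j, 0 ≤ M y i j)
    (hMbd : ∀ᵐ y ∂φ, GoodPt M y) (a w : E → ℝ) (ha : Summable a) (hw : Summable w)
    (hlaw : ∀ n, Q.map (res F n) = (Measure.pi fun _ => φ).withDensity fun v => en (it M n a v))
    (n : ℕ) (A : Set (Fin n → F)) (hA : MeasurableSet A) :
    ∫⁻ y in res F n ⁻¹' A, ENNReal.ofReal (gg M a w n (res F n y)) ∂Q
      = ∫⁻ v in A, KK M a w n v ∂(Measure.pi fun _ => φ) := by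
  have hg : Measurable fun v => ENNReal.ofReal (gg M a w n v) :=
    (measurable_gg hMmeas a w n).ennreal_ofReal
  rw [← setLIntegral_map (f := fun v => ENNReal.ofReal (gg M a w n v)) hA hg (measurable_res n),
    hlaw n, setLIntegral_withDensity_eq_setLIntegral_mul _ (measurable_en_it hMmeas a n) hg hA]
  refine lintegral_congr_ae (ae_restrict_of_ae ?_)
  filter_upwards [ae_good_pi φ hMbd n] with v hv
  have h1 := en_ne_top.2 (summable_it hMnn ha n v hv)
  have h2 := en_ne_top.2 (summable_it hMnn hw n v hv)
  simp only [Pi.mul_apply, gg, KK]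
  split_ifs with h0
  · simp [h0]
  · rw [ENNReal.ofReal_toReal (ENNReal.div_ne_top h2 h0), ENNReal.mul_div_cancel h0 h1]

lemma gg_ae_tendsto (hMmeas : ∀ i j, Measurable fun y => M y i j) (hMnn : ∀ y i j, 0 ≤ M y i j)
    (hMbd : ∀ᵐ y ∂φ, GoodPt M y) (hcol : ∀ i, ∫⁻ y, ∑' j, ‖M y i j‖ₑ ∂φ ≤ 1)
    (a w : E → ℝ) (ha : Summable a) (hw : Summable w)
    (hlaw : ∀ n, Q.map (res F n) = (Measure.pi fun _ => φ).withDensity fun v => en (it M n a v)) :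
    ∀ᵐ y ∂Q, ∃ L : ℝ, Tendsto (fun n => gg M a w n (res F n y)) atTop (𝓝 L) := by
  have hnn : ∀ n v, 0 ≤ gg M a w n v := fun n v => ENNReal.toReal_nonneg
  have htot : ∀ n, ∫⁻ y, ENNReal.ofReal (gg M a w n (res F n y)) ∂Q ≤ en w := by
    intro n
    have := lint_gg φ Q hMmeas hMnn hMbd a w ha hw hlaw n Set.univ MeasurableSet.univ
    simp only [Set.preimage_univ, Measure.restrict_univ] at this
    rw [this]; exact KK_total φ hMmeas hcol a w n
  have hwt : en w ≠ ∞ := en_ne_top.2 hw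
  have hmeas : ∀ n, Measurable fun y => gg M a w n (res F n y) := fun n =>
    (measurable_gg hMmeas a w n).comp (measurable_res n)
  have hint : ∀ n, Integrable (fun y => gg M a w n (res F n y)) Q := by
    intro n
    refine ⟨(hmeas n).aestronglyMeasurable, ?_⟩
    rw [hasFiniteIntegral_iff_ofReal (Eventually.of_forall fun y => hnn _ _)]
    exact (htot n).trans_lt hwt.lt_top
  have hsub : Submartingale (fun n y => - gg M a w n (res F n y)) (filt F) Q := by
    refine submartingale_of_setIntegral_le_succ ?_ (fun n => (hint n).neg) ?_
    · intro n
      refine Measurable.stronglyMeasurable ?_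
      exact (measurable_gg hMmeas a w n).neg.comp (comap_measurable (res F n))
    · rintro n _ ⟨A, hA, rfl⟩
      rw [integral_neg, integral_neg, neg_le_neg_iff,
        integral_eq_lintegral_of_nonneg_ae (Eventually.of_forall fun y => hnn _ _)
          (hmeas _).aestronglyMeasurable,
        integral_eq_lintegral_of_nonneg_ae (Eventually.of_forall fun y => hnn _ _)
          (hmeas _).aestronglyMeasurable]
      refine ENNReal.toReal_mono ?_ ?_
      · exact ne_top_of_le_ne_top hwt ((setLIntegral_le_lintegral _ _).trans (htot n))
      · rw [lint_gg φ Q hMmeas hMnn hMbd a w ha hw hlaw n A hA]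
        refine le_trans (le_of_eq ?_) (KK_step φ hMmeas hcol a w n A hA)
        rw [← lint_gg φ Q hMmeas hMnn hMbd a w ha hw hlaw (n+1)]
        · rfl
        · exact (measurable_pi_lambda (fun (v : Fin (n+1) → F) (k : Fin n) => v k.castSucc)
            fun _ => measurable_pi_apply _) hA
  have hR : ∀ n, eLpNorm (fun y => - gg M a w n (res F n y)) 1 Q ≤ (en w).toNNReal := by
    intro n
    rw [ENNReal.coe_toNNReal hwt, eLpNorm_one_eq_lintegral_enorm]
    refine le_trans (le_of_eq ?_) (htot n)
    congr 1; funext y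
    rw [enorm_neg, Real.enorm_of_nonneg (hnn _ _)]
  filter_upwards [hsub.ae_tendsto_limitProcess hR] with y hy
  exact ⟨_, by simpa using hy.neg⟩

lemma en_pos_ae (hMmeas : ∀ i j, Measurable fun y => M y i j) (a : E → ℝ)
    (hlaw : ∀ n, Q.map (res F n) = (Measure.pi fun _ => φ).withDensity fun v => en (it M n a v)) :
    ∀ᵐ y ∂Q, ∀ n, en (it M n a (res F n y)) ≠ 0 := by
  rw [ae_all_iff]
  intro n
  have : ∀ᵐ v ∂(Q.map (res F n)), en (it M n a v) ≠ 0 := by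
    rw [hlaw n, ae_withDensity_iff (measurable_en_it hMmeas a n)]
    exact Eventually.of_forall fun _ h => h
  exact ae_of_ae_map (measurable_res n).aemeasurable this

lemma good_ae (hMbd : ∀ᵐ y ∂φ, GoodPt M y) (a : E → ℝ)
    (hlaw : ∀ n, Q.map (res F n) = (Measure.pi fun _ => φ).withDensity fun v => en (it M n a v)) :
    ∀ᵐ y ∂Q, ∀ k : ℕ, GoodPt M (y k) := by
  rw [ae_all_iff]
  intro n
  have : ∀ᵐ v ∂(Q.map (res F (n+1))), ∀ k, GoodPt M (v k) := by
    rw [hlaw (n+1)]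
    exact (withDensity_absolutelyContinuous _ _).ae_le (ae_good_pi φ hMbd (n+1))
  filter_upwards [ae_of_ae_map (measurable_res (n+1)).aemeasurable this] with y hy
  simpa [res] using hy (Fin.last n)

end

lemma lip_conv (T : ℕ → ℝ → ℝ) (W : ℕ → ℝ) (w : ℝ)
    (hL : ∀ n c c', |T n c - T n c'| ≤ |c - c'|)
    (hq : ∀ q : ℚ, ∃ L : ℝ, Tendsto (fun n => T n (q : ℝ)) atTop (𝓝 L))
    (hW : Tendsto W atTop (𝓝 w)) : ∃ L : ℝ, Tendsto (fun n => T n (W n)) atTop (𝓝 L) := by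
  apply cauchySeq_tendsto_of_complete
  rw [Metric.cauchySeq_iff]
  intro ε hε
  obtain ⟨q, hq1, hq2⟩ := exists_rat_btwn (show w < w + ε / 8 by linarith)
  obtain ⟨L, hLq⟩ := hq q
  obtain ⟨N1, h1⟩ := (Metric.tendsto_atTop.1 hLq) (ε/8) (by linarith)
  obtain ⟨N2, h2⟩ := (Metric.tendsto_atTop.1 hW) (ε/8) (by linarith)
  have key : ∀ n ≥ max N1 N2, |T n (W n) - L| < 3 * ε / 8 := by
    intro n hn
    have a1 := h1 n (le_of_max_le_left hn)
    have a2 := h2 n (le_of_max_le_right hn)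
    have a3 := hL n (W n) q
    rw [Real.dist_eq] at a1 a2
    rw [abs_lt] at *
    have a4 : |W n - q| < ε / 4 := by rw [abs_lt]; constructor <;> linarith
    have a5 := abs_le.1 (a3.trans a4.le)
    constructor <;> linarith
  refine ⟨max N1 N2, fun m hm n hn => ?_⟩
  have b1 := key m hm
  have b2 := key n hn
  rw [Real.dist_eq]
  rw [abs_lt] at *
  constructor <;> linarith

section
variable {E F : Type*} {M : F → E → E → ℝ}

lemma gg_eq (hMnn : ∀ y i j, 0 ≤ M y i j) {a w : E → ℝ} (ha : Summable a) (hw : Summable w)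
    {n : ℕ} {v : Fin n → F} (hv : ∀ k, GoodPt M (v k)) :
    gg M a w n v = (∑' j, |it M n w v j|) / (∑' j, |it M n a v j|) := by
  unfold gg
  rw [ENNReal.toReal_div, en_toReal (summable_it hMnn ha n v hv),
    en_toReal (summable_it hMnn hw n v hv)]

lemma tot_pos (hMnn : ∀ y i j, 0 ≤ M y i j) {a : E → ℝ} (ha : Summable a)
    {n : ℕ} {v : Fin n → F} (hv : ∀ k, GoodPt M (v k)) (h : en (it M n a v) ≠ 0) :
    0 < ∑' j, |it M n a v j| := by
  rw [en_eq_ofReal (summable_it hMnn ha n v hv)] at h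
  simpa using h

lemma trunc_bound (hMnn : ∀ y i j, 0 ≤ M y i j) {a b w : E → ℝ} (ha : Summable a) (hb : Summable b)
    (hw : Summable w) (c : ℝ) (hc : 0 ≤ c) (ha0 : ∀ i, 0 ≤ a i)
    (h : ∀ i, a i ≤ c * b i + w i)
    {n : ℕ} {v : Fin n → F} (hv : ∀ k, GoodPt M (v k)) (hne : en (it M n a v) ≠ 0) :
    1 ≤ c * gg M a b n v + gg M a w n v := by
  have hs : Summable fun i => 1 * a i - w i := (ha.mul_left 1).sub hw
  have h1 := it_nonneg (M := M) hMnn (p := fun i => c * b i - (1 * a i - w i))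
    (fun i => by have := h i; linarith) n v
  rw [it_lin hMnn hb hs c n v hv, it_lin hMnn ha hw 1 n v hv] at h1
  have hp := tot_pos hMnn ha hv hne
  rw [gg_eq hMnn ha hb hv, gg_eq hMnn ha hw hv, ← mul_div_assoc, ← add_div, le_div_iff₀ hp, one_mul,
    ← tsum_mul_left]
  have sa := (summable_it hMnn ha n v hv).abs
  have sb := (summable_it hMnn hb n v hv).abs
  have sw := (summable_it hMnn hw n v hv).abs
  rw [← Summable.tsum_add (sb.mul_left c) sw]
  refine Summable.tsum_le_tsum (fun j => ?_) sa ((sb.mul_left c).add sw)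
  have := h1 j
  rw [abs_of_nonneg (it_nonneg hMnn ha0 n v j)]
  have e1 := le_abs_self (it M n w v j)
  have e2 := mul_le_mul_of_nonneg_left (le_abs_self (it M n b v j)) hc
  linarith

open Classical in
lemma trunc_tendsto {a b : E → ℝ} (ha : Summable a) (ha0 : ∀ i, 0 ≤ a i) (hb0 : ∀ i, 0 ≤ b i)
    (hab : ∀ i, b i = 0 → a i = 0) :
    Tendsto (fun k : ℕ => en fun i => if a i ≤ k * b i then 0 else a i) atTop (𝓝 0) := by
  have hs : ∀ k : ℕ, Summable fun i => if a i ≤ k * b i then 0 else a i := fun k =>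
    Summable.of_norm_bounded ha fun i => by
      split_ifs
      · simpa using ha0 i
      · rw [Real.norm_of_nonneg (ha0 i)]
  have : Tendsto (fun k : ℕ => ∑' i, |if a i ≤ k * b i then 0 else a i|) atTop
      (𝓝 (∑' i : E, (0:ℝ))) := by
    refine tendsto_tsum_of_dominated_convergence ha ?_ ?_
    · intro i
      refine tendsto_const_nhds.congr' ?_
      rcases (hb0 i).eq_or_lt with h | h
      · simp [hab i h.symm]
      · filter_upwards [eventually_ge_atTop ⌈a i / b i⌉₊] with k hk
        have : a i / b i ≤ k := (Nat.le_ceil _).trans (by exact_mod_cast hk)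
        rw [div_le_iff₀ h] at this
        simp [this]
    · refine Eventually.of_forall fun k i => ?_
      split_ifs
      · simpa using ha0 i
      · simp [abs_of_nonneg (ha0 i)]
  simp_rw [fun k => en_eq_ofReal (hs k)]
  simpa using ENNReal.tendsto_ofReal this

lemma filter_eq (hMnn : ∀ y i j, 0 ≤ M y i j) (μ : ProbVec E) (y : ℕ → F)
    (hy : ∀ k, GoodPt M (y k)) (n : ℕ) (hpos : 0 < ∑' j, |it M n (μ : E → ℝ) (res F n y) j|) (j : E) :
    (filterSeq M μ y n : E → ℝ) j = it M n (μ : E → ℝ) (res F n y) j /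
      ∑' j, |it M n (μ : E → ℝ) (res F n y) j| := by
  have hs := summable_it (M := M) hMnn μ.2.2.summable n (res F n y) (fun k => hy k)
  have h0 := it_nonneg (M := M) hMnn μ.2.1 n (res F n y)
  have habs : (∑' j, |it M n (μ : E → ℝ) (res F n y) j|)
      = rowTot (it M n (μ : E → ℝ) (res F n y)) := by
    unfold rowTot; simp [abs_of_nonneg, h0]
  rw [habs] at hpos ⊢
  have hex : ∃ ν : ProbVec E, ∀ j, (ν : E → ℝ) j * rowTot (rowIter M (μ : E → ℝ)
      (List.ofFn fun k : Fin n => y k)) = rowIter M (μ : E → ℝ) (List.ofFn fun k : Fin n => y k) j := by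
    refine ⟨⟨fun j => it M n (μ : E → ℝ) (res F n y) j / rowTot (it M n (μ : E → ℝ) (res F n y)),
      fun i => div_nonneg (h0 i) hpos.le, ?_⟩, fun j => ?_⟩
    · have := hs.hasSum.div_const (rowTot (it M n (μ : E → ℝ) (res F n y)))
      have e : (∑' j, it M n (μ : E → ℝ) (res F n y) j) / rowTot (it M n (μ : E → ℝ) (res F n y)) = 1 :=
        div_self hpos.ne'
      rwa [e] at this
    · exact div_mul_cancel₀ _ hpos.ne'
  rw [eq_div_iff hpos.ne']
  unfold filterSeq filterList
  rw [dif_pos hex]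
  exact hex.choose_spec j

variable [Countable E] [MeasurableSpace F]
variable (φ : Measure F) [SigmaFinite φ] (Q : Measure (ℕ → F)) [IsProbabilityMeasure Q]

lemma not_tendsto_zero (hMmeas : ∀ i j, Measurable fun y => M y i j)
    (hMnn : ∀ y i j, 0 ≤ M y i j)
    (hMbd : ∀ᵐ y ∂φ, GoodPt M y) (hcol : ∀ i, ∫⁻ y, ∑' j, ‖M y i j‖ₑ ∂φ ≤ 1)
    (a b : E → ℝ) (ha : Summable a) (hb : Summable b) (ha0 : ∀ i, 0 ≤ a i) (hb0 : ∀ i, 0 ≤ b i)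
    (hab : ∀ i, b i = 0 → a i = 0)
    (hlaw : ∀ n, Q.map (res F n) = (Measure.pi fun _ => φ).withDensity fun v => en (it M n a v)) :
    ∀ᵐ y ∂Q, ¬ Tendsto (fun n => gg M a b n (res F n y)) atTop (𝓝 0) := by
  classical
  set w : ℕ → E → ℝ := fun k i => if a i ≤ k * b i then 0 else a i with hwdef
  have hws : ∀ k : ℕ, Summable (w k) := fun k =>
    Summable.of_norm_bounded ha fun i => by
      simp only [hwdef]
      split_ifs
      · simpa using ha0 i
      · rw [Real.norm_of_nonneg (ha0 i)]
  have hwt := trunc_tendsto ha ha0 hb0 hab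
  set B : ℕ → Set (ℕ → F) := fun k =>
    {y | 1 ≤ liminf (fun n => ENNReal.ofReal (gg M a (w k) n (res F n y))) atTop} with hB
  have hm : ∀ k n, Measurable fun y => ENNReal.ofReal (gg M a (w k) n (res F n y)) := fun k n =>
    ((measurable_gg hMmeas a (w k) n).comp (measurable_res n)).ennreal_ofReal
  have hQB : ∀ k, Q (B k) ≤ en (w k) := by
    intro k
    have h1 := mul_meas_ge_le_lintegral (μ := Q) (Measurable.liminf (hm k)) 1
    rw [one_mul] at h1
    refine h1.trans ((lintegral_liminf_le (hm k)).trans ?_)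
    refine (liminf_le_liminf (v := fun _ => en (w k)) (Eventually.of_forall fun n => ?_)).trans
      (by simp)
    have := lint_gg φ Q hMmeas hMnn hMbd a (w k) ha (hws k) hlaw n Set.univ MeasurableSet.univ
    simp only [Set.preimage_univ, Measure.restrict_univ] at this
    rw [this]; exact KK_total φ hMmeas hcol a (w k) n
  have hQ0 : Q (⋂ k, B k) = 0 := by
    refine le_antisymm (ge_of_tendsto' hwt fun k => ?_) zero_le
    exact (measure_mono (Set.iInter_subset _ k)).trans (hQB k)
  have hae : ∀ᵐ y ∂Q, y ∉ ⋂ k, B k := measure_eq_zero_iff_ae_notMem.1 hQ0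
  filter_upwards [hae, good_ae φ Q hMbd a hlaw, en_pos_ae φ Q hMmeas a hlaw] with y hy hgood hpos ht
  apply hy
  rw [Set.mem_iInter]
  intro k
  simp only [hB, Set.mem_ofPred_eq]
  have t1 : Tendsto (fun n => ENNReal.ofReal (1 - k * gg M a b n (res F n y))) atTop (𝓝 1) := by
    have := ENNReal.tendsto_ofReal ((ht.const_mul (k:ℝ)).const_sub 1)
    simpa using this
  rw [← t1.liminf_eq]
  refine liminf_le_liminf (Eventually.of_forall fun n => ENNReal.ofReal_le_ofReal ?_)
  have := trunc_bound (M := M) hMnn ha hb (hws k) k (Nat.cast_nonneg k) ha0 (fun i => by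
    simp only [hwdef]
    split_ifs with h
    · linarith
    · have := mul_nonneg (Nat.cast_nonneg (α := ℝ) k) (hb0 i); linarith)
    (n := n) (v := res F n y) (fun j => hgood j) (hpos n)
  linarith

lemma core (hMmeas : ∀ i j, Measurable fun y => M y i j) (hMnn : ∀ y i j, 0 ≤ M y i j)
    (hMbd : ∀ᵐ y ∂φ, GoodPt M y) (hcol : ∀ i, ∫⁻ y, ∑' j, ‖M y i j‖ₑ ∂φ ≤ 1)
    (μ ν : ProbVec E) (hab : ∀ i, (ν : E → ℝ) i = 0 → (μ : E → ℝ) i = 0)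
    (hlaw : ∀ n, Q.map (res F n) =
      (Measure.pi fun _ => φ).withDensity fun v => en (it M n (μ : E → ℝ) v)) :
    ∀ᵐ y ∂Q, ∃ L : ℝ, Tendsto (fun n : ℕ => tvDist (filterSeq M μ y n) (filterSeq M ν y n))
          atTop (𝓝 L) := by
  set a : E → ℝ := μ.1 with hadef
  set b : E → ℝ := ν.1 with hbdef
  have ha : Summable a := μ.2.2.summable
  have hb : Summable b := ν.2.2.summable
  have hw : ∀ c : ℝ, Summable fun i => c * a i - b i := fun c => (ha.mul_left c).sub hb
  have hq : ∀ᵐ y ∂Q, ∀ q : ℚ, ∃ L : ℝ,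
      Tendsto (fun n => gg M a (fun i => (q:ℝ) * a i - b i) n (res F n y)) atTop (𝓝 L) := by
    rw [ae_all_iff]
    exact fun q => gg_ae_tendsto φ Q hMmeas hMnn hMbd hcol a _ ha (hw q) hlaw
  filter_upwards [hq, gg_ae_tendsto φ Q hMmeas hMnn hMbd hcol a b ha hb hlaw,
    not_tendsto_zero φ Q hMmeas hMnn hMbd hcol a b ha hb μ.2.1 ν.2.1 hab hlaw,
    good_ae φ Q hMbd a hlaw, en_pos_ae φ Q hMmeas a hlaw] with y hq hW hW0 hgood hpos
  obtain ⟨w, hW⟩ := hW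
  have hg : ∀ n, ∀ k, GoodPt M (res F n y k) := fun n k => hgood k
  have hw0 : 0 < w := by
    refine lt_of_le_of_ne (ge_of_tendsto' hW fun n => ENNReal.toReal_nonneg) fun h => ?_
    subst h; exact hW0 hW
  set A : ℕ → E → ℝ := fun n => it M n a (res F n y)
  set B : ℕ → E → ℝ := fun n => it M n b (res F n y)
  have sA : ∀ n, Summable (A n) := fun n => summable_it hMnn ha n _ (hg n)
  have sB : ∀ n, Summable (B n) := fun n => summable_it hMnn hb n _ (hg n)
  have pA : ∀ n, 0 < ∑' j, |A n j| := fun n => tot_pos hMnn ha (hg n) (hpos n)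
  set T : ℕ → ℝ → ℝ := fun n c => (∑' j, |c * A n j - B n j|) / ∑' j, |A n j| with hT
  have sT : ∀ n c, Summable fun j => |c * A n j - B n j| := fun n c =>
    (((sA n).mul_left c).sub (sB n)).abs
  have hTgg : ∀ n c, gg M a (fun i => c * a i - b i) n (res F n y) = T n c := by
    intro n c
    rw [gg_eq hMnn ha (hw c) (hg n), it_lin hMnn ha hb c n _ (hg n)]
  have hWgg : ∀ n, gg M a b n (res F n y) = (∑' j, |B n j|) / ∑' j, |A n j| :=
    fun n => gg_eq hMnn ha hb (hg n)
  have hLip1 : ∀ n c c', T n c - T n c' ≤ |c - c'| := by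
    intro n c c'
    rw [hT]
    simp only
    rw [← sub_div, div_le_iff₀ (pA n), ← tsum_mul_left, ← Summable.tsum_sub (sT n c) (sT n c')]
    refine Summable.tsum_le_tsum (fun j => ?_) ((sT n c).sub (sT n c')) ((sA n).abs.mul_left _)
    rw [← abs_mul]
    refine (abs_sub_abs_le_abs_sub _ _).trans (le_of_eq ?_)
    congr 1; ring
  have hLip : ∀ n c c', |T n c - T n c'| ≤ |c - c'| := by
    intro n c c'
    rw [abs_le]
    have h1 := hLip1 n c c'
    have h2 := hLip1 n c' c
    rw [abs_sub_comm] at h2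
    constructor <;> linarith
  obtain ⟨L, hL⟩ := lip_conv T (fun n => gg M a b n (res F n y)) w hLip
    (fun q => by simpa only [hTgg] using hq q) hW
  refine ⟨L / w, (hL.div hW hw0.ne').congr' ?_⟩
  filter_upwards [hW.eventually (lt_mem_nhds hw0)] with n hn
  simp only [Pi.div_apply]
  rw [hWgg] at hn ⊢
  have pB : 0 < ∑' j, |B n j| := by
    by_contra h
    exact absurd hn (not_lt.2 (div_nonpos_of_nonpos_of_nonneg (not_lt.1 h) (pA n).le))
  unfold tvDist
  have e : ∀ j, |(filterSeq M μ y n : E → ℝ) j - (filterSeq M ν y n : E → ℝ) j|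
      = (∑' j, |B n j|)⁻¹ * |(∑' j, |B n j|) / (∑' j, |A n j|) * A n j - B n j| := by
    intro j
    rw [filter_eq hMnn μ y hgood n (pA n), filter_eq hMnn ν y hgood n pB]
    change |A n j / (∑' j, |A n j|) - B n j / (∑' j, |B n j|)| = _
    rw [← abs_of_pos (inv_pos.2 pB), ← abs_mul]
    congr 1
    have := (pA n).ne'
    have := pB.ne'
    field_simp
  simp_rw [e]
  rw [tsum_mul_left, hT]
  have := (pA n).ne'
  have := pB.ne'
  field_simp

end

section
variable {E F : Type*} {M : F → E → E → ℝ} [Countable E] [MeasurableSpace F]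
  (φ : Measure F) [SigmaFinite φ]

lemma law_of (hMnn : ∀ y i j, 0 ≤ M y i j)
    (hMbd : ∀ᵐ y ∂φ, GoodPt M y) (μ : ProbVec E) (Q : Measure (ℕ → F))
    (hQ : ∀ (n : ℕ) (A : Set (Fin n → F)), MeasurableSet A →
      Q {y : ℕ → F | (fun k : Fin n => y k) ∈ A} =
        ∫⁻ v in A, ENNReal.ofReal (rowTot (rowIter M (μ : E → ℝ) (List.ofFn v)))
          ∂(Measure.pi fun _ => φ)) (n : ℕ) :
    Q.map (res F n) =
      (Measure.pi fun _ => φ).withDensity fun v => en (it M n (μ : E → ℝ) v) := by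
  ext A hA
  rw [Measure.map_apply (measurable_res n) hA, withDensity_apply _ hA]
  refine (hQ n A hA).trans (lintegral_congr_ae (ae_restrict_of_ae ?_))
  filter_upwards [ae_good_pi φ hMbd n] with v hv
  exact (en_nonneg_eq (summable_it hMnn μ.2.2.summable n v hv) (it_nonneg hMnn μ.2.1 n v)).symm

lemma col_of (hMmeas : ∀ i j, Measurable fun y => M y i j) (hMnn : ∀ y i j, 0 ≤ M y i j)
    (Q : ProbVec E → Measure (ℕ → F)) (hQprob : ∀ μ, IsProbabilityMeasure (Q μ))
    (hlaw : ∀ (μ : ProbVec E) n, (Q μ).map (res F n) =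
      (Measure.pi fun _ => φ).withDensity fun v => en (it M n (μ : E → ℝ) v)) (i : E) :
    ∫⁻ y, ∑' j, ‖M y i j‖ₑ ∂φ ≤ 1 := by
  classical
  let δ : ProbVec E := ⟨fun k => if k = i then 1 else 0,
    fun k => by dsimp only; split_ifs <;> norm_num, hasSum_ite_eq i 1⟩
  have h := congrArg (fun m => m Set.univ) (hlaw δ 1)
  rw [Measure.map_apply (measurable_res 1) MeasurableSet.univ, Set.preimage_univ,
    withDensity_apply _ MeasurableSet.univ, Measure.restrict_univ, (hQprob δ).measure_univ] at h
  have h2 := lintegral_pi_succ φ 0 (f := fun _ y => ∑' j, ‖M y i j‖ₑ)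
    ((Measurable.tsum fun j => (hMmeas i j).enorm).comp measurable_snd)
  have h3 : ∀ v : Fin 1 → F, en (it M 1 (δ : E → ℝ) v) = ∑' j, ‖M (v (Fin.last 0)) i j‖ₑ := by
    intro v
    rw [it_succ, it_zero]
    unfold en rowMul
    simp [δ]
  simp_rw [h3] at h
  have h4 := h.trans h2
  simp at h4
  exact h4.symm.le

end

end HMMaux

/-- For all `μ ≪ ν` in `P(E)`, the limit `lim_n ‖π_n^μ − π_n^ν‖` exists for
`Q_μ`-a.e. observation path. -/
theorem tvDist_filter_tendsto_limit
    {E : Type*} [Countable E] [Nonempty E] [DecidableEq E]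
    {F : Type*} [TopologicalSpace F] [PolishSpace F] [MeasurableSpace F] [BorelSpace F]
    (φ : Measure F) [SigmaFinite φ]
    (M : F → E → E → ℝ)
    (hMmeas : ∀ i j, Measurable fun y => M y i j)
    (hMnn : ∀ y i j, 0 ≤ M y i j)
    (hMbd : ∀ᵐ y ∂φ, ∃ C : ℝ, ∀ (i : E) (s : Finset E), ∑ j ∈ s, M y i j ≤ C)
    (hPtrans : ∀ i, HasSum (fun j => transMat M φ i j) 1)
    (hPirr : ∀ i j : E, ∃ n : ℕ, 0 < matPow (transMat M φ) n i j)
    (lam : ProbVec E)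
    (hlamInv : ∀ j, ∑' i, (lam : E → ℝ) i * transMat M φ i j = (lam : E → ℝ) j)
    (hlamUniq : ∀ ρ : ProbVec E,
      (∀ j, ∑' i, (ρ : E → ℝ) i * transMat M φ i j = (ρ : E → ℝ) j) → ρ = lam)
    (Q : ProbVec E → Measure (ℕ → F))
    (hQprob : ∀ μ, IsProbabilityMeasure (Q μ))
    (hQ : ∀ (μ : ProbVec E) (n : ℕ) (A : Set (Fin n → F)), MeasurableSet A →
      Q μ {y : ℕ → F | (fun k : Fin n => y k) ∈ A} =
        ∫⁻ v in A, ENNReal.ofReal (rowTot (rowIter M (μ : E → ℝ) (List.ofFn v)))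
          ∂(Measure.pi fun _ => φ))
    :
    ∀ μ ν : ProbVec E, (∀ i : E, (ν : E → ℝ) i = 0 → (μ : E → ℝ) i = 0) →
      ∀ᵐ y ∂(Q μ), ∃ L : ℝ,
        Tendsto (fun n : ℕ => tvDist (filterSeq M μ y n) (filterSeq M ν y n))
          atTop (nhds L) := by
  intro μ ν hab
  have hbd : ∀ᵐ y ∂φ, HMMaux.GoodPt M y := hMbd
  have hlaw := fun μ : ProbVec E => HMMaux.law_of φ hMnn hbd μ (Q μ) (hQ μ)
  have := hQprob μ
  exact HMMaux.core φ (Q μ) hMmeas hMnn hbd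
    (HMMaux.col_of φ hMmeas hMnn Q hQprob hlaw) μ ν hab (hlaw μ)
end

section
/- Let (Ξ, 𝒳) be a measurable space with a filtration (𝒳_n)_{n∈ℕ}, let Φ be a probability measure on (Ξ, 𝒳), and let Q, Q′ be probability measures on (Ξ, 𝒳) that are mutually singular on 𝒳_∞ := σ(⋃_n 𝒳_n). Suppose that for every n the restrictions satisfy Q|_{𝒳_n} ≪ Φ|_{𝒳_n} and Q′|_{𝒳_n} ≪ Φ|_{𝒳_n}, with densities q_n and q′_n respectively. Then q_n/q′_n → 0 as n → ∞, Q′-almost surely (the ratio being Q′-a.s. well-defined since q′_n > 0 Q′-a.s. for each n). -/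
open MeasureTheory Filter Topology ENNReal

lemma aux_ratio_le (a b : ℝ≥0∞) : b / (a + b) ≤ 1 :=
  ENNReal.div_le_of_le_mul (by simp)

lemma aux_tendsto (q q' : ℕ → ℝ≥0∞)
    (h : Tendsto (fun n => (q' n / (q n + q' n)).toReal) atTop (𝓝 1)) :
    Tendsto (fun n => q n / q' n) atTop (𝓝 0) := by
  have h1 : Tendsto (fun n => q' n / (q n + q' n)) atTop (𝓝 1) := by
    have := ENNReal.tendsto_ofReal h
    rw [ENNReal.ofReal_one] at this
    refine this.congr fun n => ?_
    exact ENNReal.ofReal_toReal (ne_top_of_le_ne_top one_ne_top (aux_ratio_le _ _))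
  have h2 : Tendsto (fun n => (q' n / (q n + q' n))⁻¹ - 1) atTop (𝓝 0) := by
    have := ENNReal.Tendsto.sub (tendsto_inv_iff.2 h1)
      (tendsto_const_nhds (x := (1 : ℝ≥0∞))) (Or.inr one_ne_top)
    simpa using this
  refine h2.congr' ?_
  filter_upwards [h1.eventually (lt_mem_nhds (zero_lt_one))] with n hn
  have h0 : q' n ≠ 0 := by rintro h; simp [h] at hn
  have ht : q' n ≠ ∞ := by rintro h; simp [h] at hn
  rw [ENNReal.inv_div (Or.inr ht) (Or.inr h0), ENNReal.add_div, ENNReal.div_self h0 ht]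
  exact ENNReal.add_sub_cancel_right one_ne_top

lemma aux_condExp {Ξ : Type*} {m0 m : MeasurableSpace Ξ} (hm : m0 ≤ m)
    (Φ Q Q' : Measure[m] Ξ) [IsProbabilityMeasure Φ] [IsProbabilityMeasure Q]
    [IsProbabilityMeasure Q'] (s : Set Ξ) (hs : MeasurableSet[m] s)
    (hs0 : Q s = 0) (hs1 : Q' sᶜ = 0)
    (q q' : Ξ → ℝ≥0∞)
    (hq : Measurable[m0] q) (hq' : Measurable[m0] q')
    (hd : Q.trim hm = (Φ.trim hm).withDensity q)
    (hd' : Q'.trim hm = (Φ.trim hm).withDensity q') :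
    (fun x => (q' x / (q x + q' x)).toReal) =ᵐ[Q + Q']
      (Q + Q')[s.indicator (fun _ => (1 : ℝ)) | m0] := by
  have hr : Measurable[m0] (fun x => q' x / (q x + q' x)) := hq'.div (hq.add hq')
  have hrm : Measurable[m0] (fun x => (q' x / (q x + q' x)).toReal) := hr.ennreal_toReal
  have hint : Integrable (fun x => (q' x / (q x + q' x)).toReal) (Q + Q') := by
    refine Integrable.of_bound (C := 1) (hrm.mono hm le_rfl).aestronglyMeasurable
      (ae_of_all _ fun x => ?_)
    rw [Real.norm_eq_abs, abs_of_nonneg toReal_nonneg]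
    exact ENNReal.toReal_mono one_ne_top (aux_ratio_le _ _)
  have hfin : ∀ (P : Measure[m] Ξ) [IsProbabilityMeasure P] (p : Ξ → ℝ≥0∞), Measurable[m0] p →
      P.trim hm = (Φ.trim hm).withDensity p → ∀ᵐ x ∂(Φ.trim hm), p x < ∞ := by
    intro P _ p hp hdp
    refine ae_lt_top hp ?_
    have : P.trim hm Set.univ = ∫⁻ x, p x ∂(Φ.trim hm) := by
      rw [hdp, withDensity_apply _ MeasurableSet.univ, Measure.restrict_univ]
    rw [← this]
    exact measure_ne_top _ _
  refine ae_eq_condExp_of_forall_setIntegral_eq hm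
    ((integrable_const 1).indicator hs) (fun _ _ _ => hint.integrableOn) ?_
    hrm.stronglyMeasurable.aestronglyMeasurable
  intro A hA _
  have hAm := hm _ hA
  have key : ∫⁻ x in A, q' x / (q x + q' x) ∂(Q + Q') = Q' A := by
    have e1 : (Q + Q').trim hm = (Φ.trim hm).withDensity (q + q') := by
      rw [withDensity_add_left hq, ← hd, ← hd']
      refine @Measure.ext _ m0 _ _ fun B hB => ?_
      simp [trim_measurableSet_eq hm hB]
    have e2 : ∫⁻ x in A, q' x / (q x + q' x) ∂(Q + Q')
        = ∫⁻ x in A, q' x / (q x + q' x) ∂((Q + Q').trim hm) := by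
      rw [restrict_trim hm _ hA, lintegral_trim hm hr]
    rw [e2, e1, setLIntegral_withDensity_eq_setLIntegral_mul _ (hq.add hq') hr hA,
      ← trim_measurableSet_eq hm hA (μ := Q'), hd', withDensity_apply _ hA]
    refine lintegral_congr_ae (ae_restrict_of_ae ?_)
    filter_upwards [hfin Q q hq hd, hfin Q' q' hq' hd'] with x hx hx'
    simp only [Pi.mul_apply, Pi.add_apply]
    by_cases h0 : q x + q' x = 0
    · have : q' x = 0 := (add_eq_zero.1 h0).2
      simp [this]
    · exact ENNReal.mul_div_cancel h0 (ENNReal.add_lt_top.2 ⟨hx, hx'⟩).ne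
  have hs2 : (Q + Q') (s ∩ A) = Q' A := by
    rw [Measure.add_apply, measure_mono_null Set.inter_subset_left hs0, zero_add]
    rw [Set.inter_comm]
    exact measure_inter_conull hs1
  rw [integral_toReal (hr.mono hm le_rfl).aemeasurable
    (ae_of_all _ fun x => (aux_ratio_le _ _).trans_lt one_lt_top), key,
    integral_indicator hs, setIntegral_const, measureReal_def, Measure.restrict_apply hs, hs2]
  simp

/-- If `Q` and `Q'` are mutually singular on `𝒳_∞ = σ(⋃_n 𝒳_n)` and both are locally
absolutely continuous with respect to `Φ` along the filtration `(𝒳_n)`, with densities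
`q_n` and `q'_n` respectively, then `q_n/q'_n → 0` as `n → ∞`, `Q'`-almost surely. -/
theorem density_ratio_tendsto_zero_of_mutuallySingular
    {Ξ : Type*} [m : MeasurableSpace Ξ] (𝓕 : Filtration ℕ m)
    (Φ Q Q' : Measure Ξ) [IsProbabilityMeasure Φ] [IsProbabilityMeasure Q]
    [IsProbabilityMeasure Q']
    (hsing : ∃ s : Set Ξ, MeasurableSet[⨆ n, 𝓕 n] s ∧ Q s = 0 ∧ Q' sᶜ = 0)
    (q q' : ℕ → Ξ → ℝ≥0∞)
    (hq : ∀ n, Measurable[𝓕 n] (q n)) (hq' : ∀ n, Measurable[𝓕 n] (q' n))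
    (hd : ∀ n, Q.trim (𝓕.le n) = (Φ.trim (𝓕.le n)).withDensity (q n))
    (hd' : ∀ n, Q'.trim (𝓕.le n) = (Φ.trim (𝓕.le n)).withDensity (q' n)) :
    ∀ᵐ ξ ∂Q', Tendsto (fun n => q n ξ / q' n ξ) atTop (nhds 0) := by
  obtain ⟨s, hs, hs0, hs1⟩ := hsing
  have hle : (⨆ n, 𝓕 n) ≤ m := iSup_le 𝓕.le
  have hsm : MeasurableSet[m] s := hle _ hs
  have hlim := Integrable.tendsto_ae_condExp (μ := Q + Q') (ℱ := 𝓕)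
    (g := s.indicator (fun _ => (1 : ℝ))) ((integrable_const 1).indicator hsm)
    (stronglyMeasurable_const.indicator hs)
  have hc : ∀ᵐ x ∂(Q + Q'), ∀ n, (q' n x / (q n x + q' n x)).toReal =
      ((Q + Q')[s.indicator (fun _ => (1 : ℝ)) | 𝓕 n]) x :=
    ae_all_iff.2 fun n => aux_condExp (𝓕.le n) Φ Q Q' s hsm hs0 hs1 _ _ (hq n) (hq' n)
      (hd n) (hd' n)
  have hac : Q' ≪ Q + Q' := Measure.absolutelyContinuous_of_le (Measure.le_add_left le_rfl)
  have hmem : ∀ᵐ x ∂Q', x ∈ s := hs1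
  filter_upwards [hac.ae_le hlim, hac.ae_le hc, hmem] with x h1 h2 h3
  apply aux_tendsto
  simp only [h2]
  simpa [h3] using h1
end
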